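/- arXiv:1208.5460 — 3 statements merged into one kernel-verified Lean document; each statement's English description precedes it below -/
import Mathlib

section
/- There exists an absolute constant c > 0 such that for every finite family Z of at least two points in the unit square [0,1)², Disc(Z) ≥ c·(log #Z)/(#Z). -/
/-!
Schmidt's argument. Write `D x y` for the number of points in `[0, x] × [0, y]` minus `m x y`, and
consider the oscillation of `D x` over a window of heights `y`, averaged over `x`. Compare two
separated subwindows `A` (below) and `B` (above) of a window `U`, and two nearby abscissae
`x < x + d`. If no point of the vertical strip between the abscissae has its height in `U`, then
`D (x + d) - D x` is affine on `U` with slope `- m d`, so the values of `D` on `A` relative to those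
on `B` differ markedly between `x` and `x + d`. At one of the two abscissae the oscillation over `U`
then exceeds the mean of the oscillations over `A` and `B` by a constant, provided that
`m * d * length U` is a fixed constant. If that constant is small, most strips are free of points,
so the average oscillation grows by a constant whenever the window length is multiplied by four.
There are about `log m` scales.
-/

open scoped Classical

/-- The discrepancy of a finite family `z : Fin m → ℝ × ℝ` of points of the unit
square: the supremum, over axis-parallel rectangles `[a,b] × [c,d] ⊆ [0,1]²`, of
`|#(Z ∩ R)/#Z − (b−a)(d−c)|`. -/
noncomputable def Disc {m : ℕ} (z : Fin m → ℝ × ℝ) : ℝ :=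
  sSup {t : ℝ | ∃ a b c d : ℝ, 0 ≤ a ∧ a ≤ b ∧ b ≤ 1 ∧ 0 ≤ c ∧ c ≤ d ∧ d ≤ 1 ∧
    t = |((Finset.univ.filter
            (fun i => (z i).1 ∈ Set.Icc a b ∧ (z i).2 ∈ Set.Icc c d)).card : ℝ) / m
          - (b - a) * (d - c)|}

open scoped Finset

section Oscillation

variable {α : Type*} {A B U : Finset α} {f g : α → ℝ} {c w : ℝ}

/-- The oscillation `max f - min f` of a real function over a nonempty finite set. -/
noncomputable def osc (s : Finset α) (hs : s.Nonempty) (f : α → ℝ) : ℝ :=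
  s.sup' hs f - s.inf' hs f

theorem osc_nonneg (hA : A.Nonempty) (f : α → ℝ) : 0 ≤ osc A hA f :=
  have ⟨_, ha⟩ := hA
  sub_nonneg.2 ((Finset.inf'_le f ha).trans (Finset.le_sup' f ha))

theorem osc_mono (hAU : A ⊆ U) (hA : A.Nonempty) (f : α → ℝ) :
    osc A hA f ≤ osc U (hA.mono hAU) f :=
  sub_le_sub (Finset.sup'_mono f hAU hA) (Finset.inf'_mono f hAU hA)

theorem sup'_add_le_sup' (hA : A.Nonempty) (h : ∀ a ∈ A, f a + c ≤ g a) :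
    A.sup' hA f + c ≤ A.sup' hA g :=
  le_sub_iff_add_le.1 <| Finset.sup'_le hA f fun a ha ↦
    le_sub_iff_add_le.2 <| (h a ha).trans (Finset.le_sup' g ha)

theorem inf'_add_le_inf' (hA : A.Nonempty) (h : ∀ a ∈ A, f a + c ≤ g a) :
    A.inf' hA f + c ≤ A.inf' hA g :=
  Finset.le_inf' hA g fun a ha ↦ (add_le_add_left (Finset.inf'_le f ha) c).trans (h a ha)

theorem mean_osc_add_le_osc_add_osc (hA : A.Nonempty) (hB : B.Nonempty) (hU : U.Nonempty)
    (hAU : A ⊆ U) (hBU : B ⊆ U) (hfgA : ∀ a ∈ A, f a + (c + w) ≤ g a)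
    (hgfB : ∀ b ∈ B, g b ≤ f b + c) :
    (osc A hA f + osc B hB f) / 2 + (osc A hA g + osc B hB g) / 2 + w ≤
      osc U hU f + osc U hU g := by
  have hgfB' : ∀ b ∈ B, g b + -c ≤ f b := fun b hb ↦ by linarith [hgfB b hb]
  have hsupA := sup'_add_le_sup' hA hfgA
  have hinfA := inf'_add_le_inf' hA hfgA
  have hsupB := sup'_add_le_sup' hB hgfB'
  have hinfB := inf'_add_le_inf' hB hgfB'
  have hf : B.sup' hB f - A.inf' hA f ≤ osc U hU f :=
    sub_le_sub (Finset.sup'_mono f hBU hB) (Finset.inf'_mono f hAU hA)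
  have hg : A.sup' hA g - B.inf' hB g ≤ osc U hU g :=
    sub_le_sub (Finset.sup'_mono g hAU hA) (Finset.inf'_mono g hBU hB)
  simp only [osc] at hf hg ⊢
  linarith

theorem exists_osc_le_two_mul_abs (hA : A.Nonempty) (f : α → ℝ) :
    ∃ a ∈ A, osc A hA f ≤ 2 * |f a| := by
  obtain ⟨a, ha, hsup⟩ := A.exists_mem_eq_sup' hA f
  obtain ⟨b, hb, hinf⟩ := A.exists_mem_eq_inf' hA f
  have hosc : osc A hA f ≤ |f a| + |f b| := by
    rw [osc, hsup, hinf]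
    exact (le_abs_self _).trans (abs_sub _ _)
  rcases le_total |f a| |f b| with hab | hab
  · exact ⟨b, hb, by linarith⟩
  · exact ⟨a, ha, by linarith⟩

end Oscillation

theorem card_mul_le_two_mul_sum_range {F : ℕ → ℝ} (hF : ∀ j, 0 ≤ F j) {J : Finset ℕ} {K d : ℕ}
    (hJ : ∀ j ∈ J, j + d < K) {w : ℝ} (hw : ∀ j ∈ J, w ≤ F j + F (j + d)) :
    #J * w ≤ 2 * ∑ j ∈ Finset.range K, F j := by
  have hsub : J ⊆ Finset.range K := fun j hj ↦ by
    have := hJ j hj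
    rw [Finset.mem_range]
    omega
  have hshift : J.map (addRightEmbedding d) ⊆ Finset.range K := fun k hk ↦ by
    obtain ⟨j, hj, rfl⟩ := Finset.mem_map.1 hk
    exact Finset.mem_range.2 (hJ j hj)
  calc #J * w ≤ ∑ j ∈ J, (F j + F (j + d)) := by
        simpa only [nsmul_eq_mul] using Finset.card_nsmul_le_sum J _ w hw
    _ = ∑ j ∈ J, F j + ∑ k ∈ J.map (addRightEmbedding d), F k := by
        simp only [Finset.sum_add_distrib, Finset.sum_map, addRightEmbedding_apply]
    _ ≤ ∑ j ∈ Finset.range K, F j + ∑ j ∈ Finset.range K, F j :=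
        add_le_add (Finset.sum_le_sum_of_subset_of_nonneg hsub fun j _ _ ↦ hF j)
          (Finset.sum_le_sum_of_subset_of_nonneg hshift fun j _ _ ↦ hF j)
    _ = 2 * ∑ j ∈ Finset.range K, F j := (two_mul _).symm

theorem card_filter_exists_mem_Ioc_le {ι : Type*} (T : Finset ι) (x : ι → ℕ) (d N : ℕ) :
    #{j ∈ Finset.range N | ∃ i ∈ T, x i ∈ Finset.Ioc j (j + d)} ≤ #T * d := by
  have hsub : {j ∈ Finset.range N | ∃ i ∈ T, x i ∈ Finset.Ioc j (j + d)} ⊆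
      T.biUnion fun i ↦ Finset.Ico (x i - d) (x i) := by
    intro j hj
    obtain ⟨-, i, hi, hij⟩ := Finset.mem_filter.1 hj
    rw [Finset.mem_Ioc] at hij
    exact Finset.mem_biUnion.2 ⟨i, hi, Finset.mem_Ico.2 (by omega)⟩
  refine (Finset.card_le_card hsub).trans (Finset.card_biUnion_le_card_mul _ _ _ fun i _ ↦ ?_)
  rw [Nat.card_Ico]
  omega

section Lattice

variable {ι : Type*} (S : Finset ι) (p : ι → ℕ × ℕ) (δ : ℝ)

/-- The local discrepancy at `(j, k)` of the lattice points `p i`, `i ∈ S`, compared with a uniform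
distribution of density `δ`. -/
noncomputable def localDisc (j k : ℕ) : ℝ :=
  #{i ∈ S | p i ≤ (j, k)} - δ * j * k

/-- The indices of the points whose height lies in the window `(u, v]`. -/
def strip (u v : ℕ) : Finset ι :=
  {i ∈ S | (p i).2 ∈ Finset.Ioc u v}

/-- The oscillation of `localDisc` in the second variable over the window `[u, u + s]`, summed over
the first `K` columns. -/
noncomputable def totalOsc (K u s : ℕ) : ℝ :=
  ∑ j ∈ Finset.range K,
    osc (Finset.Icc u (u + s)) (Finset.nonempty_Icc.2 (Nat.le_add_right u s)) (localDisc S p δ j)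

theorem card_strip_add {u v w : ℕ} (huv : u ≤ v) (hvw : v ≤ w) :
    #(strip S p u v) + #(strip S p v w) = #(strip S p u w) := by
  rw [← Finset.card_union_of_disjoint]
  · congr 1
    ext i
    simp only [strip, Finset.mem_union, Finset.mem_filter, Finset.mem_Ioc]
    grind
  · simp only [strip, Finset.disjoint_left, Finset.mem_filter, Finset.mem_Ioc]
    grind

theorem le_card_free_columns_add (K d u v : ℕ) :
    K ≤ #{j ∈ Finset.range (K - d) | ∀ i ∈ strip S p u v, (p i).1 ∉ Finset.Ioc j (j + d)} +
      d + #(strip S p u v) * d := by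
  have hcard := Finset.card_filter_add_card_filter_not (s := Finset.range (K - d))
    fun j ↦ ∃ i ∈ strip S p u v, (p i).1 ∈ Finset.Ioc j (j + d)
  have hbad := card_filter_exists_mem_Ioc_le (strip S p u v) (fun i ↦ (p i).1) d (K - d)
  push Not at hcard
  rw [Finset.card_range] at hcard
  omega

variable {S p δ}

theorem localDisc_add_sub_localDisc {j d u v k : ℕ}
    (hfree : ∀ i ∈ strip S p u v, (p i).1 ∉ Finset.Ioc j (j + d)) (hk : k ∈ Finset.Icc u v) :
    localDisc S p δ (j + d) k - localDisc S p δ j k =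
      #{i ∈ S | (p i).1 ∈ Finset.Ioc j (j + d) ∧ (p i).2 ≤ u} - δ * d * k := by
  simp only [strip, Finset.mem_filter, Finset.mem_Ioc] at hfree
  rw [Finset.mem_Icc] at hk
  have hsplit : #{i ∈ S | p i ≤ (j + d, k)} = #{i ∈ S | p i ≤ (j, k)} +
      #{i ∈ S | (p i).1 ∈ Finset.Ioc j (j + d) ∧ (p i).2 ≤ u} := by
    rw [← Finset.card_union_of_disjoint]
    · congr 1
      ext i
      simp only [Finset.mem_union, Finset.mem_filter, Finset.mem_Ioc, Prod.le_def]
      grind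
    · simp only [Finset.disjoint_left, Finset.mem_filter, Finset.mem_Ioc, Prod.le_def]
      grind
  simp only [localDisc, hsplit]
  push_cast
  ring

theorem mean_osc_localDisc_add_le (hδ : 0 ≤ δ) {j d u v a b s : ℕ} (hua : u ≤ a)
    (hab : a + 2 * s ≤ b) (hbv : b + s ≤ v)
    (hfree : ∀ i ∈ strip S p u v, (p i).1 ∉ Finset.Ioc j (j + d))
    (hA : (Finset.Icc a (a + s)).Nonempty) (hB : (Finset.Icc b (b + s)).Nonempty)
    (hU : (Finset.Icc u v).Nonempty) :
    (osc _ hA (localDisc S p δ j) + osc _ hB (localDisc S p δ j)) / 2 +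
        (osc _ hA (localDisc S p δ (j + d)) + osc _ hB (localDisc S p δ (j + d))) / 2 + δ * d * s ≤
      osc _ hU (localDisc S p δ j) + osc _ hU (localDisc S p δ (j + d)) := by
  set E : ℝ := ↑(#{i ∈ S | (p i).1 ∈ Finset.Ioc j (j + d) ∧ (p i).2 ≤ u})
  have hAU : Finset.Icc a (a + s) ⊆ Finset.Icc u v := Finset.Icc_subset_Icc hua (by omega)
  have hBU : Finset.Icc b (b + s) ⊆ Finset.Icc u v := Finset.Icc_subset_Icc (by omega) hbv
  have hδd : 0 ≤ δ * d := by positivity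
  refine mean_osc_add_le_osc_add_osc (c := E - δ * d * (a + 2 * s)) hA hB hU hAU hBU
    (fun k hk ↦ ?_) fun k hk ↦ ?_
  · have hdiff := localDisc_add_sub_localDisc (δ := δ) hfree (hAU hk)
    have hka : (k : ℝ) ≤ a + s := mod_cast (Finset.mem_Icc.1 hk).2
    linarith [mul_le_mul_of_nonneg_left hka hδd]
  · have hdiff := localDisc_add_sub_localDisc (δ := δ) hfree (hBU hk)
    have hbk : (a : ℝ) + 2 * s ≤ k := mod_cast hab.trans (Finset.mem_Icc.1 hk).1
    linarith [mul_le_mul_of_nonneg_left hbk hδd]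

theorem mean_totalOsc_add_le (hδ : 0 ≤ δ) (K d : ℕ) {u L a b s : ℕ} (hua : u ≤ a)
    (hab : a + 2 * s ≤ b) (hbL : b + s ≤ u + L) :
    (totalOsc S p δ K a s + totalOsc S p δ K b s) / 2 +
        δ * d * s / 2 * (K - d - #(strip S p u (u + L)) * d) ≤ totalOsc S p δ K u L := by
  have hne (v t : ℕ) : (Finset.Icc v (v + t)).Nonempty := Finset.nonempty_Icc.2 (v.le_add_right t)
  let gain (j : ℕ) : ℝ := osc _ (hne u L) (localDisc S p δ j) -
    (osc _ (hne a s) (localDisc S p δ j) + osc _ (hne b s) (localDisc S p δ j)) / 2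
  have gain_nonneg (j : ℕ) : 0 ≤ gain j := by
    have hA := osc_mono (U := Finset.Icc u (u + L)) (Finset.Icc_subset_Icc hua (by omega))
      (hne a s) (localDisc S p δ j)
    have hB := osc_mono (U := Finset.Icc u (u + L)) (Finset.Icc_subset_Icc (by omega) hbL)
      (hne b s) (localDisc S p δ j)
    simp only [gain]
    linarith
  have sum_gain : ∑ j ∈ Finset.range K, gain j =
      totalOsc S p δ K u L - (totalOsc S p δ K a s + totalOsc S p δ K b s) / 2 := by
    simp only [gain, totalOsc, Finset.sum_sub_distrib, ← Finset.sum_div, Finset.sum_add_distrib]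
  set J : Finset ℕ :=
    {j ∈ Finset.range (K - d) | ∀ i ∈ strip S p u (u + L), (p i).1 ∉ Finset.Ioc j (j + d)}
  have hJ : #J * (δ * d * s) ≤ 2 * ∑ j ∈ Finset.range K, gain j := by
    refine card_mul_le_two_mul_sum_range gain_nonneg (d := d) (fun j hj ↦ ?_) fun j hj ↦ ?_
    · have := Finset.mem_range.1 (Finset.mem_filter.1 hj).1
      omega
    · have := mean_osc_localDisc_add_le hδ hua hab hbL (Finset.mem_filter.1 hj).2 (hne a s)
        (hne b s) (hne u L)
      simp only [gain]
      linarith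
  have hcard : (K : ℝ) - d - #(strip S p u (u + L)) * d ≤ #J := by
    have : (K : ℝ) ≤ #J + d + #(strip S p u (u + L)) * d :=
      mod_cast le_card_free_columns_add S p K d u (u + L)
    linarith
  have hw : 0 ≤ δ * d * s := by positivity
  linarith [mul_le_mul_of_nonneg_left hcard hw]

theorem mean_totalOsc_quarters_add_le (hδ : 0 ≤ δ) (K d u s : ℕ) :
    (totalOsc S p δ K u s + totalOsc S p δ K (u + s) s + totalOsc S p δ K (u + 2 * s) s +
        totalOsc S p δ K (u + 3 * s) s) / 4 +
      δ * d * s / 2 * (K - d - #(strip S p u (u + 4 * s)) * d) ≤ totalOsc S p δ K u (4 * s) := by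
  have hfst := mean_totalOsc_add_le (S := S) (p := p) hδ K d (u := u) (L := 4 * s) (a := u)
    (b := u + 2 * s) (s := s) le_rfl le_rfl (by omega)
  have hsnd := mean_totalOsc_add_le (S := S) (p := p) hδ K d (u := u) (L := 4 * s) (a := u + s)
    (b := u + 3 * s) (s := s) (by omega) (by omega) (by omega)
  linarith

theorem card_strip_quarters (u s : ℕ) :
    #(strip S p u (u + s)) + #(strip S p (u + s) (u + s + s)) +
        #(strip S p (u + 2 * s) (u + 2 * s + s)) + #(strip S p (u + 3 * s) (u + 3 * s + s)) =
      #(strip S p u (u + 4 * s)) := by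
  rw [card_strip_add S p (by omega) (by omega), show u + s + s = u + 2 * s by omega,
    card_strip_add S p (by omega) (by omega), show u + 2 * s + s = u + 3 * s by omega,
    card_strip_add S p (by omega) (by omega), show u + 3 * s + s = u + 4 * s by omega]

-- The shift `d = 4 ^ r` is matched to the window length `s = 4 ^ t` so that the gain `δ * d * s` is
-- the same at all scales.
theorem le_totalOsc_four_pow (hδ : 0 ≤ δ) (K t r u : ℕ) :
    t * (δ * 4 ^ (t + r) / 8) * (K - 4 ^ (t + r) - 4 ^ r * #(strip S p u (u + 4 ^ t))) ≤
      totalOsc S p δ K u (4 ^ t) := by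
  induction t generalizing r u with
  | zero =>
    simp only [Nat.cast_zero, zero_mul]
    exact Finset.sum_nonneg fun j _ ↦ osc_nonneg _ _
  | succ t ih =>
    have hcount : (#(strip S p u (u + 4 ^ t)) + #(strip S p (u + 4 ^ t) (u + 4 ^ t + 4 ^ t)) +
        #(strip S p (u + 2 * 4 ^ t) (u + 2 * 4 ^ t + 4 ^ t)) +
        #(strip S p (u + 3 * 4 ^ t) (u + 3 * 4 ^ t + 4 ^ t)) : ℝ) =
        #(strip S p u (u + 4 * 4 ^ t)) := mod_cast card_strip_quarters u (4 ^ t)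
    have hgain := mean_totalOsc_quarters_add_le (S := S) (p := p) hδ K (4 ^ r) u (4 ^ t)
    have hih (v : ℕ) := ih (r + 1) v
    rw [show t + 1 + r = t + (r + 1) by omega, show 4 ^ (t + 1) = 4 * 4 ^ t by ring]
    set N : ℝ := ↑(#(strip S p u (u + 4 * 4 ^ t)))
    set w : ℝ := δ * 4 ^ (t + (r + 1)) / 8
    set M : ℝ := K - 4 ^ (t + (r + 1))
    have hmean : t * w * (M - 4 ^ r * N) ≤
        (totalOsc S p δ K u (4 ^ t) + totalOsc S p δ K (u + 4 ^ t) (4 ^ t) +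
          totalOsc S p δ K (u + 2 * 4 ^ t) (4 ^ t) +
          totalOsc S p δ K (u + 3 * 4 ^ t) (4 ^ t)) / 4 := by
      simp only [pow_succ (4 : ℝ) r] at hih
      rw [← hcount]
      linarith [hih u, hih (u + 4 ^ t), hih (u + 2 * 4 ^ t), hih (u + 3 * 4 ^ t)]
    have hstep : w * (M - 4 ^ r * N) ≤
        δ * (4 ^ r : ℕ) * (4 ^ t : ℕ) / 2 * (K - (4 ^ r : ℕ) - N * (4 ^ r : ℕ)) := by
      have hshift : (4 : ℝ) ^ r ≤ 4 ^ (t + (r + 1)) := pow_le_pow_right₀ (by norm_num) (by omega)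
      calc w * (M - 4 ^ r * N) ≤ w * (K - 4 ^ r - N * 4 ^ r) :=
            mul_le_mul_of_nonneg_left (by linarith) (by positivity)
        _ = _ := by
            push_cast
            ring
    push_cast
    linarith

theorem exists_le_mul_abs_localDisc (hδ : 0 ≤ δ) {K : ℕ} (hK : K ≠ 0) (T : ℕ) :
    ∃ j ≤ K, ∃ k ≤ 4 ^ T,
      T * (δ * 4 ^ T / 16) * (K - 4 ^ T - #S) ≤ K * |localDisc S p δ j k| := by
  have hstrip : (#(strip S p 0 (0 + 4 ^ T)) : ℝ) ≤ #S :=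
    mod_cast Finset.card_le_card (Finset.filter_subset _ S)
  have htotal : T * (δ * 4 ^ T / 8) * (K - 4 ^ T - #S) ≤ totalOsc S p δ K 0 (4 ^ T) := by
    refine le_trans ?_ (le_totalOsc_four_pow hδ K T 0 0)
    simp only [add_zero, pow_zero, one_mul]
    gcongr
  have hmean : ∑ j ∈ Finset.range K, T * (δ * 4 ^ T / 8) * (K - 4 ^ T - #S) / K ≤
      totalOsc S p δ K 0 (4 ^ T) := by
    rwa [Finset.sum_const, Finset.card_range, nsmul_eq_mul,
      mul_div_cancel₀ _ (Nat.cast_ne_zero.2 hK)]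
  obtain ⟨j, hj, hosc⟩ := Finset.exists_le_of_sum_le (Finset.nonempty_range_iff.2 hK) hmean
  obtain ⟨k, hk, hkj⟩ := exists_osc_le_two_mul_abs
    (Finset.nonempty_Icc.2 (Nat.le_add_right 0 (4 ^ T))) (localDisc S p δ j)
  refine ⟨j, (Finset.mem_range.1 hj).le, k, by simpa using hk, ?_⟩
  have hbound := (div_le_iff₀ (by positivity)).1 (hosc.trans hkj)
  linarith

end Lattice

section UnitSquare

variable {m : ℕ} (z : Fin m → ℝ × ℝ)

theorem abs_card_sub_le_mul_Disc {a b c d : ℝ} (ha : 0 ≤ a) (hab : a ≤ b) (hb : b ≤ 1)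
    (hc : 0 ≤ c) (hcd : c ≤ d) (hd : d ≤ 1) :
    |(#{i | (z i).1 ∈ Set.Icc a b ∧ (z i).2 ∈ Set.Icc c d} : ℝ) - m * ((b - a) * (d - c))| ≤
      m * Disc z := by
  rcases Nat.eq_zero_or_pos m with rfl | hm
  · simp
  have hm' : (0 : ℝ) < m := mod_cast hm
  have hle : |(#{i | (z i).1 ∈ Set.Icc a b ∧ (z i).2 ∈ Set.Icc c d} : ℝ) / m -
      (b - a) * (d - c)| ≤ Disc z := by
    refine le_csSup ⟨1, ?_⟩ ⟨a, b, c, d, ha, hab, hb, hc, hcd, hd, rfl⟩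
    rintro _ ⟨a, b, c, d, ha, hab, hb, hc, hcd, hd, rfl⟩
    refine abs_sub_le_of_nonneg_of_le (by positivity) ?_
      (mul_nonneg (by linarith) (by linarith))
      (mul_le_one₀ (by linarith) (by linarith) (by linarith))
    exact div_le_one_of_le₀ (mod_cast (Finset.card_le_univ _).trans (by simp)) hm'.le
  calc _ = m * |(#{i | (z i).1 ∈ Set.Icc a b ∧ (z i).2 ∈ Set.Icc c d} : ℝ) / m -
        (b - a) * (d - c)| := by
        rw [← abs_of_pos hm', ← abs_mul, abs_of_pos hm', mul_sub (m : ℝ), mul_div_cancel₀ _ hm'.ne']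
    _ ≤ m * Disc z := by gcongr

-- A rectangle of area `1 / (2 m)` should contain half a point.
theorem half_le_mul_Disc (hm : 0 < m) : 1 / 2 ≤ m * Disc z := by
  have hm' : (1 : ℝ) ≤ m := mod_cast hm
  have hle := abs_card_sub_le_mul_Disc z le_rfl (b := 1 / (2 * m)) (by positivity)
    (div_le_one_of_le₀ (by linarith) (by positivity)) le_rfl zero_le_one le_rfl
  set n := #{i | (z i).1 ∈ Set.Icc 0 (1 / (2 * (m : ℝ))) ∧ (z i).2 ∈ Set.Icc (0 : ℝ) 1}
  have harea : (m : ℝ) * ((1 / (2 * m) - 0) * (1 - 0)) = 1 / 2 := by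
    field_simp
    norm_num
  rw [harea] at hle
  refine le_trans ?_ hle
  rcases Nat.eq_zero_or_pos n with hn | hn
  · norm_num [hn]
  · have hn' : (1 : ℝ) ≤ n := mod_cast hn
    exact le_abs.2 (.inl (by linarith))

-- Rounding up preserves counts in boxes with corners on the grid. Points with a negative coordinate
-- are discarded first, since `⌈·⌉₊` would move them to `0`.
theorem abs_localDisc_le_mul_Disc {X Y j k : ℕ} (hX : 0 < X) (hY : 0 < Y) (hj : j ≤ X)
    (hk : k ≤ Y) :
    |localDisc {i | 0 ≤ z i} (fun i ↦ (⌈(z i).1 * X⌉₊, ⌈(z i).2 * Y⌉₊)) (m / (X * Y)) j k| ≤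
      m * Disc z := by
  have hX' : (0 : ℝ) < X := mod_cast hX
  have hY' : (0 : ℝ) < Y := mod_cast hY
  have hle := abs_card_sub_le_mul_Disc z le_rfl (b := j / X) (by positivity)
    (div_le_one_of_le₀ (mod_cast hj) hX'.le) le_rfl (d := k / Y) (by positivity)
    (div_le_one_of_le₀ (mod_cast hk) hY'.le)
  convert hle using 2
  rw [localDisc, Finset.filter_filter]
  congr 1
  · congr 2
    ext i
    simp only [Finset.mem_filter, Finset.mem_univ, true_and, Prod.le_def, Prod.fst_zero,
      Prod.snd_zero, Nat.ceil_le, Set.mem_Icc, le_div_iff₀ hX', le_div_iff₀ hY']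
    tauto
  · field_simp
    ring

theorem div_le_mul_Disc_of_four_pow_le {T : ℕ} (hT : 4 ^ T ≤ m) : T / 128 ≤ m * Disc z := by
  have hm : 0 < m := (by positivity : 0 < 4 ^ T).trans_le hT
  have hm' : (0 : ℝ) < m := mod_cast hm
  set S : Finset (Fin m) := {i | 0 ≤ z i}
  have hS : (#S : ℝ) ≤ m := mod_cast (Finset.card_le_univ S).trans (Fintype.card_fin m).le
  obtain ⟨j, hj, k, hk, hjk⟩ := exists_le_mul_abs_localDisc (S := S)
    (p := fun i ↦ (⌈(z i).1 * (4 * m : ℕ)⌉₊, ⌈(z i).2 * (4 ^ T : ℕ)⌉₊))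
    (δ := m / ((4 * m : ℕ) * (4 ^ T : ℕ))) (by positivity) (K := 4 * m) (by omega) T
  have hDisc := abs_localDisc_le_mul_Disc z (by omega) (by positivity) hj hk
  have hT' : (4 : ℝ) ^ T ≤ m := mod_cast hT
  have hdensity : (m : ℝ) / ((4 * m : ℕ) * (4 ^ T : ℕ)) * 4 ^ T / 16 = 1 / 64 := by
    push_cast
    field_simp
    norm_num
  have hfree : (2 * m : ℝ) ≤ (4 * m : ℕ) - 4 ^ T - #S := by
    push_cast
    linarith
  have hchain : (m : ℝ) * (T / 128) * 4 ≤ m * (m * Disc z) * 4 := by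
    calc (m : ℝ) * (T / 128) * 4 = T * (1 / 64) * (2 * m) := by ring
      _ ≤ T * (1 / 64) * ((4 * m : ℕ) - 4 ^ T - #S) := by gcongr
      _ ≤ (4 * m : ℕ) * (m * Disc z) := by
          rw [hdensity] at hjk
          exact hjk.trans (by gcongr)
      _ = m * (m * Disc z) * 4 := by push_cast; ring
  exact le_of_mul_le_mul_left (le_of_mul_le_mul_right hchain (by norm_num)) hm'

end UnitSquare

theorem stmt1_general :
    ∃ C : ℝ, 0 < C ∧ ∀ m : ℕ, 0 < m → ∀ z : Fin m → ℝ × ℝ, C * Real.log m / m ≤ Disc z := by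
  refine ⟨1 / (130 * Real.log 4), by positivity, fun m hm z ↦ ?_⟩
  have hm' : (0 : ℝ) < m := mod_cast hm
  have hscales := div_le_mul_Disc_of_four_pow_le z (Nat.pow_log_le_self 4 hm.ne')
  have hhalf := half_le_mul_Disc z hm
  have hlog : Real.log m ≤ (Nat.log 4 m + 1) * Real.log 4 := by
    have hlt : (m : ℝ) ≤ 4 ^ (Nat.log 4 m + 1) :=
      mod_cast (Nat.lt_pow_succ_log_self (by norm_num) m).le
    simpa only [Real.log_pow, Nat.cast_add_one] using Real.log_le_log hm' hlt
  rw [div_le_iff₀ hm', one_div_mul_eq_div, div_le_iff₀ (by positivity)]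
  calc Real.log m ≤ (Nat.log 4 m + 1) * Real.log 4 := hlog
    _ ≤ (130 * (m * Disc z)) * Real.log 4 := by gcongr; linarith
    _ = Disc z * m * (130 * Real.log 4) := by ring

theorem stmt1 :
    ∃ C : ℝ, 0 < C ∧ ∀ (m : ℕ), 2 ≤ m → ∀ z : Fin m → ℝ × ℝ,
      (∀ i, z i ∈ Set.Ico (0 : ℝ) 1 ×ˢ Set.Ico (0 : ℝ) 1) →
      C * Real.log m / m ≤ Disc z := by
  obtain ⟨C, hC, h⟩ := stmt1_general
  exact ⟨C, hC, fun m hm z _ ↦ h m (by omega) z⟩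
end

section
/- Let d ≥ 2 and 1 ≤ b < d with gcd(b,d) = 1, and suppose b/d = [a₁,…,a_k] := 1/(a₁ + 1/(a₂ + ⋯ + 1/a_k)) with positive integers a_j; set A = max_j a_j. Let Z_{b,d} = {({n/d}, {bn/d}) : n = 0, 1, …, d−1} ⊂ [0,1)², where {·} denotes fractional part. Then Disc(Z_{b,d}) ≤ (4A/log(A+1) + (4A+1)/log d)·(log d)/d. -/
open scoped Classical

/-- The finite continued fraction `[a₁,…,a_k] = 1/(a₁ + 1/(a₂ + ⋯ + 1/a_k))`. -/
def cf : List ℤ → ℚ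
  | [] => 0
  | a :: t => 1 / ((a : ℚ) + cf t)

/-!
Counting points in a box comes down to comparing two values of
`S_N(t) = ∑_{i < N} {t + i α}`, the Birkhoff sum of the fractional part along the rotation by
`α = b / d`, so it suffices to bound the oscillation of `S_N` in `t`. If `p / q` is a convergent of
`α`, Hermite's identity places `∑_{i < q} ⌊t + i α⌋` within one of `⌊q t⌋` up to a constant, and
`S_q` oscillates by at most `2`. Cutting `[0, N)` into blocks whose lengths are denominators of
convergents, with at most `aⱼ` blocks of the `j`-th length, bounds the oscillation by
`1 + 2 ∑ aⱼ`. Concavity of the logarithm gives `∑ aⱼ ≤ A / log (A + 1) * log ∏ (aⱼ + 1)`, and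
`∏ (aⱼ + 1) ≤ d (b + d)` by induction on the continued fraction. Finally, moving the sides of a
rectangle to the grid `(1 / d) ℤ` changes `d` times its area by at most `2`.
-/

open Finset Function

theorem sum_range_add_mul_ediv {p : ℤ} {q : ℕ} (hq : 0 < q) (hpq : IsCoprime p q) (m : ℤ) :
    ∑ i ∈ range q, (m + i * p) / (q : ℤ) = m + ∑ i ∈ range q, (i * p) / (q : ℤ) := by
  have hq' : (q : ℤ) ≠ 0 := by exact_mod_cast hq.ne'
  -- The defect `G` is both `q`- and `p`-periodic (shifting by `p` permutes the terms up to one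
  -- boundary term), hence constant by Bézout.
  let G : ℤ → ℤ := fun m ↦ ∑ i ∈ range q, (m + i * p) / (q : ℤ) - m
  have period_q : Periodic G q := fun m ↦ by
    have shift (i : ℕ) : (m + q + i * p) / (q : ℤ) = (m + i * p) / (q : ℤ) + 1 := by
      rw [add_right_comm, Int.add_ediv_of_dvd_right (dvd_refl _), Int.ediv_self hq']
    simp only [G, shift, sum_add_distrib, sum_const, card_range, nsmul_eq_mul]
    ring
  have period_p : Periodic G p := fun m ↦ by
    have shift := (sum_range_succ' (fun i : ℕ ↦ (m + i * p) / (q : ℤ)) q).symm.trans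
      (sum_range_succ _ q)
    have last : (m + q * p) / (q : ℤ) = m / q + p := Int.add_mul_ediv_left m p hq'
    simp only [G, add_assoc, ← one_add_mul, add_comm (1 : ℤ)]
    push_cast at shift
    simp only [zero_mul, add_zero] at shift
    linarith
  obtain ⟨a, b, hab⟩ := hpq
  have period_m : Periodic G (m * a * p + m * b * q) :=
    (period_p.int_mul (m * a)).add_period (period_q.int_mul (m * b))
  have hm : m * a * p + m * b * q = m := by linear_combination m * hab
  have hG : G m = G 0 := by simpa only [hm, zero_add] using period_m 0
  simp only [G, zero_add] at hG
  linarith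

theorem sum_range_add_mul_ediv_mem_Icc {p : ℤ} {q : ℕ} (hq : 0 < q) (hpq : IsCoprime p q)
    {w : ℕ → ℤ} {m : ℤ} (hw : ∀ i ∈ range q, w i ∈ Set.Icc m (m + 1)) :
    ∑ i ∈ range q, (w i + i * p) / (q : ℤ) ∈
      Set.Icc (m + ∑ i ∈ range q, (i * p) / (q : ℤ))
        (m + 1 + ∑ i ∈ range q, (i * p) / (q : ℤ)) := by
  rw [← sum_range_add_mul_ediv hq hpq, ← sum_range_add_mul_ediv hq hpq]
  have hq' : (0 : ℤ) < q := by exact_mod_cast hq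
  exact ⟨sum_le_sum fun i hi ↦ Int.ediv_le_ediv hq' (add_le_add_left (hw i hi).1 _),
    sum_le_sum fun i hi ↦ Int.ediv_le_ediv hq' (add_le_add_left (hw i hi).2 _)⟩

theorem floor_add_mul_eq_ediv (α t : ℝ) (p : ℤ) {q : ℕ} (hq : 0 < q) (i : ℕ) :
    ⌊t + i * α⌋ = (⌊q * t + i * (q * α - p)⌋ + i * p) / (q : ℤ) := by
  rw [← Int.cast_natCast i, ← Int.floor_add_intCast, ← Int.floor_div_natCast]
  congr 1
  push_cast
  field_simp
  ring

theorem exists_sum_floor_add_mul_mem_Icc {α : ℝ} {p : ℤ} {q : ℕ} (hq : 0 < q)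
    (hpq : IsCoprime p q) (hα : |q * α - p| * q ≤ 1) :
    ∃ C : ℤ, ∀ t : ℝ, ∑ i ∈ range q, ⌊t + i * α⌋ ∈ Set.Icc (⌊q * t⌋ + C) (⌊q * t⌋ + C + 1) := by
  simp only [floor_add_mul_eq_ediv α _ p hq]
  -- The drift `i * (q * α - p)` has constant sign and size at most one, so that
  -- `⌊q * t + i * (q * α - p)⌋` only takes two consecutive values.
  have drift_le (i : ℕ) (hi : i ∈ range q) : i * |q * α - p| ≤ 1 := by
    have : (i : ℝ) ≤ q := by exact_mod_cast (mem_range.1 hi).le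
    nlinarith [abs_nonneg (q * α - p)]
  rcases le_total 0 (q * α - p) with h | h
  · refine ⟨∑ i ∈ range q, (i * p) / (q : ℤ), fun t ↦ ?_⟩
    rw [add_right_comm]
    refine sum_range_add_mul_ediv_mem_Icc hq hpq fun i hi ↦ ?_
    have upper := drift_le i hi
    rw [abs_of_nonneg h] at upper
    have lower : 0 ≤ i * (q * α - p) := by positivity
    rw [Set.mem_Icc, ← Int.floor_add_one]
    exact ⟨Int.floor_mono (by linarith), Int.floor_mono (by linarith)⟩
  · refine ⟨∑ i ∈ range q, (i * p) / (q : ℤ) - 1, fun t ↦ ?_⟩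
    have key := sum_range_add_mul_ediv_mem_Icc hq hpq (m := ⌊q * t⌋ - 1)
      (w := fun i ↦ ⌊q * t + i * (q * α - p)⌋) fun i hi ↦ ?_
    · convert key using 2 <;> ring
    have lower := drift_le i hi
    rw [abs_of_nonpos h] at lower
    have upper : i * (q * α - p) ≤ 0 := mul_nonpos_of_nonneg_of_nonpos (by positivity) h
    rw [Set.mem_Icc, sub_add_cancel, ← Int.floor_sub_one]
    exact ⟨Int.floor_mono (by linarith), Int.floor_mono (by linarith)⟩

theorem birkhoffSum_add_const_fract (α : ℝ) (N : ℕ) (t : ℝ) :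
    birkhoffSum (· + α) Int.fract N t = ∑ i ∈ range N, Int.fract (t + i * α) := by
  simp only [birkhoffSum, add_right_iterate, nsmul_eq_mul]

theorem dist_birkhoffSum_fract_le_two {α : ℝ} {p : ℤ} {q : ℕ} (hq : 0 < q)
    (hpq : IsCoprime p q) (hα : |q * α - p| * q ≤ 1) (x y : ℝ) :
    dist (birkhoffSum (· + α) Int.fract q x) (birkhoffSum (· + α) Int.fract q y) ≤ 2 := by
  obtain ⟨C, hC⟩ := exists_sum_floor_add_mul_mem_Icc hq hpq hα
  set c : ℝ := (∑ i ∈ range q, (i : ℝ)) * α - C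
  have mem_Icc (t : ℝ) : birkhoffSum (· + α) Int.fract q t ∈ Set.Icc (c - 1) (c + 1) := by
    have lower : (⌊q * t⌋ + C : ℝ) ≤ ∑ i ∈ range q, (⌊t + i * α⌋ : ℝ) := by
      exact_mod_cast (hC t).1
    have upper : ∑ i ∈ range q, (⌊t + i * α⌋ : ℝ) ≤ ⌊q * t⌋ + C + 1 := by
      exact_mod_cast (hC t).2
    have sum_fract : birkhoffSum (· + α) Int.fract q t =
        q * t + (∑ i ∈ range q, (i : ℝ)) * α - ∑ i ∈ range q, (⌊t + i * α⌋ : ℝ) := by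
      simp only [birkhoffSum_add_const_fract, Int.fract, sum_sub_distrib, sum_add_distrib,
        sum_const, card_range, nsmul_eq_mul, sum_mul]
    have := Int.floor_le (q * t)
    have := Int.lt_floor_add_one (q * t)
    constructor <;> linarith
  exact (Real.dist_le_of_mem_Icc (mem_Icc x) (mem_Icc y)).trans (by linarith)

theorem dist_birkhoffSum_le_add_mul {X E : Type*} [SeminormedAddCommGroup E] {f : X → X}
    {g : X → E} {q r : ℕ} (hr : r ≤ q) {B c : ℝ} (hc : 0 ≤ c)
    (hB : ∀ N ≤ q, ∀ x y, dist (birkhoffSum f g N x) (birkhoffSum f g N y) ≤ B)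
    (hblock : ∀ x y, dist (birkhoffSum f g q x) (birkhoffSum f g q y) ≤ c) (a : ℕ) :
    ∀ N ≤ a * q + r, ∀ x y, dist (birkhoffSum f g N x) (birkhoffSum f g N y) ≤ B + a * c := by
  induction a with
  | zero => exact fun N hN x y ↦ by simpa using hB N (by omega) x y
  | succ a ih =>
    intro N hN x y
    push_cast
    rcases le_total N q with hNq | hqN
    · linarith [hB N hNq x y, mul_nonneg a.cast_nonneg hc]
    · obtain ⟨M, rfl⟩ := Nat.exists_eq_add_of_le hqN
      rw [add_mul] at hN
      rw [birkhoffSum_add, birkhoffSum_add]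
      linarith [dist_add_add_le (birkhoffSum f g q x) (birkhoffSum f g M (f^[q] x))
        (birkhoffSum f g q y) (birkhoffSum f g M (f^[q] y)), hblock x y,
        ih M (by omega) (f^[q] x) (f^[q] y)]

theorem cf_mem_Icc {l : List ℤ} (hl : ∀ a ∈ l, 1 ≤ a) : cf l ∈ Set.Icc 0 1 := by
  induction l with
  | nil => simp [cf]
  | cons a t ih =>
    rw [List.forall_mem_cons] at hl
    obtain ⟨hnonneg, -⟩ := ih hl.2
    have ha : (1 : ℚ) ≤ a := by exact_mod_cast hl.1
    exact ⟨by rw [cf]; positivity, by rw [cf, div_le_one (by positivity)]; linarith⟩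

theorem num_den_one_div_intCast_add {x : ℚ} {a : ℤ} (h : 0 < a + x) :
    (1 / (a + x)).num = x.den ∧ ((1 / (a + x)).den : ℤ) = a * x.den + x.num := by
  have : (0 : ℚ) < x.den := by exact_mod_cast x.den_pos
  have hx : x * x.den = x.num := x.mul_den_eq_num
  have hpos : 0 < a * x.den + x.num := by
    have : (0 : ℚ) < a * x.den + x.num := by rw [← hx, ← add_mul]; positivity
    exact_mod_cast this
  have hcop : Nat.Coprime (x.den : ℤ).natAbs (a * x.den + x.num).natAbs := by
    rw [← Int.isCoprime_iff_nat_coprime, mul_comm]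
    exact (Rat.isCoprime_num_den x).symm.mul_add_left_right a
  have heq : 1 / (a + x) = ((x.den : ℤ) : ℚ) / (a * x.den + x.num : ℤ) := by
    push_cast
    rw [← hx, ← add_mul]
    field_simp
  rw [heq]
  exact ⟨Rat.num_div_eq_of_coprime hpos hcop, Rat.den_div_eq_of_coprime hpos hcop⟩

theorem prod_add_one_le_cf_den_mul {l : List ℤ} (hl : ∀ a ∈ l, 1 ≤ a) :
    (l.map (· + 1)).prod ≤ (cf l).den * ((cf l).num + (cf l).den) := by
  induction l with
  | nil => simp [cf]
  | cons a t ih =>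
    rw [List.forall_mem_cons] at hl
    obtain ⟨ha, ht⟩ := hl
    have hcf := (cf_mem_Icc ht).1
    have hnum : 0 ≤ (cf t).num := Rat.num_nonneg.2 hcf
    have hden : (0 : ℤ) < (cf t).den := by exact_mod_cast (cf t).den_pos
    have hpos : 0 < a + cf t := by
      have : (1 : ℚ) ≤ a := by exact_mod_cast ha
      positivity
    obtain ⟨num_eq, den_eq⟩ := num_den_one_div_intCast_add hpos
    rw [cf, num_eq, den_eq, List.map_cons, List.prod_cons]
    set m : ℤ := ((cf t).den : ℤ)
    set n := (cf t).num
    calc (a + 1) * (t.map (· + 1)).prod ≤ (a + 1) * (m * (n + m)) := by gcongr; exact ih ht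
      _ ≤ (a * m + n) * (m + (a * m + n)) := by
        have : 0 ≤ (a ^ 2 - 1) * m ^ 2 := mul_nonneg (by nlinarith) (sq_nonneg m)
        have : 0 ≤ a * m * n := by positivity
        nlinarith [sq_nonneg n]

theorem mul_log_add_one_le {a A : ℝ} (ha : 0 ≤ a) (haA : a ≤ A) (hA : 0 < A) :
    a * Real.log (A + 1) ≤ A * Real.log (a + 1) := by
  have bernoulli : (1 + A) ^ (a / A) ≤ 1 + a / A * A :=
    rpow_one_add_le_one_add_mul_self (by linarith) (by positivity) ((div_le_one hA).2 haA)
  have hlog := Real.log_le_log (by positivity) bernoulli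
  rw [Real.log_rpow (by positivity), div_mul_cancel₀ _ hA.ne', div_mul_eq_mul_div,
    div_le_iff₀ hA] at hlog
  rw [add_comm A, add_comm a]
  linarith

theorem prod_map_add_one_pos {l : List ℝ} (hl : ∀ a ∈ l, 0 ≤ a) : 0 < (l.map (· + 1)).prod :=
  List.prod_pos <| List.forall_mem_map.2 fun a ha ↦ by linarith [hl a ha]

theorem sum_mul_log_add_one_le {l : List ℝ} {A : ℝ} (hl : ∀ a ∈ l, 0 ≤ a) (hlA : ∀ a ∈ l, a ≤ A)
    (hA : 0 < A) : l.sum * Real.log (A + 1) ≤ A * Real.log (l.map (· + 1)).prod := by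
  induction l with
  | nil => simp
  | cons a t ih =>
    rw [List.forall_mem_cons] at hl hlA
    have ha : a + 1 ≠ 0 := by linarith [hl.1]
    rw [List.sum_cons, List.map_cons, List.prod_cons,
      Real.log_mul ha (prod_map_add_one_pos hl.2).ne', add_mul, mul_add]
    exact add_le_add (mul_log_add_one_le hl.1 hlA.1 hA) (ih hl.2 hlA.2)

theorem sum_le_add_mul_log_den_cf {l : List ℤ} {A : ℤ} (hl : ∀ a ∈ l, 1 ≤ a)
    (hlA : ∀ a ∈ l, a ≤ A) (hA : 1 ≤ A) :
    (l.sum : ℝ) ≤ A + 2 * A / Real.log (A + 1) * Real.log (cf l).den := by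
  have hA' : (1 : ℝ) ≤ A := by exact_mod_cast hA
  have hlogA : 0 < Real.log (A + 1) := Real.log_pos (by linarith)
  have : (0 : ℝ) < (cf l).den := by exact_mod_cast (cf l).den_pos
  let r : List ℝ := l.map (↑)
  have hr : ∀ a ∈ r, 0 ≤ a := List.forall_mem_map.2 fun a ha ↦ by
    exact_mod_cast zero_le_one.trans (hl a ha)
  have hrA : ∀ a ∈ r, a ≤ A := List.forall_mem_map.2 fun a ha ↦ by exact_mod_cast hlA a ha
  have prod_le : ((r.map (· + 1)).prod : ℝ) ≤ (A + 1) * (cf l).den ^ 2 := by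
    have num_le : (cf l).num ≤ (cf l).den := by
      simpa [Rat.le_iff] using (cf_mem_Icc hl).2
    have : ((l.map (· + 1)).prod : ℤ) ≤ (A + 1) * (cf l).den ^ 2 := by
      nlinarith [prod_add_one_le_cf_den_mul hl]
    have cast_prod : ((r.map (· + 1)).prod : ℝ) = ((l.map (· + 1)).prod : ℤ) := by
      simp [r, Int.cast_list_prod, comp_def]
    rw [cast_prod]
    exact_mod_cast this
  have log_prod_le :
      Real.log (r.map (· + 1)).prod ≤ Real.log (A + 1) + 2 * Real.log (cf l).den := by
    refine (Real.log_le_log (prod_map_add_one_pos hr) prod_le).trans_eq ?_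
    rw [Real.log_mul (by positivity) (by positivity), Real.log_pow, Nat.cast_ofNat]
  rw [← mul_le_mul_iff_left₀ hlogA]
  calc (l.sum : ℝ) * Real.log (A + 1) = r.sum * Real.log (A + 1) := by rw [Int.cast_list_sum]
    _ ≤ A * Real.log (r.map (· + 1)).prod := sum_mul_log_add_one_le hr hrA (by linarith)
    _ ≤ A * (Real.log (A + 1) + 2 * Real.log (cf l).den) := by gcongr
    _ = _ := by field_simp

/-- Two consecutive convergents `p' / q'` and `p / q` of `α` whose remaining partial quotients
are `l`, so that `α` is the `cf l`-weighted mediant of `p / q` and `p' / q'`. The initial pair is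
`1 / 0` and `0 / 1`. -/
structure ConvergentPair (α : ℚ) (l : List ℤ) (p p' : ℤ) (q q' : ℕ) : Prop where
  den_pos : 0 < q
  den_le : q' ≤ q
  abs_det : |p' * q - p * q'| = 1
  mul_eq : α * (q + cf l * q') = p + cf l * p'

namespace ConvergentPair

variable {α : ℚ} {l : List ℤ} {p p' : ℤ} {q q' : ℕ}

theorem init (l : List ℤ) : ConvergentPair (cf l) l 0 1 1 0 where
  den_pos := one_pos
  den_le := zero_le_one
  abs_det := by simp
  mul_eq := by simp

theorem step {a : ℕ} (ha : 1 ≤ a) (hl : ∀ c ∈ l, 1 ≤ c)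
    (h : ConvergentPair α (a :: l) p p' q q') :
    ConvergentPair α l (a * p + p') p (a * q + q') q where
  den_pos := by nlinarith [h.den_pos]
  den_le := by nlinarith
  abs_det := by
    rw [← h.abs_det, ← abs_neg]
    push_cast
    ring_nf
  mul_eq := by
    have hcf := (cf_mem_Icc hl).1
    have : (1 : ℚ) ≤ a := by exact_mod_cast ha
    have hmul := h.mul_eq
    rw [cf] at hmul
    push_cast at hmul ⊢
    field_simp at hmul
    linarith

theorem isCoprime (h : ConvergentPair α l p p' q q') : IsCoprime p q := by
  rcases eq_or_eq_neg_of_abs_eq h.abs_det with hdet | hdet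
  · exact ⟨-q', p', by linarith⟩
  · exact ⟨q', -p', by linarith⟩

theorem abs_mul_sub_mul_le_one (hl : ∀ a ∈ l, 1 ≤ a) (h : ConvergentPair α l p p' q q') :
    |q * α - p| * q ≤ 1 := by
  obtain ⟨hcf, hcf'⟩ := cf_mem_Icc hl
  have error_eq : (q * α - p) * (q + cf l * q') = cf l * (p' * q - p * q' : ℤ) := by
    push_cast
    linear_combination (q : ℚ) * h.mul_eq
  calc |q * α - p| * q ≤ |q * α - p| * (q + cf l * q') := by
        gcongr
        exact le_add_of_nonneg_right (by positivity)
    _ = |(q * α - p) * (q + cf l * q')| := by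
      rw [abs_mul, abs_of_nonneg (a := q + cf l * q') (by positivity)]
    _ = cf l := by
      rw [error_eq, abs_mul, ← Int.cast_abs, h.abs_det, abs_of_nonneg hcf, Int.cast_one, mul_one]
    _ ≤ 1 := hcf'

theorem den_eq (h : ConvergentPair α [] p p' q q') : α.den = q := by
  have hq : (0 : ℤ) < q := by exact_mod_cast h.den_pos
  have hα : α = p / (q : ℤ) := by
    rw [eq_div_iff (by exact_mod_cast hq.ne')]
    simpa [cf] using h.mul_eq
  rw [hα]
  exact_mod_cast Rat.den_div_eq_of_coprime hq (Int.isCoprime_iff_nat_coprime.1 h.isCoprime)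

theorem dist_birkhoffSum_fract_le (h : ConvergentPair α l p p' q q') (hl : ∀ a ∈ l, 1 ≤ a) {B : ℝ}
    (hB : ∀ N ≤ q, ∀ x y : ℝ,
      dist (birkhoffSum (· + (α : ℝ)) Int.fract N x) (birkhoffSum (· + (α : ℝ)) Int.fract N y) ≤ B)
    {N : ℕ} (hN : N ≤ α.den) (x y : ℝ) :
    dist (birkhoffSum (· + (α : ℝ)) Int.fract N x) (birkhoffSum (· + (α : ℝ)) Int.fract N y) ≤
      B + 2 * l.sum := by
  induction l generalizing p p' q q' B with
  | nil => simpa using hB N (hN.trans_eq h.den_eq) x y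
  | cons a t ih =>
    have happrox : |q * (α : ℝ) - p| * q ≤ 1 := by exact_mod_cast h.abs_mul_sub_mul_le_one hl
    have block := dist_birkhoffSum_fract_le_two h.den_pos h.isCoprime happrox
    rw [List.forall_mem_cons] at hl
    lift a to ℕ using by omega
    refine (ih (h.step (by exact_mod_cast hl.1) hl.2) hl.2
      (dist_birkhoffSum_le_add_mul h.den_le zero_le_two hB block a)).trans_eq ?_
    rw [List.sum_cons]
    push_cast
    ring

end ConvergentPair

theorem dist_birkhoffSum_fract_cf_le {l : List ℤ} (hl : ∀ a ∈ l, 1 ≤ a) {N : ℕ}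
    (hN : N ≤ (cf l).den) (x y : ℝ) :
    dist (birkhoffSum (· + (cf l : ℝ)) Int.fract N x)
      (birkhoffSum (· + (cf l : ℝ)) Int.fract N y) ≤ 1 + 2 * l.sum := by
  refine (ConvergentPair.init l).dist_birkhoffSum_fract_le hl (fun N hN x y ↦ ?_) hN x y
  interval_cases N
  · simp
  · simp only [birkhoffSum_one]
    exact (Real.dist_le_of_mem_Icc ⟨Int.fract_nonneg x, (Int.fract_lt_one x).le⟩
      ⟨Int.fract_nonneg y, (Int.fract_lt_one y).le⟩).trans (by norm_num)

theorem fract_sub_eq_add_ite {w : ℝ} (hw : w ∈ Set.Icc 0 1) (t : ℝ) :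
    Int.fract (t - w) = Int.fract t - w + if Int.fract t < w then 1 else 0 := by
  have := Int.fract_nonneg t
  have := Int.fract_lt_one t
  obtain ⟨hw0, hw1⟩ := hw
  rw [Int.fract_eq_iff]
  split_ifs with h
  · exact ⟨by linarith, by linarith, ⌊t⌋ - 1, by push_cast; linarith [Int.floor_add_fract t]⟩
  · exact ⟨by linarith, by linarith, ⌊t⌋, by linarith [Int.floor_add_fract t]⟩

theorem ite_fract_mem_Ico {x y : ℝ} (hx : 0 ≤ x) (hxy : x ≤ y) (hy : y ≤ 1) (t : ℝ) :
    (if Int.fract t ∈ Set.Ico x y then (1 : ℝ) else 0) =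
      y - x + Int.fract (t - y) - Int.fract (t - x) := by
  rw [fract_sub_eq_add_ite ⟨hx, hxy.trans hy⟩, fract_sub_eq_add_ite ⟨hx.trans hxy, hy⟩]
  grind

theorem card_filter_fract_mem_Ico (α : ℝ) {u v : ℕ} (huv : u ≤ v) {x y : ℝ} (hx : 0 ≤ x)
    (hxy : x ≤ y) (hy : y ≤ 1) :
    (#((Finset.Ico u v).filter fun n : ℕ ↦ Int.fract (n * α) ∈ Set.Ico x y) : ℝ) =
      (v - u) * (y - x) + birkhoffSum (· + α) Int.fract (v - u) (u * α - y) -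
        birkhoffSum (· + α) Int.fract (v - u) (u * α - x) := by
  have shift (i : ℕ) (w : ℝ) : ((u + i : ℕ) : ℝ) * α - w = u * α - w + i * α := by
    push_cast
    ring
  rw [natCast_card_filter, sum_Ico_eq_sum_range]
  simp only [ite_fract_mem_Ico hx hxy hy, shift, sum_sub_distrib, sum_add_distrib, sum_const,
    card_range, nsmul_eq_mul, birkhoffSum_add_const_fract, Nat.cast_sub huv]
  ring

theorem exists_mem_Ico_iff_div_mem_Icc {d : ℕ} (hd : 0 < d) {a b : ℝ} (ha : 0 ≤ a) (hab : a ≤ b)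
    (hb : b ≤ 1) :
    ∃ u v : ℕ, u ≤ v ∧ v ≤ d ∧ |((v : ℝ) - u) - d * (b - a)| ≤ 1 ∧
      ∀ n < d, (n : ℝ) / d ∈ Set.Icc a b ↔ n ∈ Finset.Ico u v := by
  have hd' : (0 : ℝ) < d := by exact_mod_cast hd
  have had : 0 ≤ a * d := by positivity
  have habd : a * d ≤ b * d := by gcongr
  have hbd : b * d ≤ d := by nlinarith
  have ceil_lt := Nat.ceil_lt_add_one had
  have le_ceil := Nat.le_ceil (a * d)
  have floor_le := Nat.floor_le (had.trans habd)
  have lt_floor := Nat.lt_floor_add_one (b * d)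
  refine ⟨⌈a * d⌉₊, min (⌊b * d⌋₊ + 1) d, le_min ?_ ?_, min_le_right _ _, ?_, fun n hn ↦ ?_⟩
  · exact Nat.ceil_le.2 (by push_cast; linarith)
  · exact Nat.ceil_le.2 (habd.trans hbd)
  · have lower : b * d ≤ min (⌊b * d⌋₊ + 1 : ℝ) d := le_min lt_floor.le hbd
    have upper : min (⌊b * d⌋₊ + 1 : ℝ) d ≤ b * d + 1 :=
      (min_le_left _ _).trans (by linarith)
    push_cast
    rw [abs_le]
    constructor <;> linarith
  · rw [Set.mem_Icc, le_div_iff₀ hd', div_le_iff₀ hd', Finset.mem_Ico, Nat.ceil_le, lt_min_iff,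
      Nat.lt_add_one_iff, Nat.le_floor_iff (had.trans habd)]
    tauto

theorem abs_mul_div_sub_mul_mul_le_two {d m v w h : ℝ} (hd : 0 < d) (hm : 0 ≤ m) (hmd : m ≤ d)
    (hh : 0 ≤ h) (hh' : h ≤ 1) (hmw : |m - d * w| ≤ 1) (hvh : |v - d * h| ≤ 1) :
    |m * (v / d) - d * (w * h)| ≤ 2 := by
  have ratio_le : |m / d| ≤ 1 := by
    rw [abs_of_nonneg (by positivity)]
    exact (div_le_one hd).2 hmd
  have h_le : |h| ≤ 1 := by rwa [abs_of_nonneg hh]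
  calc |m * (v / d) - d * (w * h)| = |m / d * (v - d * h) + (m - d * w) * h| := by
        congr 1
        field_simp
        ring
    _ ≤ |m / d| * |v - d * h| + |m - d * w| * |h| := by
        simpa only [abs_mul] using abs_add_le (m / d * (v - d * h)) ((m - d * w) * h)
    _ ≤ 1 * 1 + 1 * 1 := by gcongr
    _ = 2 := by norm_num

theorem abs_card_filter_fract_sub_le {α : ℝ} {u v : ℕ} (huv : u ≤ v) {x y : ℝ} (hx : 0 ≤ x)
    (hxy : x ≤ y) (hy : y ≤ 1) {B : ℝ}
    (hB : ∀ s t : ℝ, dist (birkhoffSum (· + α) Int.fract (v - u) s)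
      (birkhoffSum (· + α) Int.fract (v - u) t) ≤ B) :
    |(#((Finset.Ico u v).filter fun n : ℕ ↦ Int.fract (n * α) ∈ Set.Ico x y) : ℝ) -
      (v - u) * (y - x)| ≤ B := by
  rw [card_filter_fract_mem_Ico α huv hx hxy hy, add_sub_assoc, add_sub_cancel_left]
  exact hB _ _

theorem fract_mul_div_mem_Icc_iff {d u v : ℕ} (hd : 0 < d) {x y : ℝ}
    (huv : ∀ n < d, (n : ℝ) / d ∈ Set.Icc x y ↔ n ∈ Finset.Ico u v) (m : ℤ) :
    Int.fract ((m : ℝ) / d) ∈ Set.Icc x y ↔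
      Int.fract ((m : ℝ) / d) ∈ Set.Ico ((u : ℝ) / d) (v / d) := by
  have hd' : (0 : ℝ) < d := by exact_mod_cast hd
  have hdz : (d : ℤ) ≠ 0 := by exact_mod_cast hd.ne'
  obtain ⟨r, hr⟩ := Int.eq_ofNat_of_zero_le (Int.emod_nonneg m hdz)
  have hrd : r < d := by
    have := Int.emod_lt_of_pos m (b := d) (by omega)
    omega
  rw [Int.fract_div_intCast_eq_div_intCast_mod, hr, Int.cast_natCast, huv r hrd, Finset.mem_Ico,
    Set.mem_Ico, div_le_div_iff_of_pos_right hd', div_lt_div_iff_of_pos_right hd', Nat.cast_le,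
    Nat.cast_lt]

theorem card_filter_fin_val {d : ℕ} (P : ℕ → Prop) [DecidablePred P] :
    #{i : Fin d | P i} = #{n ∈ range d | P n} := by
  rw [card_filter, card_filter, Fin.sum_univ_eq_sum_range fun n ↦ if P n then 1 else 0]

theorem card_filter_fract_mem_Icc_eq {d : ℕ} (hd : 0 < d) (b : ℤ) {x x' y y' : ℝ}
    {u v k l : ℕ} (hvd : v ≤ d)
    (hfst : ∀ n < d, (n : ℝ) / d ∈ Set.Icc x x' ↔ n ∈ Finset.Ico u v)
    (hsnd : ∀ n < d, (n : ℝ) / d ∈ Set.Icc y y' ↔ n ∈ Finset.Ico k l) :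
    #((range d).filter fun n : ℕ ↦ Int.fract ((n : ℝ) / d) ∈ Set.Icc x x' ∧
        Int.fract ((b : ℝ) * n / d) ∈ Set.Icc y y') =
      #((Finset.Ico u v).filter fun n : ℕ ↦
        Int.fract (n * (b / d : ℝ)) ∈ Set.Ico ((k : ℝ) / d) (l / d)) := by
  have hd' : (0 : ℝ) < d := by exact_mod_cast hd
  have mem_iff (n : ℕ) (hn : n < d) :
      Int.fract ((n : ℝ) / d) ∈ Set.Icc x x' ∧ Int.fract ((b : ℝ) * n / d) ∈ Set.Icc y y' ↔
        n ∈ Finset.Ico u v ∧ Int.fract (n * (b / d : ℝ)) ∈ Set.Ico ((k : ℝ) / d) (l / d) := by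
    have hn' : (n : ℝ) / d < 1 := (div_lt_one hd').2 (by exact_mod_cast hn)
    have snd_iff := fract_mul_div_mem_Icc_iff hd hsnd (b * n)
    push_cast at snd_iff
    rw [Int.fract_eq_self.2 ⟨by positivity, hn'⟩, hfst n hn, snd_iff,
      show (b : ℝ) * n / d = n * (b / d) by ring]
  refine congrArg card (Finset.ext fun n ↦ ?_)
  rw [mem_filter, mem_filter, mem_range]
  refine ⟨fun ⟨hn, h⟩ ↦ (mem_iff n hn).1 h, fun h ↦ ?_⟩
  have hn : n < d := (Finset.mem_Ico.1 h.1).2.trans_le hvd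
  exact ⟨hn, (mem_iff n hn).2 h⟩

theorem disc_le_of_dist_birkhoffSum_fract_le {d : ℕ} (hd : 0 < d) (b : ℤ) {B : ℝ}
    (hB : ∀ N ≤ d, ∀ s t : ℝ, dist (birkhoffSum (· + (b / d : ℝ)) Int.fract N s)
      (birkhoffSum (· + (b / d : ℝ)) Int.fract N t) ≤ B)
    {z : Fin d → ℝ × ℝ}
    (hz : ∀ n : Fin d, z n = (Int.fract ((n : ℝ) / d), Int.fract ((b : ℝ) * n / d))) :
    Disc z ≤ (B + 2) / d := by
  have hd' : (0 : ℝ) < d := by exact_mod_cast hd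
  refine csSup_le
    ⟨_, 0, 0, 0, 0, le_rfl, le_rfl, zero_le_one, le_rfl, le_rfl, zero_le_one, rfl⟩ ?_
  rintro _ ⟨x, x', y, y', hx, hxx', hx', hy, hyy', hy', rfl⟩
  obtain ⟨u, v, huv, hvd, hwidth, hfst⟩ := exists_mem_Ico_iff_div_mem_Icc hd hx hxx' hx'
  obtain ⟨k, l, hkl, hld, hheight, hsnd⟩ := exists_mem_Ico_iff_div_mem_Icc hd hy hyy' hy'
  simp only [hz]
  rw [card_filter_fin_val fun n ↦
      Int.fract ((n : ℝ) / d) ∈ Set.Icc x x' ∧ Int.fract ((b : ℝ) * n / d) ∈ Set.Icc y y',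
    card_filter_fract_mem_Icc_eq hd b hvd hfst hsnd]
  have hkl' : (k : ℝ) / d ≤ l / d := by gcongr
  have hld' : (l : ℝ) / d ≤ 1 := (div_le_one hd').2 (by exact_mod_cast hld)
  have count_le := abs_card_filter_fract_sub_le huv (by positivity) hkl' hld'
    (hB (v - u) (by omega))
  set c : ℕ := #((Finset.Ico u v).filter fun n : ℕ ↦
    Int.fract (n * (b / d : ℝ)) ∈ Set.Ico ((k : ℝ) / d) (l / d))
  have huv' : (u : ℝ) ≤ v := by exact_mod_cast huv
  have hvd' : (v : ℝ) ≤ d := by exact_mod_cast hvd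
  have area_le : |(v - u) * ((l - k) / d) - d * ((x' - x) * (y' - y))| ≤ 2 :=
    abs_mul_div_sub_mul_mul_le_two hd' (by linarith) (by linarith [u.cast_nonneg (α := ℝ)])
      (by linarith) (by linarith) hwidth hheight
  rw [← sub_div] at count_le
  rw [le_div_iff₀ hd']
  calc |(c : ℝ) / d - (x' - x) * (y' - y)| * d = |(c : ℝ) - d * ((x' - x) * (y' - y))| := by
        rw [← abs_of_pos hd', ← abs_mul, abs_of_pos hd', sub_mul, div_mul_cancel₀ _ hd'.ne',
          mul_comm _ (d : ℝ)]
    _ ≤ |(c : ℝ) - (v - u) * ((l - k) / d)| +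
        |(v - u) * ((l - k) / d) - d * ((x' - x) * (y' - y))| := abs_sub_le _ _ _
    _ ≤ B + 2 := add_le_add count_le area_le

theorem stmt2 (b d : ℤ) (hd : 2 ≤ d) (hb : 1 ≤ b) (hbd : b < d)
    (hgcd : Int.gcd b d = 1)
    (l : List ℤ) (hne : l ≠ []) (hpos : ∀ a ∈ l, 1 ≤ a)
    (hcf : cf l = (b : ℚ) / (d : ℚ))
    (A : ℤ) (hAmem : A ∈ l) (hAmax : ∀ a ∈ l, a ≤ A)
    (z : Fin d.toNat → ℝ × ℝ)
    (hz : ∀ n : Fin d.toNat, z n =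
      (Int.fract ((n : ℝ) / (d : ℝ)), Int.fract ((b : ℝ) * (n : ℝ) / (d : ℝ)))) :
    Disc z ≤ (4 * (A : ℝ) / Real.log ((A : ℝ) + 1)
        + (4 * (A : ℝ) + 1) / Real.log (d : ℝ)) * Real.log (d : ℝ) / (d : ℝ) := by
  lift d to ℕ using by omega
  have hdpos : (0 : ℤ) < d := by omega
  have hlogd : 0 < Real.log d := Real.log_pos (by exact_mod_cast hd)
  have hcop : Nat.Coprime b.natAbs (d : ℤ).natAbs := hgcd
  have hden : (cf l).den = d := by
    rw [hcf]
    exact_mod_cast Rat.den_div_eq_of_coprime hdpos hcop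
  have hα : (cf l : ℝ) = b / d := by rw [hcf]; push_cast; rfl
  have hdisc : Disc z ≤ (1 + 2 * l.sum + 2) / d := by
    refine disc_le_of_dist_birkhoffSum_fract_le (d := d) (by omega) b (fun N hN s t ↦ ?_) hz
    rw [← hα]
    exact dist_birkhoffSum_fract_cf_le hpos (hN.trans_eq hden.symm) s t
  have hA : (1 : ℝ) ≤ A := by exact_mod_cast hpos A hAmem
  have hsum := sum_le_add_mul_log_den_cf hpos hAmax (hpos A hAmem)
  rw [hden] at hsum
  refine hdisc.trans ?_
  rw [Int.cast_natCast, add_mul, div_mul_cancel₀ _ hlogd.ne']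
  gcongr ?_ / _
  linarith [show 4 * (A : ℝ) / Real.log (A + 1) * Real.log d =
    2 * (2 * A / Real.log (A + 1) * Real.log d) by ring]
end

section
/- For an integer A ≥ 2, let δ_{≤A} denote the Hausdorff dimension of C_{{1,…,A}}, the set of irrationals in [0,1] all of whose continued fraction partial quotients are at most A. Then A·(1 − δ_{≤A}) → 6/π² as A → ∞; equivalently, δ_{≤A} = 1 − 6/(π²A) + o(1/A). -/
open Filter MeasureTheory

/-- `CA A` is the set of real numbers whose infinite continued fraction
expansion has all partial quotients in `A`. -/
def CA (A : Set ℤ) : Set ℝ :=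
  {x : ℝ | ∃ a : ℕ → ℤ, (∀ n, a n ∈ A) ∧
    Tendsto (fun k : ℕ => ((cf (List.ofFn fun i : Fin k => a i) : ℚ) : ℝ))
      atTop (nhds x)}

/-!
Let `L` be the transfer operator of the Gauss map restricted to the partial quotients `1, …, A`, at
the exponent `s`. A positive function `f` with `L f ≤ f` makes the natural covers by cylinders of
order `n` bounded in `s`-dimensional size, so the dimension is at most `s`. If instead `f ≤ L f`,
normalising `L` by `f` gives a Markov chain on words whose laws satisfy a mass distribution
principle, so the dimension is at least `s`.

At `s = 1 - c / A` we take `f x = (1 + u x / A) / (1 + x)`, a perturbation of the density of the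
Gauss measure. To first order, `A * (1 + x) * (L f x - f x)` is `q + P u - u`, where `P` is the
normalised Gauss operator and the source `q` collects two effects: the change of exponent, which
contributes `2 c P (-log)`, and the loss of the branches beyond `A`, which contributes `-(1 + x)`.
Since `P` contracts Lipschitz constants and preserves the Gauss measure, a partial sum of the
Neumann series is a `u` for which `q + P u - u` is close to the Gauss mean of `q`. That mean is
`(c * π ^ 2 / 6 - 1) / log 2`, because the integral of `-log y / (1 + y)` over `[0, 1]` is
`π ^ 2 / 12`, and it changes sign at `c = 6 / π ^ 2`.
-/

open scoped unitInterval

section Words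

/-- The words of length `n` over the alphabet `E`. -/
def words (E : Finset ℤ) : ℕ → Finset (List ℤ)
  | 0 => {[]}
  | n + 1 => (E ×ˢ words E n).image fun p => p.1 :: p.2

variable {E : Finset ℤ} {n : ℕ} {w : List ℤ}

lemma mem_words : w ∈ words E n ↔ w.length = n ∧ ∀ a ∈ w, a ∈ E := by
  induction n generalizing w with
  | zero =>
    simp only [words, Finset.mem_singleton, List.length_eq_zero_iff]
    exact ⟨by rintro rfl; simp, And.left⟩
  | succ n ih =>
    rcases w with _ | ⟨a, t⟩
    · simp [words]
    · simp only [words, Finset.mem_image, Finset.mem_product, ih, List.cons.injEq, Prod.exists,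
        List.length_cons, List.forall_mem_cons]
      grind

lemma one_le_of_mem_words (hE : ∀ a ∈ E, 1 ≤ a) (hw : w ∈ words E n) : ∀ a ∈ w, 1 ≤ a :=
  fun a ha => hE a ((mem_words.1 hw).2 a ha)

lemma sum_words_succ {M : Type*} [AddCommMonoid M] (F : List ℤ → M) :
    ∑ w ∈ words E (n + 1), F w = ∑ t ∈ words E n, ∑ a ∈ E, F (a :: t) := by
  rw [words, Finset.sum_image, Finset.sum_product_right]
  rintro ⟨a, t⟩ _ ⟨b, u⟩ _ h
  simpa using h

end Words

section CfMap

/-- The inverse branch `x ↦ 1/(a₁ + 1/(a₂ + ⋯ + 1/(a_k + x)))` of the `k`-th iterate of the Gauss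
map coded by the word `w = a₁ ⋯ a_k`. -/
noncomputable def cfMap : List ℤ → ℝ → ℝ
  | [], x => x
  | a :: t, x => 1 / (a + cfMap t x)

/-- The denominator of the Möbius map `cfMap w`, that is `q_k + x q_{k-1}` in terms of the
denominators of the convergents of `w`; the derivative of `cfMap w` is `± 1 / cfDenom w ^ 2`. -/
noncomputable def cfDenom : List ℤ → ℝ → ℝ
  | [], _ => 1
  | a :: t, x => (a + cfMap t x) * cfDenom t x

variable {w : List ℤ} {x y : ℝ}

lemma cast_cf (w : List ℤ) : ((cf w : ℚ) : ℝ) = cfMap w 0 := by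
  induction w with
  | nil => simp [cf, cfMap]
  | cons a t ih => simp [cf, cfMap, ih]

lemma cfMap_append (u v : List ℤ) (x : ℝ) : cfMap (u ++ v) x = cfMap u (cfMap v x) := by
  induction u with
  | nil => rfl
  | cons a t ih => simp only [List.cons_append, cfMap, ih]

lemma cfMap_nonneg (hw : ∀ a ∈ w, 1 ≤ a) (hx : 0 ≤ x) : 0 ≤ cfMap w x := by
  induction w with
  | nil => exact hx
  | cons a t ih =>
    rw [List.forall_mem_cons] at hw
    have ha : (1 : ℝ) ≤ a := mod_cast hw.1
    have := ih hw.2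
    rw [cfMap]
    positivity

lemma one_le_add_cfMap {a : ℤ} (hw : ∀ b ∈ a :: w, 1 ≤ b) (hx : 0 ≤ x) : 1 ≤ a + cfMap w x := by
  rw [List.forall_mem_cons] at hw
  have ha : (1 : ℝ) ≤ a := mod_cast hw.1
  linarith [cfMap_nonneg hw.2 hx]

lemma cfMap_mem_unitInterval (hw : ∀ a ∈ w, 1 ≤ a) (hx : x ∈ I) : cfMap w x ∈ I := by
  refine ⟨cfMap_nonneg hw hx.1, ?_⟩
  rcases w with _ | ⟨a, t⟩
  · exact hx.2
  · exact div_le_one_of_le₀ (one_le_add_cfMap hw hx.1) (by linarith [one_le_add_cfMap hw hx.1])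

lemma one_le_cfDenom (hw : ∀ a ∈ w, 1 ≤ a) (hx : 0 ≤ x) : 1 ≤ cfDenom w x := by
  induction w with
  | nil => exact le_rfl
  | cons a t ih =>
    exact one_le_mul_of_one_le_of_one_le (one_le_add_cfMap hw hx)
      (ih (List.forall_mem_cons.1 hw).2)

lemma cfDenom_pos (hw : ∀ a ∈ w, 1 ≤ a) (hx : 0 ≤ x) : 0 < cfDenom w x :=
  one_pos.trans_le (one_le_cfDenom hw hx)

lemma cfMap_mul_cfDenom_cons {a : ℤ} (hw : ∀ b ∈ a :: w, 1 ≤ b) (hx : 0 ≤ x) :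
    cfMap (a :: w) x * cfDenom (a :: w) x = cfDenom w x := by
  have := one_le_add_cfMap hw hx
  rw [cfMap, cfDenom]
  field_simp

lemma length_le_cfDenom (hw : ∀ a ∈ w, 1 ≤ a) (hx : 0 ≤ x) : (w.length : ℝ) ≤ cfDenom w x := by
  induction w with
  | nil => simp [cfDenom]
  | cons a t ih =>
    obtain ⟨ha, ht⟩ := List.forall_mem_cons.1 hw
    have ha' : (1 : ℝ) ≤ a := mod_cast ha
    rcases t with _ | ⟨b, t⟩
    · simp only [cfDenom, cfMap, List.length_singleton]
      push_cast
      linarith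
    · have hD := one_le_cfDenom (List.forall_mem_cons.1 ht).2 hx
      have hbt := one_le_cfDenom ht hx
      rw [cfDenom, List.length_cons, add_mul, cfMap_mul_cfDenom_cons ht hx, Nat.cast_succ]
      nlinarith [ih ht]

lemma abs_cfMap_sub_cfMap (hw : ∀ a ∈ w, 1 ≤ a) (hx : 0 ≤ x) (hy : 0 ≤ y) :
    |cfMap w x - cfMap w y| = |x - y| / (cfDenom w x * cfDenom w y) := by
  induction w with
  | nil => simp [cfMap, cfDenom]
  | cons a t ih =>
    have ht := (List.forall_mem_cons.1 hw).2
    have hp : 0 < a + cfMap t x := one_pos.trans_le (one_le_add_cfMap hw hx)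
    have hq : 0 < a + cfMap t y := one_pos.trans_le (one_le_add_cfMap hw hy)
    have hDx := cfDenom_pos ht hx
    have hDy := cfDenom_pos ht hy
    have hsub : cfMap (a :: t) x - cfMap (a :: t) y
        = (cfMap t y - cfMap t x) / ((a + cfMap t x) * (a + cfMap t y)) := by
      simp only [cfMap]
      field_simp
      ring
    rw [hsub, abs_div, abs_sub_comm, ih ht, abs_of_pos (mul_pos hp hq), cfDenom, cfDenom]
    field_simp

/-- The numerator `cfMap w x * cfDenom w x` is included to make the induction go through. -/
lemma cfDenom_distortion (hw : ∀ a ∈ w, 1 ≤ a) (hx : 0 ≤ x) :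
    cfDenom w 0 ≤ cfDenom w x ∧ cfMap w 0 * cfDenom w 0 ≤ cfMap w x * cfDenom w x ∧
    cfDenom w x ≤ (1 + x) * cfDenom w 0 ∧
    cfDenom w x + cfMap w x * cfDenom w x
      ≤ (1 + x) * (cfDenom w 0 + cfMap w 0 * cfDenom w 0) := by
  induction w with
  | nil => simp [cfDenom, cfMap, hx]
  | cons a t ih =>
    obtain ⟨ha, ht⟩ := List.forall_mem_cons.1 hw
    have ha' : (1 : ℝ) ≤ a := mod_cast ha
    obtain ⟨hD, hN, hD', hDN'⟩ := ih ht
    rw [cfMap_mul_cfDenom_cons hw hx, cfMap_mul_cfDenom_cons hw le_rfl]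
    simp only [cfDenom, add_mul]
    refine ⟨by nlinarith, hD, by nlinarith, by nlinarith⟩

lemma cfDenom_zero_le (hw : ∀ a ∈ w, 1 ≤ a) (hx : 0 ≤ x) : cfDenom w 0 ≤ cfDenom w x :=
  (cfDenom_distortion hw hx).1

lemma cfDenom_le_two_mul_cfDenom_zero (hw : ∀ a ∈ w, 1 ≤ a) (hx : x ∈ I) :
    cfDenom w x ≤ 2 * cfDenom w 0 := by
  nlinarith [(cfDenom_distortion hw hx.1).2.2.1, cfDenom_pos hw le_rfl, hx.2]

lemma abs_cfMap_sub_cfMap_le (hw : ∀ a ∈ w, 1 ≤ a) (hx : x ∈ I) (hy : y ∈ I) :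
    |cfMap w x - cfMap w y| ≤ 1 / cfDenom w 0 ^ 2 := by
  have hD := cfDenom_pos hw le_rfl
  rw [abs_cfMap_sub_cfMap hw hx.1 hy.1, sq]
  gcongr
  · simpa [Real.dist_eq] using Real.dist_le_of_mem_Icc hx hy
  · exact (cfDenom_pos hw hx.1).le
  · exact cfDenom_zero_le hw hx.1
  · exact cfDenom_zero_le hw hy.1

lemma abs_cfMap_sub_cfMap_le_one_div_length (hw : ∀ a ∈ w, 1 ≤ a) (hne : w ≠ []) (hx : x ∈ I)
    (hy : y ∈ I) : |cfMap w x - cfMap w y| ≤ 1 / w.length := by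
  have hlen : (0 : ℝ) < w.length := mod_cast List.length_pos_iff.2 hne
  refine (abs_cfMap_sub_cfMap_le hw hx hy).trans ?_
  gcongr
  nlinarith [length_le_cfDenom hw le_rfl, one_le_cfDenom hw le_rfl]

end CfMap

section CfLim

/-- The value of the infinite continued fraction `[a 0, a 1, …]`; meaningful when all `a n ≥ 1`. -/
noncomputable def cfLim (a : ℕ → ℤ) : ℝ :=
  limUnder atTop fun k : ℕ => ((cf (List.ofFn fun i : Fin k => a i) : ℚ) : ℝ)

variable {a : ℕ → ℤ} {k m : ℕ}

lemma one_le_of_mem_ofFn (ha : ∀ n, 1 ≤ a n) : ∀ b ∈ List.ofFn fun i : Fin k => a i, 1 ≤ b := by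
  simp only [List.mem_ofFn]
  rintro _ ⟨i, rfl⟩
  exact ha i

lemma abs_cf_sub_cf_le (ha : ∀ n, 1 ≤ a n) (hk : 0 < k) (hkm : k ≤ m) :
    |((cf (List.ofFn fun i : Fin m => a i) : ℚ) : ℝ) - (cf (List.ofFn fun i : Fin k => a i) : ℚ)|
      ≤ 1 / k := by
  obtain ⟨l, rfl⟩ := Nat.exists_eq_add_of_le hkm
  have hsplit : List.ofFn (fun i : Fin (k + l) => a i)
      = List.ofFn (fun i : Fin k => a i) ++ List.ofFn fun i : Fin l => a (k + i) := by
    simp [List.ofFn_add]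
  have htail : cfMap (List.ofFn fun i : Fin l => a (k + i)) 0 ∈ I :=
    cfMap_mem_unitInterval (one_le_of_mem_ofFn fun n => ha (k + n)) unitInterval.zero_mem
  rw [cast_cf, cast_cf, hsplit, cfMap_append]
  simpa using abs_cfMap_sub_cfMap_le_one_div_length (one_le_of_mem_ofFn ha)
    (List.ne_nil_of_length_pos (by simpa using hk)) htail unitInterval.zero_mem

lemma tendsto_cfLim (ha : ∀ n, 1 ≤ a n) :
    Tendsto (fun k : ℕ => ((cf (List.ofFn fun i : Fin k => a i) : ℚ) : ℝ)) atTop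
      (nhds (cfLim a)) := by
  refine CauchySeq.tendsto_limUnder (Metric.cauchySeq_iff'.2 fun ε hε => ?_)
  obtain ⟨n, hn⟩ := exists_nat_one_div_lt hε
  refine ⟨n + 1, fun m hm => (abs_cf_sub_cf_le ha n.succ_pos hm).trans_lt ?_⟩
  exact_mod_cast hn

lemma abs_cfLim_sub_cf_le (ha : ∀ n, 1 ≤ a n) (hk : 0 < k) :
    |cfLim a - (cf (List.ofFn fun i : Fin k => a i) : ℚ)| ≤ 1 / k := by
  refine le_of_tendsto ((tendsto_cfLim ha).sub_const _).abs ?_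
  filter_upwards [eventually_ge_atTop k] with m hm using abs_cf_sub_cf_le ha hk hm

lemma cfLim_mem_unitInterval (ha : ∀ n, 1 ≤ a n) : cfLim a ∈ I := by
  refine isClosed_Icc.mem_of_tendsto (tendsto_cfLim ha) (Eventually.of_forall fun k => ?_)
  rw [cast_cf]
  exact cfMap_mem_unitInterval (one_le_of_mem_ofFn ha) unitInterval.zero_mem

lemma cfLim_eq_one_div (ha : ∀ n, 1 ≤ a n) :
    cfLim a = 1 / (a 0 + cfLim fun n => a (n + 1)) := by
  have hshift := tendsto_cfLim fun n => ha (n + 1)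
  have h0 : (1 : ℝ) ≤ a 0 := mod_cast ha 0
  have hpos : (a 0 : ℝ) + cfLim (fun n => a (n + 1)) ≠ 0 := by
    linarith [(cfLim_mem_unitInterval fun n => ha (n + 1)).1]
  refine tendsto_nhds_unique ((tendsto_add_atTop_iff_nat 1).2 (tendsto_cfLim ha)) ?_
  refine ((tendsto_const_nhds (x := 1)).div (hshift.const_add (a 0 : ℝ)) hpos).congr fun k => ?_
  simp [List.ofFn_succ, cf]

lemma continuousOn_cfLim : ContinuousOn cfLim {a | ∀ n, 1 ≤ a n} := by
  have hunif : TendstoUniformlyOn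
      (fun (k : ℕ) (a : ℕ → ℤ) => ((cf (List.ofFn fun i : Fin k => a i) : ℚ) : ℝ)) cfLim atTop
      {a | ∀ n, 1 ≤ a n} := by
    refine Metric.tendstoUniformlyOn_iff.2 fun ε hε => ?_
    obtain ⟨n, hn⟩ := exists_nat_one_div_lt hε
    filter_upwards [eventually_ge_atTop (n + 1)] with k hk a ha
    refine (abs_cfLim_sub_cf_le ha (by omega)).trans_lt (lt_of_le_of_lt ?_ hn)
    gcongr
    exact_mod_cast hk
  refine hunif.continuousOn (Eventually.of_forall fun k => ?_).frequently
  have hcont : Continuous fun b : Fin k → ℤ => ((cf (List.ofFn b) : ℚ) : ℝ) :=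
    continuous_of_discreteTopology
  exact (hcont.comp (by fun_prop : Continuous fun (a : ℕ → ℤ) (i : Fin k) => a i)).continuousOn

end CfLim

section CantorSet

variable {S : Set ℤ} {x : ℝ}

lemma CA_eq_image_cfLim (hS : ∀ a ∈ S, 1 ≤ a) :
    CA S = cfLim '' Set.univ.pi fun _ : ℕ => S := by
  ext x
  constructor
  · rintro ⟨a, ha, hx⟩
    exact ⟨a, fun n _ => ha n, tendsto_nhds_unique (tendsto_cfLim fun n => hS _ (ha n)) hx⟩
  · rintro ⟨a, ha, rfl⟩
    exact ⟨a, fun n => ha n trivial, tendsto_cfLim fun n => hS _ (ha n trivial)⟩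

lemma CA_subset_unitInterval (hS : ∀ a ∈ S, 1 ≤ a) : CA S ⊆ I := by
  rw [CA_eq_image_cfLim hS]
  rintro _ ⟨a, ha, rfl⟩
  exact cfLim_mem_unitInterval fun n => hS _ (ha n trivial)

lemma CA_nonempty (hS : ∀ a ∈ S, 1 ≤ a) (hne : S.Nonempty) : (CA S).Nonempty := by
  rw [CA_eq_image_cfLim hS]
  exact (Set.univ_pi_nonempty_iff.2 fun _ => hne).image _

lemma isCompact_CA (hS : ∀ a ∈ S, 1 ≤ a) (hfin : S.Finite) : IsCompact (CA S) := by
  rw [CA_eq_image_cfLim hS]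
  exact (isCompact_univ_pi fun _ => hfin.isCompact).image_of_continuousOn
    (continuousOn_cfLim.mono fun a ha n => hS _ (ha n trivial))

lemma mem_CA_iff_exists_one_div (hS : ∀ a ∈ S, 1 ≤ a) :
    x ∈ CA S ↔ ∃ b ∈ S, ∃ y ∈ CA S, 1 / (b + y) = x := by
  simp only [CA_eq_image_cfLim hS]
  constructor
  · rintro ⟨a, ha, rfl⟩
    exact ⟨a 0, ha 0 trivial, _, ⟨fun n => a (n + 1), fun n _ => ha _ trivial, rfl⟩,
      (cfLim_eq_one_div fun n => hS _ (ha n trivial)).symm⟩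
  · rintro ⟨b, hb, _, ⟨a, ha, rfl⟩, rfl⟩
    let c : ℕ → ℤ := fun n => Nat.casesOn n b a
    have hc : ∀ n, c n ∈ S := by
      rintro (_ | n)
      exacts [hb, ha n trivial]
    exact ⟨c, fun n _ => hc n, cfLim_eq_one_div fun n => hS _ (hc n)⟩

lemma cfMap_mem_CA (hS : ∀ a ∈ S, 1 ≤ a) (hx : x ∈ CA S) {w : List ℤ} (hw : ∀ a ∈ w, a ∈ S) :
    cfMap w x ∈ CA S := by
  induction w with
  | nil => exact hx
  | cons a t ih =>
    rw [List.forall_mem_cons] at hw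
    exact (mem_CA_iff_exists_one_div hS).2 ⟨a, hw.1, _, ih hw.2, rfl⟩

lemma exists_cfMap_eq_of_mem_CA {E : Finset ℤ} (hE : ∀ a ∈ E, 1 ≤ a) (n : ℕ) (hx : x ∈ CA E) :
    ∃ w ∈ words E n, ∃ y ∈ CA E, cfMap w y = x := by
  induction n generalizing x with
  | zero => exact ⟨[], by simp [words], x, hx, rfl⟩
  | succ n ih =>
    obtain ⟨b, hb, y, hy, rfl⟩ := (mem_CA_iff_exists_one_div hE).1 hx
    obtain ⟨w, hw, z, hz, rfl⟩ := ih hy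
    rw [mem_words] at hw
    exact ⟨b :: w, mem_words.2 ⟨by simp [hw.1], List.forall_mem_cons.2 ⟨hb, hw.2⟩⟩, z, hz, rfl⟩

lemma one_div_add_one_le_of_mem_CA (hS : ∀ a ∈ S, 1 ≤ a) {N : ℝ} (hN : ∀ a ∈ S, (a : ℝ) ≤ N)
    (hx : x ∈ CA S) : 1 / (N + 1) ≤ x := by
  obtain ⟨b, hb, y, hy, rfl⟩ := (mem_CA_iff_exists_one_div hS).1 hx
  have hb1 : (1 : ℝ) ≤ b := mod_cast hS b hb
  have hy' := CA_subset_unitInterval hS hy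
  exact one_div_le_one_div_of_le (by linarith [hy'.1]) (add_le_add (hN b hb) hy'.2)

lemma exists_pos_le_abs_one_div_sub_one_div (hS : ∀ a ∈ S, 1 ≤ a) (hfin : S.Finite) :
    ∃ κ > 0, ∀ a ∈ S, ∀ b ∈ S, a ≠ b → ∀ x ∈ CA S, ∀ y ∈ CA S,
      κ ≤ |1 / (a + x) - 1 / (b + y)| := by
  obtain ⟨M, hM⟩ := hfin.bddAbove
  set N : ℝ := max M 1
  have hN : ∀ a ∈ S, (a : ℝ) ≤ N := fun a ha => le_max_of_le_left (mod_cast hM ha)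
  have : 1 ≤ N := le_max_right _ _
  refine ⟨1 / (N + 1) / ((N + 1) * (N + 1)), by positivity, fun a ha b hb hab x hx y hy => ?_⟩
  have ha1 : (1 : ℝ) ≤ a := mod_cast hS a ha
  have hb1 : (1 : ℝ) ≤ b := mod_cast hS b hb
  have hxI := CA_subset_unitInterval hS hx
  have hyI := CA_subset_unitInterval hS hy
  have hab1 : (1 : ℝ) ≤ |(b : ℝ) - a| := mod_cast Int.one_le_abs (sub_ne_zero.2 hab.symm)
  have hxy : |x - y| ≤ 1 - 1 / (N + 1) := by
    have hx0 := one_div_add_one_le_of_mem_CA hS hN hx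
    have hy0 := one_div_add_one_le_of_mem_CA hS hN hy
    exact abs_sub_le_iff.2 ⟨by linarith [hxI.2], by linarith [hyI.2]⟩
  have hnum : 1 / (N + 1) ≤ |(b + y) - (a + x)| := by
    have htri := abs_sub_abs_le_abs_sub ((b : ℝ) - a) (x - y)
    rw [show (b : ℝ) - a - (x - y) = (b + y) - (a + x) by ring] at htri
    linarith
  have hpos : 0 < (a + x) * (b + y) := mul_pos (by linarith [hxI.1]) (by linarith [hyI.1])
  have hsub : 1 / (a + x) - 1 / (b + y) = ((b + y) - (a + x)) / ((a + x) * (b + y)) := by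
    rw [div_sub_div _ _ (by linarith [hxI.1]) (by linarith [hyI.1]), one_mul, mul_one]
  rw [hsub, abs_div, abs_of_pos hpos]
  gcongr
  · linarith [hyI.1]
  exacts [hN a ha, hxI.2, hN b hb, hyI.2]

end CantorSet

section MassDistribution

variable {X : Type*} [EMetricSpace X] [MeasurableSpace X] {K : Set X} {s : ℝ} {C : ENNReal}
  {μ : ℕ → ProbabilityMeasure X} {e : ℕ → ENNReal}

open scoped NNReal Topology

lemma measure_le_ediam_rpow_of_forall_isOpen {ν : Measure X} (hC : C ≠ ⊤) (hs : 0 ≤ s)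
    (hν : ∀ U, IsOpen U → ν U ≤ C * Metric.ediam U ^ s) (t : Set X) :
    ν t ≤ C * Metric.ediam t ^ s := by
  have hthick : ∀ δ : ℝ≥0, 0 < δ → ν t ≤ C * (Metric.ediam t + 2 * δ) ^ s := by
    intro δ hδ
    calc ν t ≤ ν (Metric.thickening δ t) := measure_mono (Metric.self_subset_thickening hδ t)
      _ ≤ C * Metric.ediam (Metric.thickening (δ : ℝ) t) ^ s := hν _ Metric.isOpen_thickening
      _ ≤ C * (Metric.ediam t + 2 * δ) ^ s := by
          gcongr
          exact Metric.ediam_thickening_le δ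
  have hδ : Tendsto (fun δ : ℝ≥0 => C * (Metric.ediam t + 2 * δ) ^ s) (𝓝[>] 0)
      (𝓝 (C * Metric.ediam t ^ s)) := by
    have h2 : Tendsto (fun δ : ℝ≥0 => Metric.ediam t + 2 * (δ : ENNReal)) (𝓝[>] 0)
        (𝓝 (Metric.ediam t + 2 * (0 : ℝ≥0))) :=
      ((ENNReal.Tendsto.const_mul (ENNReal.continuous_coe.tendsto 0)
        (Or.inr ENNReal.ofNat_ne_top)).const_add _).mono_left nhdsWithin_le_nhds
    rw [ENNReal.coe_zero, mul_zero, add_zero] at h2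
    exact ENNReal.Tendsto.const_mul (h2.ennrpow_const s) (Or.inr hC)
  exact ge_of_tendsto hδ (eventually_mem_nhdsWithin.mono hthick)

variable [BorelSpace X]

lemma exists_probabilityMeasure_le_ediam_rpow (hK : IsCompact K) (hs : 0 ≤ s)
    (hC : C ≠ ⊤) (hμK : ∀ n, μ n Kᶜ = 0) (he : Tendsto e atTop (𝓝 0))
    (hμ : ∀ᶠ n in atTop, ∀ U, IsOpen U → (μ n : Measure X) U ≤ C * Metric.ediam U ^ s + e n) :
    ∃ ν : ProbabilityMeasure X, (ν : Measure X) Kᶜ = 0 ∧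
      ∀ t, (ν : Measure X) t ≤ C * Metric.ediam t ^ s := by
  have hcompact : IsCompact {ν : ProbabilityMeasure X | ∀ _ : ℕ, ν Kᶜ ≤ 0} :=
    isCompact_setOfPred_probabilityMeasure_mass_eq_compl_isCompact_le tendsto_const_nhds
      (fun _ => hK) (Or.inl inferInstance)
  obtain ⟨ν, hνK, hν⟩ := hcompact.ultrafilter_le_nhds ((hyperfilter ℕ).map μ)
    (le_principal_iff.2 (mem_map.2 (Eventually.of_forall fun n _ => (hμK n).le)))
  refine ⟨ν, (ν.null_iff_toMeasure_null _).1 (le_antisymm (hνK 0) bot_le),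
    measure_le_ediam_rpow_of_forall_isOpen hC hs fun U hU => ?_⟩
  have hlim : Tendsto (fun n => C * Metric.ediam U ^ s + e n) (hyperfilter ℕ)
      (𝓝 (C * Metric.ediam U ^ s)) := by
    simpa using (he.mono_left Nat.hyperfilter_le_atTop).const_add (C * Metric.ediam U ^ s)
  refine (ProbabilityMeasure.le_liminf_measure_open_of_tendsto (μs := μ) hν hU).trans ?_
  rw [← hlim.liminf_eq]
  exact liminf_le_liminf (Nat.hyperfilter_le_atTop (hμ.mono fun n h => h U hU))

/-- The mass distribution principle, with a mass estimate that only holds asymptotically along a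
sequence of measures. -/
lemma hausdorffMeasure_ne_zero_of_le_ediam_rpow (hK : IsCompact K) (hs : 0 ≤ s)
    (hC : C ≠ ⊤) (hμK : ∀ n, μ n Kᶜ = 0) (he : Tendsto e atTop (𝓝 0))
    (hμ : ∀ᶠ n in atTop, ∀ U, IsOpen U → (μ n : Measure X) U ≤ C * Metric.ediam U ^ s + e n) :
    μH[s] K ≠ 0 := by
  obtain ⟨ν, hνK, hν⟩ := exists_probabilityMeasure_le_ediam_rpow hK hs hC hμK he hμ
  have hle : C⁻¹ • (ν : Measure X) ≤ μH[s] := by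
    refine Measure.le_hausdorffMeasure s _ 1 one_pos fun t _ => ?_
    rw [Measure.smul_apply, smul_eq_mul, mul_comm, ← div_eq_mul_inv]
    exact ENNReal.div_le_of_le_mul' (hν t)
  have hνK1 : (ν : Measure X) K = 1 := (prob_compl_eq_zero_iff hK.measurableSet).1 hνK
  refine (lt_of_lt_of_le ?_ (hle K)).ne'
  rw [Measure.smul_apply, hνK1, smul_eq_mul, mul_one]
  exact ENNReal.inv_pos.2 hC

end MassDistribution

section TransferOperator

/-- The transfer operator `f ↦ ∑ a ∈ E, (a + x)^(-2s) f(1/(a + x))` at exponent `s` of the Gauss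
map restricted to partial quotients in `E`. -/
noncomputable def transferOp (E : Finset ℤ) (s : ℝ) (f : ℝ → ℝ) (x : ℝ) : ℝ :=
  ∑ a ∈ E, (a + x) ^ (-(2 * s)) * f (1 / (a + x))

variable {E : Finset ℤ} {s : ℝ} {f : ℝ → ℝ} {m x : ℝ} {w : List ℤ}

lemma sum_cfDenom_rpow_mul_le (hE : ∀ a ∈ E, 1 ≤ a)
    (hL : ∀ x ∈ I, transferOp E s f x ≤ f x) (hx : x ∈ I) (n : ℕ) :
    ∑ w ∈ words E n, cfDenom w x ^ (-(2 * s)) * f (cfMap w x) ≤ f x := by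
  induction n with
  | zero => simp [words, cfDenom, cfMap]
  | succ n ih =>
    rw [sum_words_succ]
    refine (Finset.sum_le_sum fun t ht => ?_).trans ih
    have ht1 := one_le_of_mem_words hE ht
    have hD := cfDenom_pos ht1 hx.1
    calc ∑ a ∈ E, cfDenom (a :: t) x ^ (-(2 * s)) * f (cfMap (a :: t) x)
        = cfDenom t x ^ (-(2 * s)) * transferOp E s f (cfMap t x) := by
          rw [transferOp, Finset.mul_sum]
          refine Finset.sum_congr rfl fun a ha => ?_
          have hpos := one_le_add_cfMap (List.forall_mem_cons.2 ⟨hE a ha, ht1⟩) hx.1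
          rw [cfDenom, cfMap, Real.mul_rpow (by linarith) hD.le]
          ring
      _ ≤ cfDenom t x ^ (-(2 * s)) * f (cfMap t x) := by
          gcongr
          exact hL _ (cfMap_mem_unitInterval ht1 hx)

lemma ediam_cfMap_image_le (hw : ∀ a ∈ w, 1 ≤ a) :
    Metric.ediam (cfMap w '' I) ≤ ENNReal.ofReal (1 / cfDenom w 0 ^ 2) := by
  apply Metric.ediam_le
  rintro _ ⟨x, hx, rfl⟩ _ ⟨y, hy, rfl⟩
  rw [edist_dist, Real.dist_eq]
  exact ENNReal.ofReal_le_ofReal (abs_cfMap_sub_cfMap_le hw hx hy)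

lemma ediam_cfMap_image_le_one_div_length (hw : ∀ a ∈ w, 1 ≤ a) (hne : w ≠ []) :
    Metric.ediam (cfMap w '' I) ≤ ENNReal.ofReal (1 / w.length) := by
  apply Metric.ediam_le
  rintro _ ⟨x, hx, rfl⟩ _ ⟨y, hy, rfl⟩
  rw [edist_dist, Real.dist_eq]
  exact ENNReal.ofReal_le_ofReal (abs_cfMap_sub_cfMap_le_one_div_length hw hne hx hy)

lemma one_div_sq_rpow {D : ℝ} (hD : 0 ≤ D) (s : ℝ) : (1 / D ^ 2) ^ s = D ^ (-(2 * s)) := by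
  rw [one_div, ← Real.rpow_two, ← Real.rpow_neg hD, ← Real.rpow_mul hD]
  ring_nf

lemma sum_ediam_cfMap_image_rpow_le (hE : ∀ a ∈ E, 1 ≤ a) (hs : 0 ≤ s) (hm : 0 < m)
    (hf : ∀ x ∈ I, m ≤ f x) (hL : ∀ x ∈ I, transferOp E s f x ≤ f x) (n : ℕ) :
    ∑ w ∈ words E n, Metric.ediam (cfMap w '' I) ^ s ≤ ENNReal.ofReal (f 0 / m) := by
  have hD : ∀ w ∈ words E n, 0 < cfDenom w 0 := fun w hw =>
    cfDenom_pos (one_le_of_mem_words hE hw) le_rfl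
  have hsum : ∑ w ∈ words E n, cfDenom w 0 ^ (-(2 * s)) ≤ f 0 / m := by
    rw [le_div_iff₀ hm, Finset.sum_mul]
    refine (Finset.sum_le_sum fun w hw => ?_).trans
      (sum_cfDenom_rpow_mul_le hE hL unitInterval.zero_mem n)
    have := hD w hw
    gcongr
    exact hf _ (cfMap_mem_unitInterval (one_le_of_mem_words hE hw) unitInterval.zero_mem)
  refine le_trans ?_ (ENNReal.ofReal_le_ofReal hsum)
  rw [ENNReal.ofReal_sum_of_nonneg fun w hw => Real.rpow_nonneg (hD w hw).le _]
  refine Finset.sum_le_sum fun w hw => ?_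
  rw [← one_div_sq_rpow (hD w hw).le, ← ENNReal.ofReal_rpow_of_nonneg (by positivity) hs]
  gcongr
  exact ediam_cfMap_image_le (one_le_of_mem_words hE hw)

theorem dimH_CA_le_of_transferOp_le (hE : ∀ a ∈ E, 1 ≤ a) (hs : 0 ≤ s) (hm : 0 < m)
    (hf : ∀ x ∈ I, m ≤ f x) (hL : ∀ x ∈ I, transferOp E s f x ≤ f x) :
    dimH (CA E) ≤ ENNReal.ofReal s := by
  have hr : Tendsto (fun n : ℕ => ENNReal.ofReal (1 / (n : ℝ))) atTop (nhds 0) := by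
    rw [← ENNReal.ofReal_zero]
    exact ENNReal.tendsto_ofReal tendsto_one_div_atTop_nhds_zero_nat
  have hμ : μH[s] (CA E) ≤ ENNReal.ofReal (f 0 / m) := by
    refine (Measure.hausdorffMeasure_le_liminf_sum (ι := fun n => words E n) s _ _ hr
      (fun n w => cfMap w '' I) ?_ ?_).trans ?_
    · filter_upwards [eventually_gt_atTop 0] with n hn
      rintro ⟨w, hw⟩
      have hlen := (mem_words.1 hw).1
      have hdiam := ediam_cfMap_image_le_one_div_length (one_le_of_mem_words hE hw)
        (List.ne_nil_of_length_pos (hlen ▸ hn))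
      rwa [hlen] at hdiam
    · refine Eventually.of_forall fun n x hx => ?_
      obtain ⟨w, hw, y, hy, rfl⟩ := exists_cfMap_eq_of_mem_CA hE n hx
      exact Set.mem_iUnion.2 ⟨⟨w, hw⟩, y, CA_subset_unitInterval hE hy, rfl⟩
    · refine (liminf_le_liminf (v := fun _ => ENNReal.ofReal (f 0 / m))
        (Eventually.of_forall fun n => ?_)).trans (by simp)
      rw [Finset.sum_coe_sort (words E n) fun w => Metric.ediam (cfMap w '' I) ^ s]
      exact sum_ediam_cfMap_image_rpow_le hE hs hm hf hL n
  refine dimH_le_of_hausdorffMeasure_ne_top (d := s.toNNReal) ?_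
  rw [Real.coe_toNNReal s hs]
  exact ne_top_of_le_ne_top ENNReal.ofReal_ne_top hμ

end TransferOperator

section CommonPrefix

variable {α : Type*}

lemma subsingleton_or_exists_common_prefix {n : ℕ} {W : Set (List α)}
    (hW : ∀ w ∈ W, w.length = n) :
    W.Subsingleton ∨ ∃ u a b t t', a ≠ b ∧ u ++ a :: t ∈ W ∧ u ++ b :: t' ∈ W ∧
      ∀ w ∈ W, u <+: w := by
  induction n generalizing W with
  | zero =>
    refine Or.inl fun v hv w hw => ?_
    rw [List.length_eq_zero_iff.1 (hW v hv), List.length_eq_zero_iff.1 (hW w hw)]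
  | succ n ih =>
    have hcons : ∀ w ∈ W, ∃ a t, w = a :: t := fun w hw =>
      List.exists_cons_of_length_eq_add_one (hW w hw)
    by_cases hheads : ∃ a b t t', a ≠ b ∧ a :: t ∈ W ∧ b :: t' ∈ W
    · obtain ⟨a, b, t, t', hab, ha, hb⟩ := hheads
      exact Or.inr ⟨[], a, b, t, t', hab, ha, hb, fun w _ => List.nil_prefix⟩
    rcases W.eq_empty_or_nonempty with rfl | ⟨w₀, hw₀⟩
    · exact Or.inl Set.subsingleton_empty
    obtain ⟨c, t₀, rfl⟩ := hcons w₀ hw₀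
    have hhead : ∀ w ∈ W, ∃ t, w = c :: t := by
      intro w hw
      obtain ⟨a, t, rfl⟩ := hcons w hw
      by_cases hac : a = c
      · exact ⟨t, by rw [hac]⟩
      · exact (hheads ⟨a, c, t, t₀, hac, hw, hw₀⟩).elim
    rcases ih (W := {t | c :: t ∈ W}) fun t ht => by simpa using hW _ ht with
      hsub | ⟨u, a, b, t, t', hab, ha, hb, hu⟩
    · refine Or.inl fun v hv w hw => ?_
      obtain ⟨v', rfl⟩ := hhead v hv
      obtain ⟨w', rfl⟩ := hhead w hw
      rw [hsub hv hw]
    · refine Or.inr ⟨c :: u, a, b, t, t', hab, ha, hb, fun w hw => ?_⟩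
      obtain ⟨w', rfl⟩ := hhead w hw
      exact (List.prefix_cons_inj c).2 (hu w' hw)

end CommonPrefix

section WordProb

/-- The probability of the word `w`, started at `x` and extended to the left, under the Markov
chain obtained from the transfer operator by Doob's `h`-transform with the function `f`: the letter
`a` is prepended at the point `y` with probability
`(a + y)^(-2s) f(1/(a + y)) / transferOp E s f y`. -/
noncomputable def wordProb (E : Finset ℤ) (s : ℝ) (f : ℝ → ℝ) : List ℤ → ℝ → ℝ
  | [], _ => 1
  | a :: t, x => wordProb E s f t x * ((a + cfMap t x) ^ (-(2 * s)) * f (1 / (a + cfMap t x)) /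
      transferOp E s f (cfMap t x))

variable {E : Finset ℤ} {s : ℝ} {f : ℝ → ℝ} {m M x : ℝ} {u w : List ℤ}

lemma wordProb_append (E : Finset ℤ) (s : ℝ) (f : ℝ → ℝ) (u v : List ℤ) (x : ℝ) :
    wordProb E s f (u ++ v) x = wordProb E s f v x * wordProb E s f u (cfMap v x) := by
  induction u with
  | nil => simp [wordProb]
  | cons a t ih => simp only [List.cons_append, wordProb, ih, cfMap_append, mul_assoc]

lemma sum_wordProb (hE : ∀ a ∈ E, 1 ≤ a) (hL : ∀ x ∈ I, transferOp E s f x ≠ 0) (hx : x ∈ I)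
    (n : ℕ) : ∑ w ∈ words E n, wordProb E s f w x = 1 := by
  induction n with
  | zero => simp [words, wordProb]
  | succ n ih =>
    rw [sum_words_succ, ← ih]
    refine Finset.sum_congr rfl fun t ht => ?_
    simp only [wordProb]
    rw [← Finset.mul_sum, ← Finset.sum_div, ← transferOp,
      div_self (hL _ (cfMap_mem_unitInterval (one_le_of_mem_words hE ht) hx)), mul_one]

lemma transferOp_nonneg (hE : ∀ a ∈ E, 1 ≤ a) (hf : ∀ x ∈ I, 0 ≤ f x) (hx : x ∈ I) :
    0 ≤ transferOp E s f x := by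
  refine Finset.sum_nonneg fun a ha => ?_
  have ha1 : (1 : ℝ) ≤ a := mod_cast hE a ha
  have hax : 1 ≤ a + x := by linarith [hx.1]
  exact mul_nonneg (by positivity) (hf _ ⟨by positivity, div_le_one_of_le₀ hax (by linarith)⟩)

lemma wordProb_nonneg (hE : ∀ a ∈ E, 1 ≤ a) (hf : ∀ x ∈ I, 0 ≤ f x) (hw : ∀ a ∈ w, 1 ≤ a)
    (hx : x ∈ I) : 0 ≤ wordProb E s f w x := by
  induction w with
  | nil => exact zero_le_one
  | cons a t ih =>
    have ht := (List.forall_mem_cons.1 hw).2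
    have hpos := one_le_add_cfMap hw hx.1
    exact mul_nonneg (ih ht) (div_nonneg
      (mul_nonneg (by positivity) (hf _ (cfMap_mem_unitInterval hw hx)))
      (transferOp_nonneg hE hf (cfMap_mem_unitInterval ht hx)))

lemma wordProb_le (hf : ∀ x ∈ I, 0 < f x)
    (hL : ∀ x ∈ I, f x ≤ transferOp E s f x) (hw : ∀ a ∈ w, 1 ≤ a) (hx : x ∈ I) :
    wordProb E s f w x ≤ cfDenom w x ^ (-(2 * s)) * f (cfMap w x) / f x := by
  induction w with
  | nil => simp [wordProb, cfDenom, cfMap, (hf x hx).ne']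
  | cons a t ih =>
    have ht := (List.forall_mem_cons.1 hw).2
    have htx := cfMap_mem_unitInterval ht hx
    have hft := hf _ htx
    have hfa : 0 < f (1 / (a + cfMap t x)) := hf _ (cfMap_mem_unitInterval hw hx)
    have hpos := one_le_add_cfMap hw hx.1
    have hD := cfDenom_pos ht hx.1
    have hfx := hf x hx
    calc wordProb E s f (a :: t) x
        ≤ cfDenom t x ^ (-(2 * s)) * f (cfMap t x) / f x *
          ((a + cfMap t x) ^ (-(2 * s)) * f (1 / (a + cfMap t x)) / f (cfMap t x)) := by
          rw [wordProb]
          gcongr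
          · exact div_nonneg (by positivity) (hft.le.trans (hL _ htx))
          · exact ih ht
          · exact hL _ htx
      _ = cfDenom (a :: t) x ^ (-(2 * s)) * f (cfMap (a :: t) x) / f x := by
          rw [cfDenom, cfMap, Real.mul_rpow (by linarith) hD.le]
          field_simp

lemma wordProb_le_cfDenom_zero_rpow (hs : 0 ≤ s) (hm : 0 < m) (hfm : ∀ x ∈ I, m ≤ f x)
    (hfM : ∀ x ∈ I, f x ≤ M) (hL : ∀ x ∈ I, f x ≤ transferOp E s f x)
    (hw : ∀ a ∈ w, 1 ≤ a) (hx : x ∈ I) :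
    wordProb E s f w x ≤ M / m * cfDenom w 0 ^ (-(2 * s)) := by
  have hf : ∀ x ∈ I, 0 < f x := fun x hx => hm.trans_le (hfm x hx)
  have hwx := cfMap_mem_unitInterval hw hx
  have hD := cfDenom_pos hw le_rfl
  have := cfDenom_pos hw hx.1
  calc wordProb E s f w x ≤ cfDenom w x ^ (-(2 * s)) * f (cfMap w x) / f x :=
        wordProb_le hf hL hw hx
    _ ≤ cfDenom w 0 ^ (-(2 * s)) * M / m := by
        have hfw := (hf _ hwx).le
        have hpow : cfDenom w x ^ (-(2 * s)) ≤ cfDenom w 0 ^ (-(2 * s)) :=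
          Real.rpow_le_rpow_of_nonpos hD (cfDenom_zero_le hw hx.1) (by linarith)
        gcongr
        · exact mul_nonneg (by positivity) (hfw.trans (hfM _ hwx))
        · exact hfM _ hwx
        · exact hfm x hx
    _ = M / m * cfDenom w 0 ^ (-(2 * s)) := by ring

lemma sum_wordProb_prefix_le (hE : ∀ a ∈ E, 1 ≤ a) (hs : 0 ≤ s) (hm : 0 < m)
    (hfm : ∀ x ∈ I, m ≤ f x) (hfM : ∀ x ∈ I, f x ≤ M) (hL : ∀ x ∈ I, f x ≤ transferOp E s f x)
    (hu : ∀ a ∈ u, 1 ≤ a) (hx : x ∈ I) (n : ℕ) :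
    ∑ w ∈ words E n with u <+: w, wordProb E s f w x ≤ M / m * cfDenom u 0 ^ (-(2 * s)) := by
  have hf : ∀ x ∈ I, 0 < f x := fun x hx => hm.trans_le (hfm x hx)
  have hnonneg : ∀ v : List ℤ, (∀ a ∈ v, 1 ≤ a) → 0 ≤ wordProb E s f v x := fun v hv =>
    wordProb_nonneg hE (fun x hx => (hf x hx).le) hv hx
  have hsub : (words E n).filter (u <+: ·) ⊆ (words E (n - u.length)).image (u ++ ·) := by
    intro w hw
    obtain ⟨hw, v, rfl⟩ := Finset.mem_filter.1 hw
    obtain ⟨hlen, hmem⟩ := mem_words.1 hw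
    rw [List.length_append] at hlen
    exact Finset.mem_image.2 ⟨v, mem_words.2 ⟨by omega, (List.forall_mem_append.1 hmem).2⟩, rfl⟩
  calc ∑ w ∈ words E n with u <+: w, wordProb E s f w x
      ≤ ∑ w ∈ (words E (n - u.length)).image (u ++ ·), wordProb E s f w x := by
        refine Finset.sum_le_sum_of_subset_of_nonneg hsub fun w hw _ => ?_
        obtain ⟨v, hv, rfl⟩ := Finset.mem_image.1 hw
        exact hnonneg _ (List.forall_mem_append.2 ⟨hu, one_le_of_mem_words hE hv⟩)
    _ = ∑ v ∈ words E (n - u.length), wordProb E s f (u ++ v) x :=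
        Finset.sum_image fun v _ v' _ h => List.append_cancel_left h
    _ ≤ ∑ v ∈ words E (n - u.length),
          wordProb E s f v x * (M / m * cfDenom u 0 ^ (-(2 * s))) := by
        refine Finset.sum_le_sum fun v hv => ?_
        have hv1 := one_le_of_mem_words hE hv
        rw [wordProb_append]
        exact mul_le_mul_of_nonneg_left (wordProb_le_cfDenom_zero_rpow hs hm hfm hfM hL hu
          (cfMap_mem_unitInterval hv1 hx)) (hnonneg v hv1)
    _ = M / m * cfDenom u 0 ^ (-(2 * s)) := by
        rw [← Finset.sum_mul, sum_wordProb hE (fun x hx => ((hf x hx).trans_le (hL x hx)).ne') hx,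
          one_mul]

end WordProb

section LowerBound

variable {E : Finset ℤ} {s : ℝ} {f : ℝ → ℝ} {m M κ x : ℝ} {n : ℕ} {a b : ℤ} {u t t' : List ℤ}

lemma div_cfDenom_sq_le_abs_cfMap_sub (hE : ∀ a ∈ E, 1 ≤ a)
    (hκ : ∀ a ∈ E, ∀ b ∈ E, a ≠ b → ∀ x ∈ CA E, ∀ y ∈ CA E, κ ≤ |1 / (a + x) - 1 / (b + y)|)
    (hx : x ∈ CA E) (hab : a ≠ b) (ha : ∀ c ∈ u ++ a :: t, c ∈ E)
    (hb : ∀ c ∈ u ++ b :: t', c ∈ E) :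
    κ / 4 / cfDenom u 0 ^ 2 ≤ |cfMap (u ++ a :: t) x - cfMap (u ++ b :: t') x| := by
  obtain ⟨hu, hat⟩ := List.forall_mem_append.1 ha
  obtain ⟨-, hbt⟩ := List.forall_mem_append.1 hb
  have hu1 : ∀ c ∈ u, 1 ≤ c := fun c hc => hE c (hu c hc)
  have hsep : κ ≤ |cfMap (a :: t) x - cfMap (b :: t') x| := by
    rw [List.forall_mem_cons] at hat hbt
    exact hκ a hat.1 b hbt.1 hab _ (cfMap_mem_CA hE hx hat.2) _ (cfMap_mem_CA hE hx hbt.2)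
  have hIa := CA_subset_unitInterval hE (cfMap_mem_CA hE hx hat)
  have hIb := CA_subset_unitInterval hE (cfMap_mem_CA hE hx hbt)
  have hD := cfDenom_pos hu1 le_rfl
  have hDa := cfDenom_pos hu1 hIa.1
  have hDb := cfDenom_pos hu1 hIb.1
  rw [cfMap_append, cfMap_append, abs_cfMap_sub_cfMap hu1 hIa.1 hIb.1]
  calc κ / 4 / cfDenom u 0 ^ 2 = κ / ((2 * cfDenom u 0) * (2 * cfDenom u 0)) := by
        field_simp
        ring
    _ ≤ |cfMap (a :: t) x - cfMap (b :: t') x| / ((2 * cfDenom u 0) * (2 * cfDenom u 0)) := by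
        gcongr
    _ ≤ |cfMap (a :: t) x - cfMap (b :: t') x| /
          (cfDenom u (cfMap (a :: t) x) * cfDenom u (cfMap (b :: t') x)) := by
        gcongr
        · exact cfDenom_le_two_mul_cfDenom_zero hu1 hIa
        · exact cfDenom_le_two_mul_cfDenom_zero hu1 hIb

open Classical in
lemma sum_wordProb_filter_le_of_subsingleton (hs : 0 ≤ s) (hm : 0 < m) (hE : ∀ a ∈ E, 1 ≤ a)
    (hfm : ∀ x ∈ I, m ≤ f x) (hfM : ∀ x ∈ I, f x ≤ M) (hL : ∀ x ∈ I, f x ≤ transferOp E s f x)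
    (hx : x ∈ I) (hn : 0 < n) {p : List ℤ → Prop}
    (hp : ((words E n).filter p : Set (List ℤ)).Subsingleton) :
    ∑ w ∈ words E n with p w, wordProb E s f w x ≤ M / m * (n : ℝ) ^ (-(2 * s)) := by
  have hM : 0 ≤ M := hm.le.trans ((hfm x hx).trans (hfM x hx))
  rcases ((words E n).filter p).eq_empty_or_nonempty with hW | ⟨w, hw⟩
  · rw [hW, Finset.sum_empty]
    positivity
  have hwE := (Finset.mem_filter.1 hw).1
  have hw1 := one_le_of_mem_words hE hwE
  have hlen : (n : ℝ) ≤ cfDenom w 0 := (mem_words.1 hwE).1 ▸ length_le_cfDenom hw1 le_rfl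
  rw [Finset.eq_singleton_iff_unique_mem.2 ⟨hw, fun v hv => hp hv hw⟩, Finset.sum_singleton]
  refine (wordProb_le_cfDenom_zero_rpow hs hm hfm hfM hL hw1 hx).trans ?_
  gcongr ?_ * ?_
  exact Real.rpow_le_rpow_of_nonpos (mod_cast hn) hlen (by linarith)

open Classical in
lemma sum_wordProb_filter_le_of_prefix (hE : ∀ a ∈ E, 1 ≤ a) (hs : 0 ≤ s) (hm : 0 < m)
    (hfm : ∀ x ∈ I, m ≤ f x) (hfM : ∀ x ∈ I, f x ≤ M) (hL : ∀ x ∈ I, f x ≤ transferOp E s f x)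
    (hx : x ∈ I) (hu : ∀ a ∈ u, 1 ≤ a) {p : List ℤ → Prop}
    (hp : ∀ w ∈ (words E n).filter p, u <+: w) (hκ : 0 < κ) :
    ENNReal.ofReal (∑ w ∈ words E n with p w, wordProb E s f w x)
      ≤ ENNReal.ofReal (M / m * (4 / κ) ^ s)
          * ENNReal.ofReal (κ / 4 / cfDenom u 0 ^ 2) ^ s := by
  have hM : 0 ≤ M := hm.le.trans ((hfm x hx).trans (hfM x hx))
  have hD := cfDenom_pos hu le_rfl
  have hmass : ∑ w ∈ words E n with p w, wordProb E s f w x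
      ≤ M / m * cfDenom u 0 ^ (-(2 * s)) := by
    refine le_trans (Finset.sum_le_sum_of_subset_of_nonneg (fun w hw => ?_) fun w hw _ => ?_)
      (sum_wordProb_prefix_le hE hs hm hfm hfM hL hu hx n)
    · exact Finset.mem_filter.2 ⟨(Finset.mem_filter.1 hw).1, hp w hw⟩
    · exact wordProb_nonneg hE (fun y hy => hm.le.trans (hfm y hy))
        (one_le_of_mem_words hE (Finset.mem_filter.1 hw).1) hx
  refine (ENNReal.ofReal_le_ofReal hmass).trans_eq ?_
  rw [ENNReal.ofReal_rpow_of_nonneg (by positivity) hs, ← ENNReal.ofReal_mul (by positivity),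
    mul_assoc, ← Real.mul_rpow (by positivity) (by positivity), ← one_div_sq_rpow hD.le]
  congr 3
  field_simp

open Classical in
/-- If two words with `cfMap w x ∈ U` differ, `U` meets two separated cylinders below their common
prefix, so its diameter controls the probability of that prefix; otherwise a single word is left,
whose probability tends to zero with its length. -/
lemma sum_wordProb_filter_le (hE : ∀ a ∈ E, 1 ≤ a) (hs : 0 ≤ s) (hm : 0 < m)
    (hfm : ∀ x ∈ I, m ≤ f x) (hfM : ∀ x ∈ I, f x ≤ M) (hL : ∀ x ∈ I, f x ≤ transferOp E s f x)
    (hκ0 : 0 < κ)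
    (hκ : ∀ a ∈ E, ∀ b ∈ E, a ≠ b → ∀ x ∈ CA E, ∀ y ∈ CA E, κ ≤ |1 / (a + x) - 1 / (b + y)|)
    (hx : x ∈ CA E) (hn : 0 < n) (U : Set ℝ) :
    ENNReal.ofReal (∑ w ∈ words E n with cfMap w x ∈ U, wordProb E s f w x)
      ≤ ENNReal.ofReal (M / m * (4 / κ) ^ s) * Metric.ediam U ^ s
        + ENNReal.ofReal (M / m * (n : ℝ) ^ (-(2 * s))) := by
  have hxI := CA_subset_unitInterval hE hx
  have hWU : ∀ {w}, w ∈ (words E n).filter (cfMap · x ∈ U) → w ∈ words E n ∧ cfMap w x ∈ U :=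
    Finset.mem_filter.1
  rcases subsingleton_or_exists_common_prefix
    (W := ((words E n).filter (cfMap · x ∈ U) : Set (List ℤ)))
    fun w hw => (mem_words.1 (hWU hw).1).1 with hsub | ⟨u, a, b, t, t', hab, ha, hb, hu⟩
  · exact le_add_of_nonneg_of_le zero_le (ENNReal.ofReal_le_ofReal
      (sum_wordProb_filter_le_of_subsingleton hs hm hE hfm hfM hL hxI hn hsub))
  · have haE := (mem_words.1 (hWU ha).1).2
    have hu1 : ∀ c ∈ u, 1 ≤ c := fun c hc => hE c ((List.forall_mem_append.1 haE).1 c hc)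
    have hdiam : ENNReal.ofReal (κ / 4 / cfDenom u 0 ^ 2) ≤ Metric.ediam U := by
      refine le_trans (ENNReal.ofReal_le_ofReal (div_cfDenom_sq_le_abs_cfMap_sub hE hκ hx hab haE
        (mem_words.1 (hWU hb).1).2)) ?_
      rw [← Real.dist_eq, ← edist_dist]
      exact Metric.edist_le_ediam_of_mem (hWU ha).2 (hWU hb).2
    refine le_add_of_le_of_nonneg ((sum_wordProb_filter_le_of_prefix hE hs hm hfm hfM hL hxI hu1
      hu hκ0).trans ?_) zero_le
    gcongr

/-- The law of `cfMap w x` when the word `w` of length `n` is drawn with probability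
`wordProb E s f w x`. -/
noncomputable def wordMeasure (E : Finset ℤ) (s : ℝ) (f : ℝ → ℝ) (x : ℝ) (n : ℕ) : Measure ℝ :=
  ∑ w ∈ words E n, ENNReal.ofReal (wordProb E s f w x) • Measure.dirac (cfMap w x)

open Classical in
lemma wordMeasure_apply (hprob : ∀ w ∈ words E n, 0 ≤ wordProb E s f w x) {U : Set ℝ}
    (hU : MeasurableSet U) :
    wordMeasure E s f x n U
      = ENNReal.ofReal (∑ w ∈ words E n with cfMap w x ∈ U, wordProb E s f w x) := by
  rw [ENNReal.ofReal_sum_of_nonneg fun w hw => hprob w (Finset.mem_filter.1 hw).1,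
    Finset.sum_filter, wordMeasure, Measure.finsetSum_apply]
  refine Finset.sum_congr rfl fun w _ => ?_
  simp [Measure.dirac_apply' _ hU, Set.indicator_apply]

theorem le_dimH_CA_of_le_transferOp (hE : ∀ a ∈ E, 1 ≤ a) (hne : E.Nonempty) (hs : 0 < s)
    (hm : 0 < m) (hfm : ∀ x ∈ I, m ≤ f x) (hfM : ∀ x ∈ I, f x ≤ M)
    (hL : ∀ x ∈ I, f x ≤ transferOp E s f x) :
    ENNReal.ofReal s ≤ dimH (CA E) := by
  have hcompact := isCompact_CA (S := E) hE E.finite_toSet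
  obtain ⟨x, hx⟩ := CA_nonempty (S := E) hE hne
  obtain ⟨κ, hκ0, hκ⟩ := exists_pos_le_abs_one_div_sub_one_div (S := E) hE E.finite_toSet
  have hxI := CA_subset_unitInterval hE hx
  have hprob : ∀ {n}, ∀ w ∈ words E n, 0 ≤ wordProb E s f w x := fun w hw =>
    wordProb_nonneg hE (fun y hy => hm.le.trans (hfm y hy)) (one_le_of_mem_words hE hw) hxI
  have hL0 : ∀ y ∈ I, transferOp E s f y ≠ 0 := fun y hy =>
    (hm.trans_le ((hfm y hy).trans (hL y hy))).ne'
  have huniv : ∀ n, wordMeasure E s f x n Set.univ = 1 := fun n => by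
    classical
    simp [wordMeasure_apply hprob MeasurableSet.univ, sum_wordProb hE hL0 hxI]
  let μ : ℕ → ProbabilityMeasure ℝ := fun n => ⟨wordMeasure E s f x n, ⟨huniv n⟩⟩
  have hμK : ∀ n, μ n (CA E)ᶜ = 0 := by
    classical
    intro n
    rw [ProbabilityMeasure.null_iff_toMeasure_null]
    refine (wordMeasure_apply hprob hcompact.measurableSet.compl).trans ?_
    rw [Finset.sum_filter]
    exact ENNReal.ofReal_eq_zero.2 (Finset.sum_eq_zero fun w hw => if_neg
      (Set.notMem_compl_iff.2 (cfMap_mem_CA hE hx (mem_words.1 hw).2))).le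
  have herr : Tendsto (fun n : ℕ => ENNReal.ofReal (M / m * (n : ℝ) ^ (-(2 * s)))) atTop
      (nhds 0) := by
    rw [← ENNReal.ofReal_zero, ← mul_zero (M / m)]
    exact ENNReal.tendsto_ofReal (((tendsto_rpow_neg_atTop (by linarith)).comp
      tendsto_natCast_atTop_atTop).const_mul _)
  refine le_dimH_of_hausdorffMeasure_ne_zero (d := s.toNNReal) ?_
  rw [Real.coe_toNNReal s hs.le]
  refine hausdorffMeasure_ne_zero_of_le_ediam_rpow (C := ENNReal.ofReal (M / m * (4 / κ) ^ s))
    hcompact hs.le ENNReal.ofReal_ne_top hμK herr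
    ((eventually_gt_atTop 0).mono fun n hn U hU => ?_)
  classical
  refine (wordMeasure_apply hprob hU.measurableSet).trans_le ?_
  exact sum_wordProb_filter_le hE hs.le hm hfm hfM hL hκ0 hκ hx hn U

end LowerBound

section TruncatedGauss

/-- The inverse branch `x ↦ 1 / (i + 1 + x)` of the Gauss map with partial quotient `i + 1`. -/
noncomputable def gaussBranch (i : ℕ) (x : ℝ) : ℝ := 1 / (i + 1 + x)

/-- The weight of the branch `i` in the transfer operator of the Gauss map, normalised by the
invariant density `1 / (1 + x)` so that constants are fixed. -/
noncomputable def gaussWeight (i : ℕ) (x : ℝ) : ℝ := (1 + x) / ((i + 1 + x) * (i + 2 + x))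

/-- The total weight `∑ j ≥ i, gaussWeight j x` of the branches from `i` onwards. -/
noncomputable def gaussTail (i : ℕ) (x : ℝ) : ℝ := (1 + x) / (i + 1 + x)

/-- The average of `c` for the Gauss weights at `x`, all the weight of the branches `i ≥ N` being
put on the branch `N`. -/
noncomputable def gaussAverage (N : ℕ) (c : ℕ → ℝ) (x : ℝ) : ℝ :=
  ∑ i ∈ Finset.range N, gaussWeight i x * c i + gaussTail N x * c N

/-- The transfer operator of the Gauss map, normalised by the invariant density and truncated at the
branch `N` in the sense of `gaussAverage`. -/
noncomputable def truncGaussOp (N : ℕ) (g : ℝ → ℝ) (x : ℝ) : ℝ :=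
  gaussAverage N (fun i => g (gaussBranch i x)) x

variable {x y : ℝ} {c d : ℕ → ℝ}

lemma gaussBranch_pos (i : ℕ) (hx : 0 ≤ x) : 0 < gaussBranch i x := by
  rw [gaussBranch]
  positivity

lemma gaussBranch_le_one (i : ℕ) (hx : 0 ≤ x) : gaussBranch i x ≤ 1 := by
  have : (0 : ℝ) ≤ i := i.cast_nonneg
  rw [gaussBranch, div_le_one (by positivity)]
  linarith

lemma gaussBranch_mem_unitInterval (i : ℕ) (hx : 0 ≤ x) : gaussBranch i x ∈ I :=
  ⟨(gaussBranch_pos i hx).le, gaussBranch_le_one i hx⟩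

lemma abs_gaussBranch_sub (i : ℕ) (hx : 0 ≤ x) (hy : 0 ≤ y) :
    |gaussBranch i x - gaussBranch i y| = |x - y| / ((i + 1 + x) * (i + 1 + y)) := by
  rw [gaussBranch, gaussBranch, div_sub_div _ _ (by positivity) (by positivity), abs_div,
    abs_of_pos (by positivity : 0 < (i + 1 + x) * (i + 1 + y)), abs_sub_comm x]
  ring_nf

lemma abs_gaussBranch_succ_sub (i : ℕ) (hx : 0 ≤ x) :
    |gaussBranch (i + 1) x - gaussBranch i x| = 1 / ((i + 1 + x) * (i + 2 + x)) := by
  have h : gaussBranch (i + 1) x - gaussBranch i x = -(1 / ((i + 1 + x) * (i + 2 + x))) := by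
    rw [gaussBranch, gaussBranch]
    push_cast
    have h1 : (i : ℝ) + 1 + 1 + x ≠ 0 := by positivity
    field_simp
    ring
  rw [h, abs_neg, abs_of_pos (by positivity)]

lemma gaussTail_nonneg (i : ℕ) (hx : 0 ≤ x) : 0 ≤ gaussTail i x := by
  rw [gaussTail]
  positivity

lemma gaussWeight_nonneg (i : ℕ) (hx : 0 ≤ x) : 0 ≤ gaussWeight i x := by
  rw [gaussWeight]
  positivity

lemma gaussTail_zero (hx : 0 ≤ x) : gaussTail 0 x = 1 := by
  rw [gaussTail, Nat.cast_zero, zero_add, div_self (by positivity)]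

lemma gaussWeight_eq_gaussTail_sub (i : ℕ) (hx : 0 ≤ x) :
    gaussWeight i x = gaussTail i x - gaussTail (i + 1) x := by
  rw [gaussWeight, gaussTail, gaussTail]
  push_cast
  have h : (i : ℝ) + 1 + 1 + x ≠ 0 := by positivity
  field_simp
  ring

lemma abs_gaussTail_succ_sub_le (i : ℕ) (hx : 0 ≤ x) (hy : 0 ≤ y) :
    |gaussTail (i + 1) x - gaussTail (i + 1) y| ≤ (i + 1) * |x - y| / (i + 2) ^ 2 := by
  have h : gaussTail (i + 1) x - gaussTail (i + 1) y
      = (i + 1) * (x - y) / ((i + 2 + x) * (i + 2 + y)) := by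
    rw [gaussTail, gaussTail]
    push_cast
    have h1 : (i : ℝ) + 1 + 1 + x ≠ 0 := by positivity
    have h2 : (i : ℝ) + 1 + 1 + y ≠ 0 := by positivity
    field_simp
    ring
  rw [h, abs_div, abs_mul, abs_of_pos (by positivity : (0 : ℝ) < i + 1),
    abs_of_pos (by positivity : 0 < (i + 2 + x) * (i + 2 + y)), pow_two]
  gcongr _ / (?_ * ?_) <;> linarith

lemma gaussAverage_eq_add_sum (N : ℕ) (c : ℕ → ℝ) (hx : 0 ≤ x) :
    gaussAverage N c x
      = c 0 + ∑ i ∈ Finset.range N, gaussTail (i + 1) x * (c (i + 1) - c i) := by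
  induction N with
  | zero => simp [gaussAverage, gaussTail_zero hx]
  | succ N ih =>
    rw [gaussAverage] at ih ⊢
    rw [Finset.sum_range_succ, Finset.sum_range_succ, ← add_assoc, ← ih,
      gaussWeight_eq_gaussTail_sub N hx]
    ring

lemma gaussAverage_const (N : ℕ) (b : ℝ) (hx : 0 ≤ x) : gaussAverage N (fun _ => b) x = b := by
  simp [gaussAverage_eq_add_sum N _ hx]

lemma gaussAverage_ite {N : ℕ} (hN : 1 ≤ N) (a b : ℝ) (hx : 0 ≤ x) :
    gaussAverage N (fun i => if i = 0 then a else b) x = a + gaussTail 1 x * (b - a) := by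
  obtain ⟨N, rfl⟩ := Nat.exists_eq_add_of_le' hN
  simp [gaussAverage_eq_add_sum _ _ hx, Finset.sum_range_succ']

lemma gaussAverage_add (N : ℕ) (c d : ℕ → ℝ) (x : ℝ) :
    gaussAverage N (fun i => c i + d i) x = gaussAverage N c x + gaussAverage N d x := by
  simp only [gaussAverage, mul_add, Finset.sum_add_distrib]
  ring

lemma gaussAverage_sub (N : ℕ) (c d : ℕ → ℝ) (x : ℝ) :
    gaussAverage N (fun i => c i - d i) x = gaussAverage N c x - gaussAverage N d x := by
  simp only [gaussAverage, mul_sub, Finset.sum_sub_distrib]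
  ring

lemma abs_gaussAverage_le (N : ℕ) (hx : 0 ≤ x) (h : ∀ i, |c i| ≤ d i) :
    |gaussAverage N c x| ≤ gaussAverage N d x := by
  refine (abs_add_le _ _).trans (add_le_add ((Finset.abs_sum_le_sum_abs _ _).trans ?_) ?_)
  · refine Finset.sum_le_sum fun i _ => ?_
    rw [abs_mul, abs_of_nonneg (gaussWeight_nonneg i hx)]
    exact mul_le_mul_of_nonneg_left (h i) (gaussWeight_nonneg i hx)
  · rw [abs_mul, abs_of_nonneg (gaussTail_nonneg N hx)]
    exact mul_le_mul_of_nonneg_left (h N) (gaussTail_nonneg N hx)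

lemma abs_gaussAverage_sub_gaussAverage_le (N : ℕ) (hx : 0 ≤ x) (hy : 0 ≤ y)
    (hd : ∀ i, |c (i + 1) - c i| ≤ d i / (i + 1)) :
    |gaussAverage N c x - gaussAverage N c y|
      ≤ |x - y| * ∑ i ∈ Finset.range N, d i / ((i : ℝ) + 2) ^ 2 := by
  rw [gaussAverage_eq_add_sum N c hx, gaussAverage_eq_add_sum N c hy, add_sub_add_left_eq_sub,
    ← Finset.sum_sub_distrib, Finset.mul_sum]
  refine (Finset.abs_sum_le_sum_abs _ _).trans (Finset.sum_le_sum fun i _ => ?_)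
  rw [← sub_mul, abs_mul]
  calc _ ≤ ((i + 1) * |x - y| / (i + 2) ^ 2) * (d i / (i + 1)) := by
        gcongr
        · exact abs_gaussTail_succ_sub_le i hx hy
        · exact hd i
    _ = |x - y| * (d i / (i + 2) ^ 2) := by field_simp

lemma abs_truncGaussOp_le (N : ℕ) {g : ℝ → ℝ} {K : ℝ} (hg : ∀ x ∈ I, |g x| ≤ K) (hx : 0 ≤ x) :
    |truncGaussOp N g x| ≤ K :=
  (abs_gaussAverage_le N hx fun i => hg _ (gaussBranch_mem_unitInterval i hx)).trans_eq
    (gaussAverage_const N K hx)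

end TruncatedGauss

section Contraction

open scoped NNReal

variable {x y : ℝ} {g : ℝ → ℝ} {K : ℝ≥0} {N : ℕ}

lemma sum_range_le_of_le_sub {a f : ℕ → ℝ} (hf : ∀ i, 0 ≤ f i) (h : ∀ i, a i ≤ f i - f (i + 1))
    (N : ℕ) : ∑ i ∈ Finset.range N, a i ≤ f 0 :=
  calc ∑ i ∈ Finset.range N, a i ≤ ∑ i ∈ Finset.range N, (f i - f (i + 1)) :=
        Finset.sum_le_sum fun i _ => h i
    _ = f 0 - f N := Finset.sum_range_sub' f N
    _ ≤ f 0 := sub_le_self _ (hf N)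

lemma sum_range_one_div_add_two_sq_le (N : ℕ) :
    ∑ i ∈ Finset.range N, 1 / ((i : ℝ) + 2) ^ 2 ≤ 1 := by
  refine (sum_range_le_of_le_sub (f := fun i : ℕ => 1 / ((i : ℝ) + 1)) (fun i => by positivity)
    (fun i => ?_) N).trans_eq (by norm_num)
  have h : 1 / ((i : ℝ) + 1) - 1 / ((i + 1 : ℕ) + 1) = 1 / ((i + 1) * (i + 2)) := by
    push_cast
    field_simp
    ring
  rw [h]
  gcongr
  nlinarith

lemma sum_range_one_div_add_two_cube_le (N : ℕ) :
    ∑ i ∈ Finset.range N, 1 / ((i : ℝ) + 2) ^ 3 ≤ 1 / 4 := by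
  refine (sum_range_le_of_le_sub (f := fun i : ℕ => 1 / (2 * ((i : ℝ) + 1) * (i + 2)))
    (fun i => by positivity) (fun i => ?_) N).trans_eq (by norm_num)
  have h : 1 / (2 * ((i : ℝ) + 1) * (i + 2)) - 1 / (2 * ((i + 1 : ℕ) + 1) * ((i + 1 : ℕ) + 2))
      = 1 / ((i + 1) * (i + 2) * (i + 3)) := by
    push_cast
    have h1 : (i : ℝ) + 1 + 2 ≠ 0 := by positivity
    field_simp
    ring
  rw [h]
  gcongr
  nlinarith [(i.cast_nonneg : (0 : ℝ) ≤ i)]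

lemma abs_comp_gaussBranch_sub_le (hg : LipschitzOnWith K g I) (i : ℕ) (hx : 0 ≤ x)
    (hy : 0 ≤ y) :
    |g (gaussBranch i x) - g (gaussBranch i y)|
      ≤ if i = 0 then K * |x - y| else K * |x - y| / 4 := by
  refine (hg.dist_le_mul _ (gaussBranch_mem_unitInterval i hx) _
    (gaussBranch_mem_unitInterval i hy)).trans ?_
  rw [Real.dist_eq, abs_gaussBranch_sub i hx hy]
  split_ifs with hi
  · gcongr
    refine div_le_self (abs_nonneg _) ?_
    subst hi
    push_cast
    nlinarith
  · have hi1 : (1 : ℝ) ≤ i := mod_cast Nat.one_le_iff_ne_zero.2 hi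
    rw [mul_div_assoc]
    gcongr
    nlinarith

lemma abs_comp_gaussBranch_succ_sub_le (hg : LipschitzOnWith K g I) (i : ℕ) (hx : 0 ≤ x) :
    |g (gaussBranch (i + 1) x) - g (gaussBranch i x)| ≤ K / (i + 2) / (i + 1) := by
  refine (hg.dist_le_mul _ (gaussBranch_mem_unitInterval _ hx) _
    (gaussBranch_mem_unitInterval i hx)).trans ?_
  rw [Real.dist_eq, abs_gaussBranch_succ_sub i hx, mul_one_div, div_div]
  gcongr _ / ?_
  nlinarith [(i.cast_nonneg : (0 : ℝ) ≤ i)]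

lemma truncGaussOp_lipschitzOnWith (hN : 1 ≤ N) (hg : LipschitzOnWith K g I) :
    LipschitzOnWith (7 / 8 * K) (truncGaussOp N g) I := by
  refine LipschitzOnWith.of_dist_le_mul fun x hx y hy => ?_
  rw [Real.dist_eq, Real.dist_eq]
  have hvalues : |gaussAverage N (fun i => g (gaussBranch i x)) x
      - gaussAverage N (fun i => g (gaussBranch i y)) x| ≤ 5 / 8 * (K * |x - y|) := by
    rw [← gaussAverage_sub]
    refine (abs_gaussAverage_le N hx.1 fun i =>
      abs_comp_gaussBranch_sub_le hg i hx.1 hy.1).trans ?_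
    rw [gaussAverage_ite hN _ _ hx.1]
    have htail : 1 / 2 ≤ gaussTail 1 x := by
      rw [gaussTail, Nat.cast_one, le_div_iff₀ (by linarith [hx.1])]
      linarith [hx.1]
    have hK : 0 ≤ K * |x - y| := by positivity
    nlinarith
  have hweights : |gaussAverage N (fun i => g (gaussBranch i y)) x
      - gaussAverage N (fun i => g (gaussBranch i y)) y| ≤ 1 / 4 * (K * |x - y|) := by
    refine (abs_gaussAverage_sub_gaussAverage_le N hx.1 hy.1 fun i =>
      abs_comp_gaussBranch_succ_sub_le hg i hy.1).trans ?_
    calc |x - y| * ∑ i ∈ Finset.range N, (K : ℝ) / (i + 2) / (i + 2) ^ 2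
        = K * |x - y| * ∑ i ∈ Finset.range N, 1 / ((i : ℝ) + 2) ^ 3 := by
          simp only [Finset.mul_sum]
          refine Finset.sum_congr rfl fun i _ => ?_
          field_simp
      _ ≤ K * |x - y| * (1 / 4) := by
          gcongr
          exact sum_range_one_div_add_two_cube_le N
      _ = 1 / 4 * (K * |x - y|) := mul_comm _ _
  refine (abs_sub_le _ (gaussAverage N (fun i => g (gaussBranch i y)) x) _).trans
    ((add_le_add hvalues hweights).trans_eq ?_)
  push_cast
  ring

lemma abs_log_sub_log_le {a b k : ℝ} (hk : 0 < k) (ha : k ≤ a) (hb : k ≤ b) :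
    |Real.log a - Real.log b| ≤ |a - b| / k := by
  wlog hab : b ≤ a generalizing a b
  · rw [abs_sub_comm, abs_sub_comm a]
    exact this hb ha (le_of_not_ge hab)
  have hb0 := hk.trans_le hb
  have ha0 := hk.trans_le ha
  rw [abs_of_nonneg (sub_nonneg.2 (Real.log_le_log hb0 hab)), abs_of_nonneg (sub_nonneg.2 hab),
    ← Real.log_div ha0.ne' hb0.ne']
  calc Real.log (a / b) ≤ a / b - 1 := Real.log_le_sub_one_of_pos (div_pos ha0 hb0)
    _ = (a - b) / b := by rw [sub_div, div_self hb0.ne']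
    _ ≤ (a - b) / k := div_le_div_of_nonneg_left (sub_nonneg.2 hab) hk hb

lemma log_gaussBranch (i : ℕ) (x : ℝ) : Real.log (gaussBranch i x) = -Real.log (i + 1 + x) := by
  rw [gaussBranch, one_div, Real.log_inv]

lemma abs_log_gaussBranch_sub_le (i : ℕ) (hx : 0 ≤ x) (hy : 0 ≤ y) :
    |-Real.log (gaussBranch i x) - -Real.log (gaussBranch i y)| ≤ |x - y| := by
  have : (0 : ℝ) ≤ i := i.cast_nonneg
  rw [log_gaussBranch, log_gaussBranch, neg_neg, neg_neg]
  simpa using abs_log_sub_log_le one_pos (by linarith : 1 ≤ i + 1 + x)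
    (by linarith : 1 ≤ i + 1 + y)

lemma abs_log_gaussBranch_succ_sub_le (i : ℕ) (hx : 0 ≤ x) :
    |-Real.log (gaussBranch (i + 1) x) - -Real.log (gaussBranch i x)| ≤ 1 / (i + 1) := by
  rw [log_gaussBranch, log_gaussBranch, neg_neg, neg_neg]
  push_cast
  refine (abs_log_sub_log_le (k := (i : ℝ) + 1) (by positivity) (by linarith)
    (by linarith)).trans_eq ?_
  ring_nf
  rw [abs_one, one_mul]

lemma truncGaussOp_neg_log_lipschitzOnWith (N : ℕ) :
    LipschitzOnWith 2 (truncGaussOp N fun y => -Real.log y) I := by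
  refine LipschitzOnWith.of_dist_le_mul fun x hx y hy => ?_
  rw [Real.dist_eq, Real.dist_eq]
  have hvalues : |gaussAverage N (fun i => -Real.log (gaussBranch i x)) x
      - gaussAverage N (fun i => -Real.log (gaussBranch i y)) x| ≤ |x - y| := by
    rw [← gaussAverage_sub]
    exact (abs_gaussAverage_le N hx.1 fun i => abs_log_gaussBranch_sub_le i hx.1 hy.1).trans_eq
      (gaussAverage_const N _ hx.1)
  have hweights : |gaussAverage N (fun i => -Real.log (gaussBranch i y)) x
      - gaussAverage N (fun i => -Real.log (gaussBranch i y)) y| ≤ |x - y| :=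
    (abs_gaussAverage_sub_gaussAverage_le N hx.1 hy.1 fun i =>
      abs_log_gaussBranch_succ_sub_le i hy.1).trans
      (mul_le_of_le_one_right (abs_nonneg _) (sum_range_one_div_add_two_sq_le N))
  refine (abs_sub_le _ (gaussAverage N (fun i => -Real.log (gaussBranch i y)) x) _).trans
    ((add_le_add hvalues hweights).trans_eq ?_)
  push_cast
  ring

end Contraction

section LogIntegral

lemma intervalIntegrable_neg_log : IntervalIntegrable (fun y => -Real.log y) volume 0 1 :=
  intervalIntegral.intervalIntegrable_log'.neg

lemma integral_pow_mul_neg_log (n : ℕ) :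
    ∫ y in (0 : ℝ)..1, y ^ n * -Real.log y = 1 / ((n : ℝ) + 1) ^ 2 := by
  rw [intervalIntegral.integral_eq_sub_of_hasDerivAt_of_le zero_le_one
    (f := fun y => y ^ (n + 1) / ((n : ℝ) + 1) ^ 2 - y ^ n * (y * Real.log y) / (n + 1))]
  · simp
  · have := Real.continuous_mul_log
    fun_prop
  · intro y hy
    have hy0 : y ≠ 0 := hy.1.ne'
    refine (((hasDerivAt_pow (n + 1) y).div_const (((n : ℝ) + 1) ^ 2)).sub
      (((hasDerivAt_pow n y).mul (Real.hasDerivAt_mul_log hy0)).div_const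
        ((n : ℝ) + 1))).congr_deriv ?_
    rcases n with _ | n
    · simp
    · push_cast
      field_simp
      ring
  · exact intervalIntegrable_neg_log.continuousOn_mul (by fun_prop)

lemma hasSum_neg_one_pow_div_add_one_sq :
    HasSum (fun n : ℕ => (-1) ^ n / ((n : ℝ) + 1) ^ 2) (Real.pi ^ 2 / 12) := by
  have hcos : HasSum (fun n : ℕ => 1 / (n : ℝ) ^ 2 * (-1) ^ n) (-(Real.pi ^ 2 / 12)) := by
    convert hasSum_one_div_nat_pow_mul_cos one_ne_zero (x := 1 / 2) (by norm_num) using 1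
    · ext n
      rw [mul_one, show 2 * Real.pi * n * (1 / 2) = n * Real.pi by ring, Real.cos_nat_mul_pi]
    · change _ = _ * bernoulliFun 2 (1 / 2)
      rw [bernoulliFun_two]
      norm_num
      ring
  have hshift := ((hasSum_nat_add_iff' 1).2 hcos).neg
  rw [Finset.sum_range_one, Nat.cast_zero, zero_pow two_ne_zero, div_zero, zero_mul, sub_zero,
    neg_neg] at hshift
  refine hshift.congr_fun fun n => ?_
  rw [pow_succ]
  push_cast
  ring

lemma integral_neg_log_div_one_add :
    ∫ y in (0 : ℝ)..1, -Real.log y / (1 + y) = Real.pi ^ 2 / 12 := by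
  set F : ℕ → ℝ → ℝ := fun n y => (-1) ^ n * (y ^ n * -Real.log y)
  have hF (n : ℕ) : IntervalIntegrable (F n) volume 0 1 :=
    (intervalIntegrable_neg_log.continuousOn_mul (by fun_prop)).const_mul _
  have hint (n : ℕ) : ∫ y in (0 : ℝ)..1, F n y = (-1) ^ n / ((n : ℝ) + 1) ^ 2 := by
    rw [intervalIntegral.integral_const_mul, integral_pow_mul_neg_log, mul_one_div]
  have hnorm (n : ℕ) : ∫ y in Set.Ioo (0 : ℝ) 1, ‖F n y‖ = 1 / ((n : ℝ) + 1) ^ 2 := by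
    rw [← integral_pow_mul_neg_log, intervalIntegral.integral_of_le zero_le_one,
      integral_Ioc_eq_integral_Ioo]
    refine setIntegral_congr_fun measurableSet_Ioo fun y hy => ?_
    have := Real.log_nonpos hy.1.le hy.2.le
    have := hy.1
    rw [norm_mul, norm_pow, norm_neg, norm_one, one_pow, one_mul, Real.norm_eq_abs, abs_of_nonneg]
    exact mul_nonneg (by positivity) (by linarith)
  have hgeom : ∀ y ∈ Set.Ioo (0 : ℝ) 1, ∑' n, F n y = -Real.log y / (1 + y) := fun y hy => by
    have h := (hasSum_geometric_of_abs_lt_one (r := -y)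
      (by rw [abs_neg, abs_of_pos hy.1]; exact hy.2)).mul_right (-Real.log y)
    rw [sub_neg_eq_add, inv_mul_eq_div] at h
    refine (h.congr_fun fun n => ?_).tsum_eq
    rw [neg_pow y, mul_assoc]
  have hsum := hasSum_integral_of_summable_integral_norm (μ := volume.restrict (Set.Ioo 0 1))
    (F := F) (fun n => ((intervalIntegrable_iff_integrableOn_Ioo_of_le zero_le_one).1 (hF n)))
    (by
      simp only [hnorm, ← Nat.cast_add_one]
      exact (summable_nat_add_iff 1).2 (Real.summable_one_div_nat_pow.2 one_lt_two))
  rw [setIntegral_congr_fun measurableSet_Ioo hgeom] at hsum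
  simp only [← integral_Ioc_eq_integral_Ioo, ← intervalIntegral.integral_of_le zero_le_one, hint]
    at hsum
  exact hsum.unique hasSum_neg_one_pow_div_add_one_sq

lemma tendsto_integral_neg_log_div_one_add :
    Tendsto (fun N : ℕ => ∫ y in 1 / ((N : ℝ) + 1)..1, -Real.log y / (1 + y)) atTop
      (nhds (Real.pi ^ 2 / 12)) := by
  have hint : IntervalIntegrable (fun y => -Real.log y / (1 + y)) volume 0 1 := by
    simp only [div_eq_mul_inv]
    refine intervalIntegrable_neg_log.mul_continuousOn (ContinuousOn.inv₀ (by fun_prop) ?_)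
    rw [Set.uIcc_of_le zero_le_one]
    intro y hy
    linarith [hy.1]
  rw [intervalIntegrable_iff_integrableOn_Icc_of_le zero_le_one,
    ← Set.uIcc_of_le zero_le_one] at hint
  have hcont := intervalIntegral.continuousOn_primitive_interval_left hint 0 Set.left_mem_uIcc
  rw [ContinuousWithinAt, integral_neg_log_div_one_add] at hcont
  refine hcont.comp (tendsto_nhdsWithin_iff.2
    ⟨tendsto_one_div_add_atTop_nhds_zero_nat, Eventually.of_forall fun N => ?_⟩)
  rw [Set.uIcc_of_le zero_le_one]
  exact ⟨by positivity, div_le_one_of_le₀ (by simp) (by positivity)⟩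

end LogIntegral

section GaussIntegral

open scoped NNReal

/-- The integral over `[0, 1]` against the (unnormalised) Gauss measure `dx / (1 + x)`. -/
noncomputable def gaussIntegral (g : ℝ → ℝ) : ℝ := ∫ x in (0 : ℝ)..1, g x / (1 + x)

variable {g : ℝ → ℝ} {a b : ℝ}

lemma intervalIntegrable_div_one_add (hab : Set.uIcc a b ⊆ I)
    (hg : ContinuousOn g (Set.uIcc a b)) :
    IntervalIntegrable (fun x => g x / (1 + x)) volume a b :=
  (hg.div (by fun_prop) fun x hx => by linarith [(hab hx).1]).intervalIntegrable

lemma continuousOn_gaussBranch (i : ℕ) : ContinuousOn (gaussBranch i) I :=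
  continuousOn_const.div (by fun_prop) fun x hx => by have := hx.1; positivity

lemma continuousOn_gaussWeight (i : ℕ) : ContinuousOn (gaussWeight i) I :=
  ContinuousOn.div (by fun_prop) (by fun_prop) fun x hx => by have := hx.1; positivity

lemma mapsTo_gaussBranch (i : ℕ) : Set.MapsTo (gaussBranch i) I (Set.Ioc 0 1) :=
  fun _ hx => ⟨gaussBranch_pos i hx.1, gaussBranch_le_one i hx.1⟩

lemma hasDerivAt_gaussBranch (i : ℕ) {x : ℝ} (hx : 0 ≤ x) :
    HasDerivAt (gaussBranch i) (-(1 / (i + 1 + x) ^ 2)) x := by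
  unfold gaussBranch
  simp only [one_div]
  have hpos : (i : ℝ) + 1 + x ≠ 0 := by positivity
  exact (((hasDerivAt_id x).const_add ((i : ℝ) + 1)).inv hpos).congr_deriv (by simp [neg_div])

lemma integral_gaussWeight_mul_comp_gaussBranch (hg : ContinuousOn g (Set.Ioc 0 1)) (i : ℕ) :
    ∫ x in (0 : ℝ)..1, gaussWeight i x * g (gaussBranch i x) / (1 + x)
      = ∫ y in 1 / ((i : ℝ) + 2)..1 / ((i : ℝ) + 1), g y / (1 + y) := by
  have hsubst := intervalIntegral.integral_comp_mul_deriv' (a := 0) (b := 1)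
    (f' := fun x => -(1 / ((i : ℝ) + 1 + x) ^ 2)) (g := fun y => g y / (1 + y))
    (fun x hx => hasDerivAt_gaussBranch i (by rw [Set.uIcc_of_le zero_le_one] at hx; exact hx.1))
    (by
      rw [Set.uIcc_of_le zero_le_one]
      exact (continuousOn_const.div (by fun_prop)
        fun x hx => by have := hx.1; positivity).neg)
    (by
      rw [Set.uIcc_of_le zero_le_one]
      have hsub := (mapsTo_gaussBranch i).image_subset
      exact (hg.mono hsub).div (by fun_prop) fun y hy => by linarith [(hsub hy).1])
  have hone : gaussBranch i 1 = 1 / (i + 2) := by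
    rw [gaussBranch]
    ring_nf
  have hzero : gaussBranch i 0 = 1 / (i + 1) := by
    rw [gaussBranch, add_zero]
  rw [hzero, hone] at hsubst
  rw [intervalIntegral.integral_symm (1 / ((i : ℝ) + 1)), ← hsubst,
    ← intervalIntegral.integral_neg]
  refine intervalIntegral.integral_congr fun x hx => ?_
  rw [Set.uIcc_of_le zero_le_one] at hx
  have hx0 := hx.1
  have hadd : 1 + gaussBranch i x = (i + 2 + x) / (i + 1 + x) := by
    rw [gaussBranch]
    field_simp
    ring
  simp only [Function.comp, hadd, gaussWeight]
  field_simp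

lemma one_div_add_one_mem_Ioc (n : ℕ) : 1 / ((n : ℝ) + 1) ∈ Set.Ioc (0 : ℝ) 1 :=
  ⟨by positivity, div_le_one_of_le₀ (by simp) (by positivity)⟩

lemma sum_integral_gaussWeight_mul_comp_gaussBranch (hg : ContinuousOn g (Set.Ioc 0 1)) (N : ℕ) :
    ∑ i ∈ Finset.range N, ∫ x in (0 : ℝ)..1, gaussWeight i x * g (gaussBranch i x) / (1 + x)
      = ∫ y in 1 / ((N : ℝ) + 1)..1, g y / (1 + y) := by
  have hint {a b : ℝ} (ha : a ∈ Set.Ioc (0 : ℝ) 1) (hb : b ∈ Set.Ioc (0 : ℝ) 1) :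
      IntervalIntegrable (fun x => g x / (1 + x)) volume a b :=
    have hsub := Set.OrdConnected.uIcc_subset Set.ordConnected_Ioc ha hb
    intervalIntegrable_div_one_add (hsub.trans Set.Ioc_subset_Icc_self) (hg.mono hsub)
  induction N with
  | zero => simp
  | succ N ih =>
    have hN := one_div_add_one_mem_Ioc (N + 1)
    push_cast at hN ⊢
    rw [add_assoc, one_add_one_eq_two] at hN ⊢
    rw [Finset.sum_range_succ, ih, integral_gaussWeight_mul_comp_gaussBranch hg, add_comm]
    exact intervalIntegral.integral_add_adjacent_intervals
      (hint hN (one_div_add_one_mem_Ioc N)) (hint (one_div_add_one_mem_Ioc N) (by simp))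

lemma gaussIntegral_truncGaussOp (hg : ContinuousOn g (Set.Ioc 0 1)) (N : ℕ) :
    gaussIntegral (truncGaussOp N g)
      = (∫ y in 1 / ((N : ℝ) + 1)..1, g y / (1 + y))
        + ∫ x in (0 : ℝ)..1, g (gaussBranch N x) / (N + 1 + x) := by
  have hcomp (i : ℕ) : ContinuousOn (fun x => g (gaussBranch i x)) I :=
    hg.comp (continuousOn_gaussBranch i) (mapsTo_gaussBranch i)
  have hbranch (i : ℕ) : IntervalIntegrable
      (fun x => gaussWeight i x * g (gaussBranch i x) / (1 + x)) volume 0 1 := by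
    refine intervalIntegrable_div_one_add ?_ ?_ <;>
      rw [Set.uIcc_of_le zero_le_one]
    exact (continuousOn_gaussWeight i).mul (hcomp i)
  have hbranches : IntervalIntegrable (fun x => ∑ i ∈ Finset.range N,
      gaussWeight i x * g (gaussBranch i x) / (1 + x)) volume 0 1 := by
    simpa only [Finset.sum_fn] using
      IntervalIntegrable.sum (Finset.range N) fun i _ => hbranch i
  have htail : IntervalIntegrable
      (fun x => g (gaussBranch N x) / (N + 1 + x)) volume 0 1 := by
    refine ContinuousOn.intervalIntegrable ?_
    rw [Set.uIcc_of_le zero_le_one]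
    exact (hcomp N).div (by fun_prop) fun x hx => by have := hx.1; positivity
  rw [← sum_integral_gaussWeight_mul_comp_gaussBranch hg,
    ← intervalIntegral.integral_finsetSum fun i _ => hbranch i,
    ← intervalIntegral.integral_add hbranches htail]
  refine intervalIntegral.integral_congr fun x hx => ?_
  rw [Set.uIcc_of_le zero_le_one] at hx
  have hx0 := hx.1
  simp only [truncGaussOp, gaussAverage, gaussTail, Finset.sum_div, add_div]
  congr 1
  field_simp

lemma abs_gaussIntegral_truncGaussOp_sub_le (hg : ContinuousOn g I) {K : ℝ}
    (hK : ∀ x ∈ I, |g x| ≤ K) (N : ℕ) :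
    |gaussIntegral (truncGaussOp N g) - gaussIntegral g| ≤ 2 * K / (N + 1) := by
  have hK0 : 0 ≤ K := (abs_nonneg _).trans (hK 0 unitInterval.zero_mem)
  have hN := Set.Ioc_subset_Icc_self (one_div_add_one_mem_Ioc N)
  have hint {a b : ℝ} (ha : a ∈ I) (hb : b ∈ I) :
      IntervalIntegrable (fun x => g x / (1 + x)) volume a b :=
    have hsub := Set.OrdConnected.uIcc_subset Set.ordConnected_Icc ha hb
    intervalIntegrable_div_one_add hsub (hg.mono hsub)
  have hhead : |∫ y in 0..1 / ((N : ℝ) + 1), g y / (1 + y)| ≤ K / (N + 1) := by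
    have h := intervalIntegral.norm_integral_le_of_norm_le_const (a := 0) (b := 1 / ((N : ℝ) + 1))
      (f := fun y => g y / (1 + y)) (C := K) fun y hy => by
        rw [Set.uIoc_of_le hN.1] at hy
        have hy0 := hy.1
        rw [norm_div, Real.norm_of_nonneg (by positivity : 0 ≤ 1 + y)]
        exact (div_le_self (norm_nonneg _) (by linarith)).trans (hK y ⟨hy0.le, hy.2.trans hN.2⟩)
    rwa [sub_zero, abs_of_nonneg hN.1, mul_one_div] at h
  have htail : |∫ x in (0 : ℝ)..1, g (gaussBranch N x) / (N + 1 + x)| ≤ K / (N + 1) := by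
    have h := intervalIntegral.norm_integral_le_of_norm_le_const (a := 0) (b := 1)
      (f := fun x => g (gaussBranch N x) / (N + 1 + x)) (C := K / (N + 1)) fun x hx => by
        rw [Set.uIoc_of_le zero_le_one] at hx
        have hx0 := hx.1
        rw [norm_div, Real.norm_of_nonneg (by positivity : 0 ≤ (N : ℝ) + 1 + x)]
        exact div_le_div₀ hK0 (hK _ (gaussBranch_mem_unitInterval N hx0.le)) (by positivity)
          (by linarith)
    rwa [sub_zero, abs_one, mul_one] at h
  rw [gaussIntegral_truncGaussOp (hg.mono Set.Ioc_subset_Icc_self), gaussIntegral,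
    ← intervalIntegral.integral_add_adjacent_intervals (hint unitInterval.zero_mem hN)
      (hint hN unitInterval.one_mem), add_comm (∫ y in 0..1 / ((N : ℝ) + 1), _),
    add_sub_add_left_eq_sub, mul_div_assoc, two_mul]
  exact (abs_sub _ _).trans (add_le_add htail hhead)

lemma tendsto_log_add_two_pow_div_atTop (k : ℕ) :
    Tendsto (fun N : ℕ => Real.log (N + 2) ^ k / N) atTop (nhds 0) := by
  have hlog : (fun N : ℕ => Real.log (N + 2) ^ k) =o[atTop] fun N : ℕ => (N : ℝ) + 2 :=
    Real.isLittleO_pow_log_id_atTop.comp_tendsto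
      (tendsto_atTop_add_const_right _ 2 tendsto_natCast_atTop_atTop)
  refine (hlog.trans_isBigO (Asymptotics.IsBigO.of_bound 3 ?_)).tendsto_div_nhds_zero
  filter_upwards [eventually_ge_atTop 1] with N hN
  have hN1 : (1 : ℝ) ≤ N := mod_cast hN
  rw [Real.norm_of_nonneg (by positivity), Real.norm_of_nonneg (by positivity)]
  linarith

lemma abs_integral_neg_log_comp_gaussBranch_le {N : ℕ} (hN : 1 ≤ N) :
    |∫ x in (0 : ℝ)..1, -Real.log (gaussBranch N x) / (N + 1 + x)| ≤ Real.log (N + 2) / N := by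
  have hN1 : (1 : ℝ) ≤ N := mod_cast hN
  have h := intervalIntegral.norm_integral_le_of_norm_le_const (a := 0) (b := 1)
    (f := fun x => -Real.log (gaussBranch N x) / (N + 1 + x)) (C := Real.log (N + 2) / N)
    fun x hx => by
      rw [Set.uIoc_of_le zero_le_one] at hx
      have hlog : 0 ≤ Real.log (N + 1 + x) := Real.log_nonneg (by linarith [hx.1])
      rw [log_gaussBranch, neg_neg, norm_div, Real.norm_of_nonneg hlog,
        Real.norm_of_nonneg (by linarith [hx.1])]
      exact div_le_div₀ (Real.log_nonneg (by linarith))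
        (Real.log_le_log (by linarith [hx.1]) (by linarith [hx.2])) (by positivity)
        (by linarith [hx.1])
  rwa [sub_zero, abs_one, mul_one] at h

lemma tendsto_gaussIntegral_truncGaussOp_neg_log :
    Tendsto (fun N => gaussIntegral (truncGaussOp N fun y => -Real.log y)) atTop
      (nhds (Real.pi ^ 2 / 12)) := by
  have hcont : ContinuousOn (fun y => -Real.log y) (Set.Ioc 0 1) :=
    (Real.continuousOn_log.mono fun y hy => hy.1.ne').neg
  simp only [gaussIntegral_truncGaussOp hcont]
  rw [← add_zero (Real.pi ^ 2 / 12)]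
  refine tendsto_integral_neg_log_div_one_add.add (squeeze_zero_norm' ?_
    (by simpa only [pow_one] using tendsto_log_add_two_pow_div_atTop 1))
  filter_upwards [eventually_ge_atTop 1] with N hN using abs_integral_neg_log_comp_gaussBranch_le hN

lemma gaussIntegral_const (b : ℝ) : gaussIntegral (fun _ => b) = b * Real.log 2 := by
  simp only [gaussIntegral, div_eq_mul_inv]
  rw [intervalIntegral.integral_const_mul,
    intervalIntegral.integral_comp_add_left (fun x : ℝ => x⁻¹) 1,
    integral_inv_of_pos (by norm_num) (by norm_num)]
  norm_num

lemma abs_sub_gaussIntegral_div_log_two_le {L : ℝ≥0} (hg : LipschitzOnWith L g I) {x : ℝ}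
    (hx : x ∈ I) : |g x - gaussIntegral g / Real.log 2| ≤ L := by
  have hlog : 0 < Real.log 2 := Real.log_pos one_lt_two
  have hint {f : ℝ → ℝ} (hf : ContinuousOn f I) :
      IntervalIntegrable (fun x => f x / (1 + x)) volume 0 1 := by
    refine intervalIntegrable_div_one_add ?_ ?_ <;> rw [Set.uIcc_of_le zero_le_one]
    exact hf
  have hdiff : |gaussIntegral (fun _ => g x) - gaussIntegral g| ≤ L * Real.log 2 := by
    rw [gaussIntegral, gaussIntegral, ← intervalIntegral.integral_sub (hint continuousOn_const)
      (hint hg.continuousOn), ← gaussIntegral_const]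
    refine intervalIntegral.norm_integral_le_of_norm_le (E := ℝ) zero_le_one
      (Eventually.of_forall fun y hy => ?_) (hint continuousOn_const)
    have hy0 := hy.1
    rw [← sub_div, norm_div, Real.norm_of_nonneg (by positivity : 0 ≤ 1 + y)]
    gcongr
    refine (hg.dist_le_mul x hx y (Set.Ioc_subset_Icc_self hy)).trans
      (mul_le_of_le_one_right L.2 ?_)
    rw [Real.dist_eq, abs_sub_le_iff]
    constructor <;> linarith [hx.1, hx.2, hy.1, hy.2]
  rw [gaussIntegral_const] at hdiff
  rwa [← mul_le_mul_iff_left₀ hlog, ← abs_of_pos hlog, ← abs_mul, abs_of_pos hlog, sub_mul,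
    div_mul_cancel₀ _ hlog.ne']

end GaussIntegral

section PoissonEquation

open scoped NNReal

variable {g : ℝ → ℝ} {L : ℝ≥0} {N : ℕ}

lemma iterate_truncGaussOp_lipschitzOnWith (hN : 1 ≤ N) (hg : LipschitzOnWith L g I) (n : ℕ) :
    LipschitzOnWith ((7 / 8) ^ n * L) ((truncGaussOp N)^[n] g) I := by
  induction n with
  | zero => simpa using hg
  | succ n ih =>
    rw [Function.iterate_succ_apply', pow_succ', mul_assoc]
    exact truncGaussOp_lipschitzOnWith hN ih

lemma abs_iterate_truncGaussOp_le (N : ℕ) {K : ℝ} (hK : ∀ x ∈ I, |g x| ≤ K) (n : ℕ) :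
    ∀ x ∈ I, |(truncGaussOp N)^[n] g x| ≤ K := by
  induction n with
  | zero => exact hK
  | succ n ih =>
    rw [Function.iterate_succ_apply']
    exact fun x hx => abs_truncGaussOp_le N ih hx.1

lemma abs_gaussIntegral_iterate_truncGaussOp_sub_le (hN : 1 ≤ N) (hg : LipschitzOnWith L g I)
    {K : ℝ} (hK : ∀ x ∈ I, |g x| ≤ K) (n : ℕ) :
    |gaussIntegral ((truncGaussOp N)^[n] g) - gaussIntegral g| ≤ n * (2 * K / (N + 1)) := by
  induction n with
  | zero => simp
  | succ n ih =>
    rw [Function.iterate_succ_apply', Nat.cast_succ, add_one_mul, add_comm]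
    exact (abs_sub_le _ _ _).trans (add_le_add (abs_gaussIntegral_truncGaussOp_sub_le
      (iterate_truncGaussOp_lipschitzOnWith hN hg n).continuousOn
      (abs_iterate_truncGaussOp_le N hK n) N) ih)

/-- The partial sum `∑ k < n, P ^ k g` of the Neumann series for the equation `g + P u - u = 0`,
where `P = truncGaussOp N`. -/
noncomputable def neumannSum (N n : ℕ) (g : ℝ → ℝ) (x : ℝ) : ℝ :=
  ∑ k ∈ Finset.range n, (truncGaussOp N)^[k] g x

lemma add_truncGaussOp_neumannSum_sub (N n : ℕ) (g : ℝ → ℝ) {x : ℝ} (hx : 0 ≤ x) :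
    g x + truncGaussOp N (neumannSum N n g) x - neumannSum N n g x
      = (truncGaussOp N)^[n] g x := by
  induction n with
  | zero =>
    have hzero : truncGaussOp N (neumannSum N 0 g) x = 0 := gaussAverage_const N 0 hx
    rw [hzero, neumannSum, Finset.sum_range_zero, add_zero, sub_zero]
    rfl
  | succ n ih =>
    have hop : truncGaussOp N (neumannSum N (n + 1) g) x
        = truncGaussOp N (neumannSum N n g) x + (truncGaussOp N)^[n + 1] g x := by
      rw [Function.iterate_succ_apply']
      simp only [truncGaussOp, ← gaussAverage_add, neumannSum, Finset.sum_range_succ]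
    have hsum : neumannSum N (n + 1) g x = neumannSum N n g x + (truncGaussOp N)^[n] g x :=
      Finset.sum_range_succ _ n
    rw [hop, hsum]
    linarith

lemma abs_neumannSum_le (N n : ℕ) {K : ℝ} (hK : ∀ x ∈ I, |g x| ≤ K) {x : ℝ} (hx : x ∈ I) :
    |neumannSum N n g x| ≤ n * K := by
  refine (Finset.abs_sum_le_sum_abs _ _).trans ((Finset.sum_le_card_nsmul _ _ K fun k _ =>
    abs_iterate_truncGaussOp_le N hK k x hx).trans_eq ?_)
  rw [Finset.card_range, nsmul_eq_mul]

lemma abs_iterate_truncGaussOp_sub_le (hN : 1 ≤ N) (hg : LipschitzOnWith L g I)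
    {K : ℝ} (hK : ∀ x ∈ I, |g x| ≤ K) (n : ℕ) {x : ℝ} (hx : x ∈ I) :
    |(truncGaussOp N)^[n] g x - gaussIntegral g / Real.log 2|
      ≤ (7 / 8) ^ n * L + n * (2 * K / (N + 1)) / Real.log 2 := by
  refine (abs_sub_le _ (gaussIntegral ((truncGaussOp N)^[n] g) / Real.log 2) _).trans
    (add_le_add ?_ ?_)
  · exact_mod_cast
      abs_sub_gaussIntegral_div_log_two_le (iterate_truncGaussOp_lipschitzOnWith hN hg n) hx
  · have hlog : 0 < Real.log 2 := Real.log_pos one_lt_two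
    rw [← sub_div, abs_div, abs_of_pos hlog]
    gcongr
    exact abs_gaussIntegral_iterate_truncGaussOp_sub_le hN hg hK n

lemma exists_abs_add_truncGaussOp_sub_le {g : ℕ → ℝ → ℝ} (hg : ∀ N, LipschitzOnWith L (g N) I)
    {κ : ℝ} (hκ : Tendsto (fun N => gaussIntegral (g N) / Real.log 2) atTop (nhds κ))
    {ε : ℝ} (hε : 0 < ε) :
    ∃ K, ∀ᶠ N in atTop, ∃ u : ℝ → ℝ, (∀ x ∈ I, |u x| ≤ K) ∧
      ∀ x ∈ I, |g N x + truncGaussOp N u x - u x - κ| ≤ ε := by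
  set K := L + 1 + |κ|
  obtain ⟨n, hn⟩ : ∃ n : ℕ, (7 / 8 : ℝ) ^ n * L < ε / 3 := by
    have h := (tendsto_pow_atTop_nhds_zero_of_lt_one (r := (7 / 8 : ℝ)) (by norm_num)
      (by norm_num)).mul_const (L : ℝ)
    rw [zero_mul] at h
    exact (h.eventually_lt_const (by positivity)).exists
  have hdrift : Tendsto (fun N : ℕ => n * (2 * K / ((N : ℝ) + 1)) / Real.log 2) atTop (nhds 0) := by
    have h := (tendsto_one_div_add_atTop_nhds_zero_nat (𝕜 := ℝ)).const_mul
      (n * (2 * K) / Real.log 2)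
    rw [mul_zero] at h
    exact h.congr fun N => by ring
  have hmean := tendsto_iff_norm_sub_tendsto_zero.1 hκ
  refine ⟨n * K, ?_⟩
  filter_upwards [eventually_ge_atTop 1, hdrift.eventually_lt_const (by positivity : 0 < ε / 3),
    hmean.eventually_lt_const one_pos, hmean.eventually_lt_const (by positivity : 0 < ε / 3)]
    with N hN hdriftN hone hthird
  have hK : ∀ x ∈ I, |g N x| ≤ K := fun x hx => by
    have h := abs_sub_gaussIntegral_div_log_two_le (hg N) hx
    have h' := abs_add_three (g N x - gaussIntegral (g N) / Real.log 2)
      (gaussIntegral (g N) / Real.log 2 - κ) κ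
    rw [sub_add_sub_cancel, sub_add_cancel] at h'
    rw [Real.norm_eq_abs] at hone
    linarith
  refine ⟨neumannSum N n (g N), fun x => abs_neumannSum_le N n hK, fun x hx => ?_⟩
  rw [add_truncGaussOp_neumannSum_sub N n (g N) hx.1]
  have h := abs_sub_le ((truncGaussOp N)^[n] (g N) x) (gaussIntegral (g N) / Real.log 2) κ
  have hiter := abs_iterate_truncGaussOp_sub_le hN (hg N) hK n hx
  rw [Real.norm_eq_abs] at hthird
  linarith

/-- The function `q` in the expansion `(1 + x) * L (1 / (1 + ·)) x = 1 + q x / N + o(1 / N)`, where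
`L` is the transfer operator with partial quotients `1, …, N` and exponent `1 - c / N`. It is the
source of the Poisson equation for the first order correction to the eigenfunction. -/
noncomputable def poissonSource (c : ℝ) (N : ℕ) (x : ℝ) : ℝ :=
  2 * c * truncGaussOp N (fun y => -Real.log y) x - (1 + x)

lemma poissonSource_lipschitzOnWith (c : ℝ) (N : ℕ) :
    LipschitzOnWith (4 * ‖c‖₊ + 1) (poissonSource c N) I := by
  refine LipschitzOnWith.of_dist_le_mul fun x hx y hy => ?_
  have hlog := (truncGaussOp_neg_log_lipschitzOnWith N).dist_le_mul x hx y hy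
  rw [Real.dist_eq, Real.dist_eq] at hlog ⊢
  calc |poissonSource c N x - poissonSource c N y|
      = |2 * c * (truncGaussOp N (fun y => -Real.log y) x
          - truncGaussOp N (fun y => -Real.log y) y) - (x - y)| := by
        rw [poissonSource, poissonSource]
        ring_nf
    _ ≤ 2 * |c| * (2 * |x - y|) + |x - y| := by
        refine (abs_sub _ _).trans ?_
        rw [abs_mul, abs_mul, abs_two]
        gcongr
        exact hlog
    _ = _ := by
        push_cast
        rw [Real.norm_eq_abs]
        ring

lemma gaussIntegral_poissonSource (c : ℝ) (N : ℕ) :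
    gaussIntegral (poissonSource c N)
      = 2 * c * gaussIntegral (truncGaussOp N fun y => -Real.log y) - 1 := by
  have hint : IntervalIntegrable
      (fun x => truncGaussOp N (fun y => -Real.log y) x / (1 + x)) volume 0 1 := by
    refine intervalIntegrable_div_one_add ?_ ?_ <;> rw [Set.uIcc_of_le zero_le_one]
    exact (truncGaussOp_neg_log_lipschitzOnWith N).continuousOn
  have hsplit : gaussIntegral (poissonSource c N) = ∫ x in (0 : ℝ)..1,
      (2 * c * (truncGaussOp N (fun y => -Real.log y) x / (1 + x)) - 1) := by
    refine intervalIntegral.integral_congr fun x hx => ?_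
    rw [Set.uIcc_of_le zero_le_one] at hx
    have hx1 : 1 + x ≠ 0 := by linarith [hx.1]
    simp only [poissonSource]
    field_simp
  rw [hsplit, intervalIntegral.integral_sub (hint.const_mul _) (by simp),
    intervalIntegral.integral_const_mul, gaussIntegral]
  simp

lemma tendsto_gaussIntegral_poissonSource_div_log_two (c : ℝ) :
    Tendsto (fun N => gaussIntegral (poissonSource c N) / Real.log 2) atTop
      (nhds ((c * Real.pi ^ 2 / 6 - 1) / Real.log 2)) := by
  simp only [gaussIntegral_poissonSource]
  have h := ((tendsto_gaussIntegral_truncGaussOp_neg_log.const_mul (2 * c)).sub_const 1).div_const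
    (Real.log 2)
  convert h using 3
  ring

end PoissonEquation

section Expansion

variable {x : ℝ} {N : ℕ} {u : ℝ → ℝ}

/-- The logarithm of the factor by which the weight of the branch `i` changes when the exponent of
the transfer operator goes from `1` to `1 - c / N`. -/
noncomputable def gaussTilt (N : ℕ) (c : ℝ) (i : ℕ) (x : ℝ) : ℝ :=
  2 * c / N * Real.log (i + 1 + x)

/-- The transfer operator with partial quotients `1, …, N` and exponent `1 - c / N`, normalised by
the invariant density `1 / (1 + x)` of the Gauss map. -/
noncomputable def tiltedGaussOp (N : ℕ) (c : ℝ) (v : ℝ → ℝ) (x : ℝ) : ℝ :=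
  ∑ i ∈ Finset.range N, gaussWeight i x * (Real.exp (gaussTilt N c i x) * v (gaussBranch i x))

lemma sum_Icc_one_eq_sum_range {M : Type*} [AddCommMonoid M] (f : ℤ → M) (N : ℕ) :
    ∑ a ∈ Finset.Icc (1 : ℤ) N, f a = ∑ i ∈ Finset.range N, f (i + 1) := by
  refine (Finset.sum_nbij' (fun i : ℕ => (i : ℤ) + 1) (fun a => (a - 1).toNat) ?_ ?_ ?_ ?_ ?_).symm
  · intro i hi
    rw [Finset.mem_range] at hi
    exact Finset.mem_Icc.2 (by omega)
  · intro a ha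
    rw [Finset.mem_Icc] at ha
    exact Finset.mem_range.2 (by omega)
  · intro i _
    simp
  · intro a ha
    rw [Finset.mem_Icc] at ha
    omega
  · exact fun _ _ => rfl

lemma rpow_neg_two_mul_one_sub_eq (N : ℕ) (c : ℝ) (i : ℕ) (hx : 0 ≤ x) :
    ((i : ℝ) + 1 + x) ^ (-(2 * (1 - c / N)))
      = Real.exp (gaussTilt N c i x) / (i + 1 + x) ^ 2 := by
  have hpos : 0 < (i : ℝ) + 1 + x := by positivity
  rw [show -(2 * (1 - c / N)) = 2 * c / N - (2 : ℕ) by push_cast; ring,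
    Real.rpow_sub_natCast hpos.ne', Real.rpow_def_of_pos hpos, gaussTilt, mul_comm (Real.log _)]

lemma one_add_mul_transferOp (N : ℕ) (c : ℝ) (v : ℝ → ℝ) (hx : 0 ≤ x) :
    (1 + x) * transferOp (Finset.Icc 1 (N : ℤ)) (1 - c / N) (fun y => v y / (1 + y)) x
      = tiltedGaussOp N c v x := by
  rw [transferOp, sum_Icc_one_eq_sum_range, Finset.mul_sum]
  refine Finset.sum_congr rfl fun i _ => ?_
  have hadd : 1 + 1 / ((i : ℝ) + 1 + x) = (i + 2 + x) / (i + 1 + x) := by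
    field_simp
    ring
  push_cast
  rw [rpow_neg_two_mul_one_sub_eq N c i hx, hadd, gaussWeight, gaussBranch]
  field_simp

lemma sum_gaussWeight (N : ℕ) (hx : 0 ≤ x) :
    ∑ i ∈ Finset.range N, gaussWeight i x = 1 - gaussTail N x := by
  have h := gaussAverage_const N 1 hx
  simp only [gaussAverage, mul_one] at h
  linarith

lemma abs_sum_gaussWeight_mul_le {d : ℕ → ℝ} {M : ℝ} (hx : 0 ≤ x) (hM : 0 ≤ M)
    (hd : ∀ i < N, |d i| ≤ M) : |∑ i ∈ Finset.range N, gaussWeight i x * d i| ≤ M := by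
  calc |∑ i ∈ Finset.range N, gaussWeight i x * d i|
      ≤ ∑ i ∈ Finset.range N, gaussWeight i x * M := by
        refine (Finset.abs_sum_le_sum_abs _ _).trans (Finset.sum_le_sum fun i hi => ?_)
        rw [abs_mul, abs_of_nonneg (gaussWeight_nonneg i hx)]
        exact mul_le_mul_of_nonneg_left (hd i (Finset.mem_range.1 hi)) (gaussWeight_nonneg i hx)
    _ = (1 - gaussTail N x) * M := by rw [← Finset.sum_mul, sum_gaussWeight N hx]
    _ ≤ M := mul_le_of_le_one_left hM (sub_le_self _ (gaussTail_nonneg N hx))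

lemma gaussTail_le (hN : 1 ≤ N) (hx : x ∈ I) : gaussTail N x ≤ 2 / N := by
  have hN0 : (0 : ℝ) < N := mod_cast hN
  exact div_le_div₀ zero_le_two (by linarith [hx.2]) hN0 (by linarith [hx.1])

lemma abs_one_add_sub_mul_gaussTail_le (hN : 1 ≤ N) (hx : x ∈ I) :
    |1 + x - N * gaussTail N x| ≤ 4 / N := by
  have hN0 : (0 : ℝ) < N := mod_cast hN
  have hx0 := hx.1
  have h : 1 + x - N * gaussTail N x = (1 + x) ^ 2 / (N + 1 + x) := by
    rw [gaussTail]
    field_simp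
    ring
  rw [h, abs_of_nonneg (by positivity)]
  exact div_le_div₀ (by norm_num) (by nlinarith [hx.2]) hN0 (by linarith)

lemma abs_log_add_one_add_le {i : ℕ} (hi : i ≤ N) (hx : x ∈ I) :
    |Real.log (i + 1 + x)| ≤ Real.log (N + 2) := by
  have : (0 : ℝ) ≤ i := i.cast_nonneg
  have hiN : (i : ℝ) ≤ N := mod_cast hi
  rw [abs_of_nonneg (Real.log_nonneg (by linarith [hx.1]))]
  exact Real.log_le_log (by linarith [hx.1]) (by linarith [hx.2])

lemma abs_gaussTilt_le (c : ℝ) {i : ℕ} (hi : i ≤ N) (hx : x ∈ I) :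
    |gaussTilt N c i x| ≤ 2 * |c| * (Real.log (N + 2) / N) := by
  rw [gaussTilt, abs_mul, abs_div, abs_mul, abs_two, Nat.abs_cast, div_mul_eq_mul_div,
    mul_div_assoc]
  gcongr
  exact abs_log_add_one_add_le hi hx

lemma mul_tiltedGaussOp_sub_eq (hN : 1 ≤ N) (c : ℝ) (u : ℝ → ℝ) (hx : 0 ≤ x) :
    N * (tiltedGaussOp N c (fun y => 1 + u y / N) x - (1 + u x / N))
        - (poissonSource c N x + truncGaussOp N u x - u x)
      = N * ∑ i ∈ Finset.range N,
            gaussWeight i x * (Real.exp (gaussTilt N c i x) - 1 - gaussTilt N c i x)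
        + (1 + x - N * gaussTail N x)
        + ∑ i ∈ Finset.range N,
            gaussWeight i x * ((Real.exp (gaussTilt N c i x) - 1) * u (gaussBranch i x))
        - gaussTail N x * (2 * c * Real.log (N + 1 + x) + u (gaussBranch N x)) := by
  have hN0 : (N : ℝ) ≠ 0 := by exact_mod_cast (Nat.one_le_iff_ne_zero.1 hN)
  have hexpand : N * tiltedGaussOp N c (fun y => 1 + u y / N) x
      = N * ∑ i ∈ Finset.range N,
            gaussWeight i x * (Real.exp (gaussTilt N c i x) - 1 - gaussTilt N c i x)
        + N * ∑ i ∈ Finset.range N, gaussWeight i x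
        + 2 * c * ∑ i ∈ Finset.range N, gaussWeight i x * Real.log (i + 1 + x)
        + ∑ i ∈ Finset.range N,
            gaussWeight i x * ((Real.exp (gaussTilt N c i x) - 1) * u (gaussBranch i x))
        + ∑ i ∈ Finset.range N, gaussWeight i x * u (gaussBranch i x) := by
    simp only [tiltedGaussOp, Finset.mul_sum, ← Finset.sum_add_distrib]
    refine Finset.sum_congr rfl fun i _ => ?_
    have htilt : N * gaussTilt N c i x = 2 * c * Real.log (i + 1 + x) := by
      rw [gaussTilt]
      field_simp
    field_simp
    linear_combination gaussWeight i x * htilt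
  rw [mul_sub, hexpand, sum_gaussWeight N hx]
  simp only [poissonSource, truncGaussOp, gaussAverage, log_gaussBranch, neg_neg]
  field_simp
  ring

lemma abs_sum_gaussWeight_mul_exp_sub_one_sub_le {t : ℕ → ℝ} {δ : ℝ} (hx : 0 ≤ x)
    (ht : ∀ i < N, |t i| ≤ δ) (hδ : δ ≤ 1) :
    |∑ i ∈ Finset.range N, gaussWeight i x * (Real.exp (t i) - 1 - t i)| ≤ δ ^ 2 :=
  abs_sum_gaussWeight_mul_le hx (sq_nonneg δ) fun i hi =>
    (Real.abs_exp_sub_one_sub_id_le ((ht i hi).trans hδ)).trans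
      (sq_le_sq' (abs_le.1 (ht i hi)).1 (abs_le.1 (ht i hi)).2)

lemma abs_sum_gaussWeight_mul_exp_sub_one_mul_le {t d : ℕ → ℝ} {δ K : ℝ} (hx : 0 ≤ x) (hδ0 : 0 ≤ δ)
    (ht : ∀ i < N, |t i| ≤ δ) (hδ : δ ≤ 1) (hd : ∀ i, |d i| ≤ K) :
    |∑ i ∈ Finset.range N, gaussWeight i x * ((Real.exp (t i) - 1) * d i)| ≤ 2 * δ * K := by
  have hK : 0 ≤ K := (abs_nonneg _).trans (hd 0)
  refine abs_sum_gaussWeight_mul_le hx (by positivity) fun i hi => ?_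
  rw [abs_mul]
  refine mul_le_mul ((Real.abs_exp_sub_one_le ((ht i hi).trans hδ)).trans ?_) (hd i)
    (abs_nonneg _) (by positivity)
  linarith [ht i hi]

lemma abs_gaussTail_mul_le (hN : 1 ≤ N) {K : ℝ} (hu : ∀ x ∈ I, |u x| ≤ K) (c : ℝ) (hx : x ∈ I) :
    |gaussTail N x * (2 * c * Real.log (N + 1 + x) + u (gaussBranch N x))|
      ≤ 2 / N * (2 * |c| * Real.log (N + 2) + K) := by
  rw [abs_mul, abs_of_nonneg (gaussTail_nonneg N hx.1)]
  refine mul_le_mul (gaussTail_le hN hx) ((abs_add_le _ _).trans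
    (add_le_add ?_ (hu _ (gaussBranch_mem_unitInterval N hx.1)))) (abs_nonneg _) (by positivity)
  rw [abs_mul, abs_mul, abs_two]
  gcongr
  exact abs_log_add_one_add_le le_rfl hx

lemma abs_mul_tiltedGaussOp_sub_le (hN : 1 ≤ N) {K : ℝ} (hu : ∀ x ∈ I, |u x| ≤ K) (c : ℝ)
    (hδ : 2 * |c| * (Real.log (N + 2) / N) ≤ 1) (hx : x ∈ I) :
    |N * (tiltedGaussOp N c (fun y => 1 + u y / N) x - (1 + u x / N))
        - (poissonSource c N x + truncGaussOp N u x - u x)|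
      ≤ N * (2 * |c| * (Real.log (N + 2) / N)) ^ 2 + 4 / N
        + 2 * (2 * |c| * (Real.log (N + 2) / N)) * K
        + 2 / N * (2 * |c| * Real.log (N + 2) + K) := by
  have htilt : ∀ i < N, |gaussTilt N c i x| ≤ 2 * |c| * (Real.log (N + 2) / N) :=
    fun i hi => abs_gaussTilt_le c hi.le hx
  have hδ0 : 0 ≤ 2 * |c| * (Real.log (N + 2) / N) := (abs_nonneg _).trans (htilt 0 hN)
  rw [mul_tiltedGaussOp_sub_eq hN c u hx.1]
  refine (abs_sub _ _).trans (add_le_add ((abs_add_three _ _ _).trans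
    (add_le_add_three ?_ (abs_one_add_sub_mul_gaussTail_le hN hx)
      (abs_sum_gaussWeight_mul_exp_sub_one_mul_le hx.1 hδ0 htilt hδ
        fun i => hu _ (gaussBranch_mem_unitInterval i hx.1)))) (abs_gaussTail_mul_le hN hu c hx))
  rw [abs_mul, Nat.abs_cast]
  gcongr
  exact abs_sum_gaussWeight_mul_exp_sub_one_sub_le hx.1 htilt hδ

lemma tendsto_expansion_error (c K : ℝ) :
    Tendsto (fun N : ℕ => N * (2 * |c| * (Real.log (N + 2) / N)) ^ 2 + 4 / N
      + 2 * (2 * |c| * (Real.log (N + 2) / N)) * K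
      + 2 / N * (2 * |c| * Real.log (N + 2) + K)) atTop (nhds 0) := by
  have hlog := tendsto_log_add_two_pow_div_atTop 1
  have h := ((tendsto_log_add_two_pow_div_atTop 2).const_mul (4 * |c| ^ 2)).add
    ((tendsto_const_div_atTop_nhds_zero_nat (4 + 2 * K)).add (hlog.const_mul (4 * |c| * (K + 1))))
  simp only [mul_zero, add_zero] at h
  refine h.congr' ?_
  filter_upwards [eventually_ge_atTop 1] with N hN
  have hN0 : (N : ℝ) ≠ 0 := by exact_mod_cast (Nat.one_le_iff_ne_zero.1 hN)
  field_simp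
  ring

lemma exists_abs_mul_tiltedGaussOp_sub_le (c : ℝ) {ε : ℝ} (hε : 0 < ε) :
    ∀ᶠ N : ℕ in atTop, ∃ v : ℝ → ℝ, (∀ x ∈ I, |v x - 1| ≤ 1 / 2) ∧
      ∀ x ∈ I, |N * (tiltedGaussOp N c v x - v x) - (c * Real.pi ^ 2 / 6 - 1) / Real.log 2|
        ≤ ε := by
  obtain ⟨K, hK⟩ := exists_abs_add_truncGaussOp_sub_le (poissonSource_lipschitzOnWith c)
    (tendsto_gaussIntegral_poissonSource_div_log_two c) (half_pos hε)
  have hδ : Tendsto (fun N : ℕ => 2 * |c| * (Real.log (N + 2) / N)) atTop (nhds 0) := by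
    simpa using (tendsto_log_add_two_pow_div_atTop 1).const_mul (2 * |c|)
  filter_upwards [hK, eventually_ge_atTop 1, hδ.eventually_le_const one_pos,
    (tendsto_expansion_error c K).eventually_le_const (half_pos hε),
    (tendsto_const_div_atTop_nhds_zero_nat K).eventually_le_const one_half_pos]
    with N ⟨u, hu, hpoisson⟩ hN hδN herror hKN
  refine ⟨fun y => 1 + u y / N, fun x hx => ?_, fun x hx => ?_⟩
  · rw [add_sub_cancel_left, abs_div, Nat.abs_cast]
    exact (div_le_div_of_nonneg_right (hu x hx) N.cast_nonneg).trans hKN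
  · refine (abs_sub_le _ (poissonSource c N x + truncGaussOp N u x - u x) _).trans ?_
    linarith [abs_mul_tiltedGaussOp_sub_le hN hu c hδN hx, hpoisson x hx]

lemma exists_abs_mul_transferOp_sub_le (c : ℝ) {ε : ℝ} (hε : 0 < ε) :
    ∀ᶠ N : ℕ in atTop, ∃ f : ℝ → ℝ, (∀ x ∈ I, f x ∈ Set.Icc (1 / 4) 2) ∧
      ∀ x ∈ I, |N * ((1 + x) * (transferOp (Finset.Icc 1 (N : ℤ)) (1 - c / N) f x - f x))
        - (c * Real.pi ^ 2 / 6 - 1) / Real.log 2| ≤ ε := by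
  filter_upwards [exists_abs_mul_tiltedGaussOp_sub_le c hε] with N ⟨v, hv, hvN⟩
  refine ⟨fun y => v y / (1 + y), fun x hx => ?_, fun x hx => ?_⟩ <;> have hx0 := hx.1
  · have h := abs_le.1 (hv x hx)
    exact ⟨by rw [le_div_iff₀ (by positivity)]; linarith [hx.2],
      by rw [div_le_iff₀ (by positivity)]; linarith⟩
  · rw [mul_sub (1 + x), one_add_mul_transferOp N c v hx0, mul_div_cancel₀ _ (by positivity)]
    exact hvN x hx

end Expansion

section Asymptotics

variable {c : ℝ}

lemma eventually_div_natCast_lt_one (c : ℝ) : ∀ᶠ N : ℕ in atTop, c / N < 1 :=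
  (tendsto_const_div_atTop_nhds_zero_nat c).eventually_lt_const one_pos

lemma eventually_dimH_CA_le (hc : c < 6 / Real.pi ^ 2) :
    ∀ᶠ N : ℕ in atTop, (dimH (CA (Set.Icc 1 (N : ℤ)))).toReal ≤ 1 - c / N := by
  have hκ : (c * Real.pi ^ 2 / 6 - 1) / Real.log 2 < 0 := by
    rw [lt_div_iff₀ (by positivity)] at hc
    exact div_neg_of_neg_of_pos (by linarith) (Real.log_pos one_lt_two)
  filter_upwards [exists_abs_mul_transferOp_sub_le c (neg_pos.2 hκ),
    eventually_div_natCast_lt_one c, eventually_ge_atTop 1] with N ⟨f, hf, hfN⟩ hcN hN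
  have hN0 : (0 : ℝ) < N := mod_cast hN
  refine ENNReal.toReal_le_of_le_ofReal (by linarith) ?_
  rw [← Finset.coe_Icc]
  refine dimH_CA_le_of_transferOp_le (fun a ha => (Finset.mem_Icc.1 ha).1) (by linarith)
    (by norm_num) (fun x hx => (hf x hx).1) fun x hx => ?_
  have hle := (abs_le.1 (hfN x hx)).2
  have hx1 : 0 < 1 + x := by linarith [hx.1]
  by_contra! hlt
  linarith [mul_pos hN0 (mul_pos hx1 (sub_pos.2 hlt))]

lemma eventually_le_dimH_CA (hc : 6 / Real.pi ^ 2 < c) :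
    ∀ᶠ N : ℕ in atTop, 1 - c / N ≤ (dimH (CA (Set.Icc 1 (N : ℤ)))).toReal := by
  have hκ : 0 < (c * Real.pi ^ 2 / 6 - 1) / Real.log 2 := by
    rw [div_lt_iff₀ (by positivity)] at hc
    exact div_pos (by linarith) (Real.log_pos one_lt_two)
  filter_upwards [exists_abs_mul_transferOp_sub_le c hκ, eventually_div_natCast_lt_one c,
    eventually_ge_atTop 1] with N ⟨f, hf, hfN⟩ hcN hN
  have hN0 : (0 : ℝ) < N := mod_cast hN
  have hfin : dimH (CA (Set.Icc 1 (N : ℤ))) ≠ ⊤ :=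
    ((dimH_mono (Set.subset_univ _)).trans_lt (by rw [Real.dimH_univ]; exact ENNReal.one_lt_top)).ne
  rw [← ENNReal.ofReal_le_iff_le_toReal hfin, ← Finset.coe_Icc]
  refine le_dimH_CA_of_le_transferOp (m := 1 / 4) (fun a ha => (Finset.mem_Icc.1 ha).1)
    (Finset.nonempty_Icc.2 (mod_cast hN)) (by linarith) (by norm_num) (fun x hx => (hf x hx).1)
    (fun x hx => (hf x hx).2) fun x hx => ?_
  have hle := (abs_le.1 (hfN x hx)).1
  have hx1 : 0 < 1 + x := by linarith [hx.1]
  by_contra! hlt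
  linarith [mul_neg_of_pos_of_neg hN0 (mul_neg_of_pos_of_neg hx1 (sub_neg.2 hlt))]

end Asymptotics

theorem stmt6 :
    Tendsto
      (fun A : ℕ =>
        (A : ℝ) * (1 - (dimH (CA {a : ℤ | 1 ≤ a ∧ a ≤ (A : ℤ)})).toReal))
      atTop (nhds (6 / Real.pi ^ 2)) := by
  refine tendsto_order.2 ⟨fun b hb => ?_, fun b hb => ?_⟩
  · obtain ⟨c, hbc, hc⟩ := exists_between hb
    filter_upwards [eventually_dimH_CA_le hc, eventually_gt_atTop 0] with A hA hA0
    refine hbc.trans_le ?_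
    rw [← div_le_iff₀' (by exact_mod_cast hA0)]
    exact le_sub_comm.1 hA
  · obtain ⟨c, hc, hcb⟩ := exists_between hb
    filter_upwards [eventually_le_dimH_CA hc, eventually_gt_atTop 0] with A hA hA0
    refine lt_of_le_of_lt ?_ hcb
    rw [← le_div_iff₀' (by exact_mod_cast hA0)]
    exact sub_le_comm.1 hA
end
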